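/- arXiv:1807.07890 — 3 statements merged into one kernel-verified Lean document; each statement's English description precedes it below -/
import Mathlib

section
/- Let β > 1 be real. There exists a function G : ℂ → ℂ such that: (i) G is analytic (complex differentiable) at every point s with Re(s) > 1 other than the points 2 + 2πik/log β, k ∈ ℤ; (ii) G(s) = ∑_{n=1}^∞ S_β(n) n^{-s} for every s with Re(s) > 2; (iii) (s-2)² G(s) → (β-1)/(2 log β) as s → 2 (s ≠ 2), and ((s-2)² G(s) - (β-1)/(2 log β))/(s-2) → c_β(0) = ((β-1)/(2 log β))(log(2π) - 1) - (β+1)/4 as s → 2; (iv) for every nonzero k ∈ ℤ, with p = 2 + 2πik/log β, (s - p) G(s) → c_β(k) = -((β-1)/(2πik)) (1 + 2πik/log β)^{-1} ζ(2πik/log β) as s → p (s ≠ p). -/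
open Filter Topology

noncomputable section

/-- The Fourier coefficients `c_β(k)` from Delange's theorem. -/
def delangeCoeff (β : ℝ) (k : ℤ) : ℂ :=
  if k = 0 then
    ((((β : ℂ) - 1) / (2 * Real.log β)) * (Real.log (2 * Real.pi) - 1) - ((β : ℂ) + 1) / 4)
  else
    -(((β : ℂ) - 1) / (2 * Real.pi * Complex.I * k)) *
      (1 + 2 * Real.pi * Complex.I * k / Real.log β)⁻¹ *
      riemannZeta (2 * Real.pi * Complex.I * k / Real.log β)

/-- The periodic function `h_β` from Delange's theorem. -/
def delangeH (β : ℝ) (x : ℝ) : ℂ :=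
  ∑' k : ℤ, delangeCoeff β k * Complex.exp (2 * Real.pi * Complex.I * k * x)

/-- The interpolated cumulative sum-of-digits function `S_β(n)`. -/
def cumDigitSumInterp (β : ℝ) (n : ℕ) : ℂ :=
  (((β : ℂ) - 1) / (2 * Real.log β)) * n * Real.log n +
    delangeH β (Real.log n / Real.log β) * n




def zT (n : ℕ) (s : ℂ) : ℂ :=
  (s - 1) / 2 * (((n : ℂ) + 1) ^ (-s) + ((n : ℂ) + 2) ^ (-s)) + ((n : ℂ) + 2) ^ (1 - s)
    - ((n : ℂ) + 1) ^ (1 - s)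

lemma hasDerivAt_cpow_shift (m u : ℝ) (h : 0 < m + u) (w : ℂ) :
    HasDerivAt (fun u : ℝ => ((m + u : ℝ) : ℂ) ^ w) (w * ((m + u : ℝ) : ℂ) ^ (w - 1)) u := by
  have h1 : HasDerivAt (fun z : ℂ => z ^ w) (w * ((m + u : ℝ) : ℂ) ^ (w - 1)) ((m + u : ℝ) : ℂ) := by
    have := (hasDerivAt_id ((m + u : ℝ) : ℂ)).cpow_const (c := w) (Or.inl (by simpa using h))
    simpa using this
  have h2 : HasDerivAt (fun u : ℝ => ((m + u : ℝ) : ℂ)) 1 u := by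
    have := ((hasDerivAt_id u).const_add m).ofReal_comp
    simpa using this
  have h3 := h1.comp u h2
  rw [mul_one] at h3
  exact h3

lemma norm_cpow_shift_le (m u : ℝ) (hm : 0 < m) (hu : 0 ≤ u) (w : ℂ) (hw : w.re ≤ 0) :
    ‖((m + u : ℝ) : ℂ) ^ w‖ ≤ m ^ w.re := by
  rw [Complex.norm_cpow_eq_rpow_re_of_pos (by linarith)]
  exact Real.rpow_le_rpow_of_nonpos hm (by linarith) hw

lemma zT_bound1 (n : ℕ) (s : ℂ) (hs : -2 ≤ s.re) :
    ‖zT n s‖ ≤ ‖s - 1‖ * ‖s‖ * ‖s + 1‖ * ((n : ℝ) + 1) ^ (-s.re - 2) := by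
  set m : ℝ := (n : ℝ) + 1 with hm
  have hm0 : 0 < m := by positivity
  set B : ℝ := ‖s - 1‖ * ‖s‖ * ‖s + 1‖ * m ^ (-s.re - 2) with hB
  have hB0 : 0 ≤ B := by positivity
  let f : ℝ → ℂ := fun u => ((m + u : ℝ) : ℂ) ^ (-s)
  let f1 : ℝ → ℂ := fun u => (-s) * ((m + u : ℝ) : ℂ) ^ (-s - 1)
  let f2 : ℝ → ℂ := fun u => (-s) * ((-s - 1) * ((m + u : ℝ) : ℂ) ^ (-s - 1 - 1))
  have hf : ∀ u, 0 ≤ u → HasDerivAt f (f1 u) u := fun u hu =>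
    hasDerivAt_cpow_shift m u (by linarith) _
  have hf1 : ∀ u, 0 ≤ u → HasDerivAt f1 (f2 u) u := fun u hu =>
    (hasDerivAt_cpow_shift m u (by linarith) _).const_mul _
  let g : ℝ → ℂ := fun u => (s - 1) / 2 * (u * (f 0 + f u)) + ((m + u : ℝ) : ℂ) ^ (1 - s)
  let g1 : ℝ → ℂ := fun u => (s - 1) / 2 * (f 0 - f u + u * f1 u)
  let g2 : ℝ → ℂ := fun u => (s - 1) / 2 * (u * f2 u)
  have hid : ∀ u : ℝ, HasDerivAt (fun u : ℝ => (u : ℂ)) 1 u := fun u => by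
    simpa using (hasDerivAt_id u).ofReal_comp
  have hg : ∀ u, 0 ≤ u → HasDerivAt g (g1 u) u := fun u hu => by
    have h1 := (((hid u).mul ((hf u hu).const_add (f 0))).const_mul ((s - 1) / 2)).add
      (hasDerivAt_cpow_shift m u (by linarith) (1 - s))
    refine h1.congr_deriv ?_
    have : (1 - s - 1 : ℂ) = -s := by ring
    rw [this]
    simp only [g1, f]
    ring
  have hg1 : ∀ u, 0 ≤ u → HasDerivAt g1 (g2 u) u := fun u hu => by
    have h1 := (((hf u hu).const_sub (f 0)).add ((hid u).mul (hf1 u hu))).const_mul ((s - 1) / 2)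
    refine h1.congr_deriv ?_
    simp only [g2]
    ring
  have hg2 : ∀ u ∈ Set.Icc (0:ℝ) 1, ‖g2 u‖ ≤ B := fun u hu => by
    have h1 := norm_cpow_shift_le m u hm0 hu.1 (-s - 1 - 1) (by simp; linarith)
    have e : (-s - 1 - 1).re = -s.re - 2 := by simp; ring
    rw [e] at h1
    simp only [g2, f2, norm_mul, norm_div, norm_neg]
    have e2 : ‖-s - 1‖ = ‖s + 1‖ := by rw [← norm_neg]; congr 1; ring
    have e3 : ‖(u : ℂ)‖ = u := by simp [abs_of_nonneg hu.1]
    rw [e2, e3, hB]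
    have e4 : ‖(2:ℂ)‖ = 2 := by simp
    rw [e4]
    calc ‖s - 1‖ / 2 * (u * (‖s‖ * (‖s + 1‖ * ‖((m + u : ℝ) : ℂ) ^ (-s - 1 - 1)‖)))
        ≤ ‖s - 1‖ * (1 * (‖s‖ * (‖s + 1‖ * m ^ (-s.re - 2)))) := by
          gcongr
          · have := hu.1
            positivity
          · linarith [norm_nonneg (s - 1)]
          · exact hu.2
      _ = _ := by ring
  have hg1b : ∀ u ∈ Set.Icc (0:ℝ) 1, ‖g1 u‖ ≤ B := fun u hu => by
    have := norm_image_sub_le_of_norm_deriv_le_segment' (f := g1) (f' := g2) (a := 0) (b := u) (C := B)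
      (fun x hx => (hg1 x hx.1).hasDerivWithinAt) (fun x hx => hg2 x ⟨hx.1, hx.2.le.trans hu.2⟩) u
      ⟨hu.1, le_rfl⟩
    have h0 : g1 0 = 0 := by simp [g1]
    rw [h0, sub_zero] at this
    refine this.trans ?_
    nlinarith [hu.1, hu.2]
  have := norm_image_sub_le_of_norm_deriv_le_segment' (f := g) (f' := g1) (a := 0) (b := 1) (C := B)
      (fun x hx => (hg x hx.1).hasDerivWithinAt) (fun x hx => hg1b x ⟨hx.1, hx.2.le⟩) 1
      ⟨zero_le_one, le_rfl⟩
  have e : g 1 - g 0 = zT n s := by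
    have : (n : ℂ) + 1 + 1 = n + 2 := by ring
    simp [g, f, zT, hm, this]
  rw [e] at this
  linarith

lemma zT_bound2 (n : ℕ) (s : ℂ) (hs : 0 ≤ s.re) :
    ‖zT n s‖ ≤ 2 * ‖s - 1‖ * ((n : ℝ) + 1) ^ (-s.re) := by
  set m : ℝ := (n : ℝ) + 1 with hm
  have hm0 : 0 < m := by positivity
  have h0 := norm_cpow_shift_le m 0 hm0 le_rfl (-s) (by simpa using hs)
  have h1 := norm_cpow_shift_le m 1 hm0 zero_le_one (-s) (by simpa using hs)
  have := norm_image_sub_le_of_norm_deriv_le_segment' (f := fun u : ℝ => ((m + u : ℝ) : ℂ) ^ (1 - s))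
      (f' := fun u => (1 - s) * ((m + u : ℝ) : ℂ) ^ (1 - s - 1)) (a := 0) (b := 1)
      (C := ‖s - 1‖ * m ^ (-s.re))
      (fun x hx => (hasDerivAt_cpow_shift m x (by linarith [hx.1]) _).hasDerivWithinAt)
      (fun x hx => by
        have e : (1 - s - 1 : ℂ) = -s := by ring
        rw [norm_mul, e, norm_sub_rev]
        gcongr
        simpa using norm_cpow_shift_le m x hm0 hx.1 (-s) (by simpa using hs)) 1
      ⟨zero_le_one, le_rfl⟩
  have e : zT n s = (s - 1) / 2 * (((m + 0 : ℝ) : ℂ) ^ (-s) + ((m + 1 : ℝ) : ℂ) ^ (-s)) +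
    (((m + 1 : ℝ) : ℂ) ^ (1 - s) - ((m + 0 : ℝ) : ℂ) ^ (1 - s)) := by
    have : (n : ℂ) + 1 + 1 = n + 2 := by ring
    simp [zT, hm, this]
    ring
  rw [e]
  have e4 : ‖(s - 1) / 2‖ = ‖s - 1‖ / 2 := by simp
  simp only [Complex.neg_re] at h0 h1
  calc _ ≤ ‖s - 1‖ / 2 * (m ^ (-s.re) + m ^ (-s.re)) + ‖s - 1‖ * m ^ (-s.re) := by
        refine (norm_add_le _ _).trans (add_le_add ?_ (by linarith))
        rw [norm_mul, e4]
        gcongr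
        exact (norm_add_le _ _).trans (add_le_add h0 h1)
    _ = _ := by ring

lemma zT_differentiable (n : ℕ) : Differentiable ℂ (zT n) := by
  have h1 : (n : ℂ) + 1 ≠ 0 := by exact_mod_cast Nat.succ_ne_zero n
  have h2 : (n : ℂ) + 2 ≠ 0 := by exact_mod_cast Nat.succ_ne_zero (n+1)
  intro s
  unfold zT
  have a1 : DifferentiableAt ℂ (fun s : ℂ => ((n : ℂ) + 1) ^ (-s)) s :=
    (differentiableAt_id.neg).const_cpow (Or.inl h1)
  have a2 : DifferentiableAt ℂ (fun s : ℂ => ((n : ℂ) + 2) ^ (-s)) s :=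
    (differentiableAt_id.neg).const_cpow (Or.inl h2)
  have a3 : DifferentiableAt ℂ (fun s : ℂ => ((n : ℂ) + 2) ^ (1-s)) s :=
    (differentiableAt_id.const_sub 1).const_cpow (Or.inl h2)
  have a4 : DifferentiableAt ℂ (fun s : ℂ => ((n : ℂ) + 1) ^ (1-s)) s :=
    (differentiableAt_id.const_sub 1).const_cpow (Or.inl h1)
  fun_prop

lemma summable_shift_rpow {a : ℝ} (ha : a < -1) : Summable (fun n : ℕ => ((n : ℝ) + 1) ^ a) := by
  have := (summable_nat_add_iff 1).2 (Real.summable_nat_rpow.2 ha)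
  simpa using this

lemma zT_tsum_differentiableOn :
    DifferentiableOn ℂ (fun s => ∑' n, zT n s) {s : ℂ | -1/2 < s.re} := by
  intro s0 hs0
  refine DifferentiableAt.differentiableWithinAt ?_
  set R : ℝ := ‖s0‖ + 1
  have hR : 0 < R := by positivity
  have hopen : IsOpen ({s : ℂ | -1/2 < s.re} ∩ Metric.ball 0 R) :=
    (isOpen_lt continuous_const Complex.continuous_re).inter Metric.isOpen_ball
  have := Complex.differentiableOn_tsum_of_summable_norm (F := zT)
    (U := {s : ℂ | -1/2 < s.re} ∩ Metric.ball 0 R)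
    (u := fun n => (R + 1) * R * (R + 1) * ((n : ℝ) + 1) ^ (-3/2 : ℝ))
    ((summable_shift_rpow (by norm_num)).mul_left _)
    (fun n => (zT_differentiable n).differentiableOn) hopen
    (fun n w hw => by
      have hw1 : -1/2 < w.re := hw.1
      have hw2 : ‖w‖ < R := by simpa using hw.2
      refine (zT_bound1 n w (by linarith)).trans ?_
      have a1 : ‖w - 1‖ ≤ R + 1 := (norm_sub_le _ _).trans (by simpa using hw2.le)
      have a2 : ‖w + 1‖ ≤ R + 1 := (norm_add_le _ _).trans (by simpa using hw2.le)
      gcongr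
      · linarith [n.cast_nonneg (α := ℝ)]
      · linarith)
  exact (this.differentiableAt (hopen.mem_nhds ⟨hs0, by simp [R]⟩))

lemma HasSum.congr_fun' {ι : Type*} {f g : ι → ℂ} {a : ℂ} (hf : HasSum f a) (h : ∀ i, f i = g i) :
    HasSum g a := by
  rwa [← funext h]

lemma zeta1_eq_of_one_lt (s : ℂ) (hs : 1 < s.re) :
    riemannZeta₁ s = ∑' n, zT n s + (s - 1) / 2 + 1 := by
  have hs1 : s ≠ 1 := by rintro rfl; simp at hs
  have hz : HasSum (fun n : ℕ => ((n : ℂ) + 1) ^ (-s)) (riemannZeta s) := by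
    have h1 := zeta_eq_tsum_one_div_nat_add_one_cpow hs
    have h2 : Summable (fun n : ℕ => ((n : ℂ) + 1) ^ (-s)) := by
      have := (summable_nat_add_iff 1).2 (Complex.summable_one_div_nat_cpow.2 hs)
      simpa [Complex.cpow_neg] using this
    rw [h1]
    convert h2.hasSum using 3
    simp [Complex.cpow_neg]
  have hz2 : HasSum (fun n : ℕ => ((n : ℂ) + 2) ^ (-s)) (riemannZeta s - 1) := by
    have := (hasSum_nat_add_iff' 1).2 hz
    simp only [Finset.range_one, Finset.sum_singleton, Nat.cast_zero, zero_add, Complex.one_cpow] at this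
    refine this.congr_fun' fun n => ?_
    push_cast
    rw [show (n : ℂ) + 1 + 1 = n + 2 by ring]
  have hsum : Summable (fun n => zT n s) := by
    refine Summable.of_norm_bounded ((summable_shift_rpow (a := -s.re) (by linarith)).mul_left _)
      (fun n => zT_bound2 n s (by linarith))
  have hA := ((hz.add hz2).mul_left ((s - 1) / 2))
  have hT : HasSum (fun n : ℕ => ((n : ℂ) + 2) ^ (1 - s) - ((n : ℂ) + 1) ^ (1 - s))
      (∑' n, zT n s - (s - 1) / 2 * (riemannZeta s + (riemannZeta s - 1))) := by
    refine (hsum.hasSum.sub hA).congr_fun' fun n => ?_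
    simp only [zT]; ring
  have hlim : Tendsto (fun n : ℕ => ((n : ℂ) + 1) ^ (1 - s)) atTop (𝓝 0) := by
    rw [tendsto_zero_iff_norm_tendsto_zero]
    have h1 : Tendsto (fun n : ℕ => ((n : ℝ) + 1) ^ (-(s.re - 1))) atTop (𝓝 0) :=
      (tendsto_rpow_neg_atTop (by linarith)).comp
        (tendsto_atTop_add_const_right _ 1 tendsto_natCast_atTop_atTop)
    refine h1.congr fun n => ?_
    have : ((n : ℂ) + 1) = (((n : ℝ) + 1 : ℝ) : ℂ) := by push_cast; rfl
    rw [this, Complex.norm_cpow_eq_rpow_re_of_pos (by positivity)]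
    simp
  have h2 : Tendsto (fun N : ℕ => ∑ n ∈ Finset.range N,
      (((n : ℂ) + 2) ^ (1 - s) - ((n : ℂ) + 1) ^ (1 - s))) atTop (𝓝 (0 - 1)) := by
    refine (hlim.sub_const 1).congr fun N => ?_
    have := Finset.sum_range_sub (fun n : ℕ => ((n : ℂ) + 1) ^ (1 - s)) N
    simp only [Nat.cast_zero, zero_add, Complex.one_cpow] at this
    rw [← this]
    refine Finset.sum_congr rfl fun n _ => ?_
    push_cast
    rw [show (n : ℂ) + 1 + 1 = n + 2 by ring]
  have h3 := tendsto_nhds_unique hT.tendsto_sum_nat h2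
  have h4 := riemannZeta_eq_inv_sub_mul hs1
  have hs2 : s - 1 ≠ 0 := sub_ne_zero.2 hs1
  have h5 : riemannZeta₁ s = (s - 1) * riemannZeta s := by
    rw [h4]; field_simp
  rw [h5]
  linear_combination (-1) * h3

lemma zeta1_eq (s : ℂ) (hs : -1/2 < s.re) :
    riemannZeta₁ s = ∑' n, zT n s + (s - 1) / 2 + 1 := by
  have hU : IsOpen {s : ℂ | -1/2 < s.re} := isOpen_lt continuous_const Complex.continuous_re
  have hf : AnalyticOnNhd ℂ riemannZeta₁ {s : ℂ | -1/2 < s.re} :=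
    differentiable_riemannZeta₁.differentiableOn.analyticOnNhd hU
  have hg : AnalyticOnNhd ℂ (fun s => ∑' n, zT n s + (s - 1) / 2 + 1) {s : ℂ | -1/2 < s.re} := by
    refine DifferentiableOn.analyticOnNhd ?_ hU
    refine (zT_tsum_differentiableOn.add ?_).add_const 1
    fun_prop
  refine hf.eqOn_of_preconnected_of_eventuallyEq hg (convex_halfSpace_re_gt _).isPreconnected
    (z₀ := 2) (by simp; norm_num) ?_ hs
  have : {s : ℂ | 1 < s.re} ∈ 𝓝 (2 : ℂ) :=
    (isOpen_lt continuous_const Complex.continuous_re).mem_nhds (by simp)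
  filter_upwards [this] with z hz
  exact zeta1_eq_of_one_lt z hz



lemma zeta1_eq_mul (s : ℂ) (hs : s ≠ 1) : riemannZeta₁ s = (s - 1) * riemannZeta s := by
  rw [riemannZeta_eq_inv_sub_mul hs]
  have := sub_ne_zero.2 hs
  field_simp

lemma zeta1_growth : ∃ C : ℝ, 0 < C ∧ ∀ s : ℂ, 0 ≤ s.re → ‖riemannZeta₁ s‖ ≤ C * (1 + ‖s‖) ^ 3 := by
  have hsm := summable_shift_rpow (a := -2) (by norm_num)
  have hK : 0 ≤ ∑' n : ℕ, ((n : ℝ) + 1) ^ (-2 : ℝ) := tsum_nonneg fun n => by positivity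
  refine ⟨∑' n : ℕ, ((n : ℝ) + 1) ^ (-2 : ℝ) + 2, by positivity, fun s hs => ?_⟩
  have a1 : ‖s - 1‖ ≤ 1 + ‖s‖ := (norm_sub_le _ _).trans (by simp [add_comm])
  have a2 : ‖s + 1‖ ≤ 1 + ‖s‖ := (norm_add_le _ _).trans (by simp [add_comm])
  have hb : ∀ n, ‖zT n s‖ ≤ (1 + ‖s‖) ^ 3 * ((n : ℝ) + 1) ^ (-2 : ℝ) := fun n => by
    refine (zT_bound1 n s (by linarith)).trans ?_
    have : (1 + ‖s‖) ^ 3 = (1 + ‖s‖) * (1 + ‖s‖) * (1 + ‖s‖) := by ring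
    rw [this]
    gcongr
    · linarith
    · linarith [n.cast_nonneg (α := ℝ)]
    · linarith
  have h1 := tsum_of_norm_bounded (hsm.mul_left ((1 + ‖s‖) ^ 3)).hasSum hb
  rw [tsum_mul_left] at h1
  rw [zeta1_eq s (by linarith)]
  have h2 : ‖(s - 1) / 2‖ ≤ (1 + ‖s‖) ^ 3 := by
    rw [norm_div]
    have : ‖(2:ℂ)‖ = 2 := by simp
    rw [this]
    have h3 : (1 + ‖s‖) ≤ (1 + ‖s‖) ^ 3 := le_self_pow₀ (by linarith [norm_nonneg s]) (by norm_num)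
    linarith [norm_nonneg s]
  have h4 : ‖(1:ℂ)‖ ≤ (1 + ‖s‖) ^ 3 := by
    simp only [norm_one]
    exact one_le_pow₀ (by linarith [norm_nonneg s])
  calc _ ≤ ‖∑' n, zT n s‖ + ‖(s - 1) / 2‖ + ‖(1 : ℂ)‖ := norm_add₃_le
    _ ≤ _ := by nlinarith

lemma min_rpow {x ε : ℝ} (hx : 0 ≤ x) (hε : 0 < ε) (hε2 : ε ≤ 2) (y : ℝ) (h1 : y ≤ 1) (h2 : y ≤ x ^ 2) :
    y ≤ x ^ ε := by
  rcases le_total x 1 with h | h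
  · rcases hx.eq_or_lt with rfl | hx0
    · rw [Real.zero_rpow hε.ne']; simpa using h2
    · refine h2.trans ?_
      rw [← Real.rpow_natCast]
      exact Real.rpow_le_rpow_of_exponent_ge hx0 h (by exact_mod_cast hε2)
  · exact h1.trans (Real.one_le_rpow h hε.le)

lemma zeta1_line_one (ε : ℝ) (hε : 0 < ε) (hε2 : ε ≤ 1) : ∃ C : ℝ, 0 < C ∧ ∀ s : ℂ, s.re = 1 →
    ‖riemannZeta₁ s‖ ≤ C * (1 + |s.im|) ^ (1 + ε) := by
  have hsm := summable_shift_rpow (a := -1 - ε) (by linarith)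
  have hK : 0 ≤ ∑' n : ℕ, ((n : ℝ) + 1) ^ (-1 - ε) := tsum_nonneg fun n => by positivity
  refine ⟨4 * ∑' n : ℕ, ((n : ℝ) + 1) ^ (-1 - ε) + 2, by positivity, fun s hs => ?_⟩
  set A := 1 + |s.im| with hA
  have hA1 : 1 ≤ A := by simp [hA]
  have hA0 : 0 < A := by linarith
  have e1 : ‖s - 1‖ = |s.im| := by
    have : s - 1 = (s.im : ℂ) * Complex.I := by
      apply Complex.ext <;> simp [hs]
    rw [this]; simp
  have hsn : ‖s‖ ≤ A := by
    have := norm_add_le (s - 1) 1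
    simp only [sub_add_cancel, e1, norm_one] at this
    linarith
  have a2 : ‖s + 1‖ ≤ 2 * A := (norm_add_le _ _).trans (by simp; linarith)
  have hb : ∀ n, ‖zT n s‖ ≤ 4 * A ^ (1 + ε) * ((n : ℝ) + 1) ^ (-1 - ε) := fun n => by
    set m : ℝ := (n : ℝ) + 1 with hm
    have hm0 : 0 < m := by positivity
    have b1 := zT_bound1 n s (by linarith)
    have b2 := zT_bound2 n s (by linarith)
    rw [← hm, hs, e1] at b1 b2
    have r3 : m ^ ((-1 : ℝ) - 2) = m⁻¹ ^ 3 := by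
      rw [show (-1 - 2 : ℝ) = -((3 : ℕ) : ℝ) by norm_num, Real.rpow_neg hm0.le, Real.rpow_natCast, inv_pow]
    have r1 : m ^ (-1 : ℝ) = m⁻¹ := Real.rpow_neg_one m
    rw [r3] at b1
    rw [r1] at b2
    have him : |s.im| ≤ A := by linarith
    have key := min_rpow (x := A / m) (by positivity) hε (by linarith) (‖zT n s‖ / (2 * A * m⁻¹))
      (by
        rw [div_le_one (by positivity)]
        refine b2.trans ?_
        gcongr)
      (by
        rw [div_le_iff₀ (by positivity)]
        refine b1.trans ?_
        calc |s.im| * ‖s‖ * ‖s + 1‖ * m⁻¹ ^ 3 ≤ A * A * (2 * A) * m⁻¹ ^ 3 := by gcongr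
          _ = _ := by rw [div_eq_mul_inv]; ring)
    rw [div_le_iff₀ (by positivity)] at key
    refine key.trans ?_
    rw [Real.div_rpow hA0.le hm0.le, Real.rpow_add hA0, Real.rpow_one, sub_eq_add_neg,
      Real.rpow_add hm0, r1, Real.rpow_neg hm0.le, div_eq_mul_inv]
    have : 0 ≤ A ^ ε * (m ^ ε)⁻¹ * (A * m⁻¹) := by positivity
    nlinarith
  have h1 := tsum_of_norm_bounded (hsm.mul_left (4 * A ^ (1 + ε))).hasSum hb
  rw [tsum_mul_left] at h1
  rw [zeta1_eq s (by linarith)]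
  have hAA : A ≤ A ^ (1 + ε) := Real.self_le_rpow_of_one_le hA1 (by linarith)
  have h2 : ‖(s - 1) / 2‖ ≤ A ^ (1 + ε) := by
    rw [norm_div, e1]
    have : ‖(2:ℂ)‖ = 2 := by simp
    rw [this]
    linarith [abs_nonneg s.im]
  have h4 : ‖(1:ℂ)‖ ≤ A ^ (1 + ε) := by
    simp only [norm_one]
    linarith
  calc _ ≤ ‖∑' n, zT n s‖ + ‖(s - 1) / 2‖ + ‖(1 : ℂ)‖ := norm_add₃_le
    _ ≤ _ := by nlinarith

lemma norm_sin_I (x : ℝ) : ‖Complex.sin (x * Complex.I)‖ = |Real.sinh x| := by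
  rw [Complex.sin_mul_I, norm_mul, Complex.norm_I, mul_one, ← Complex.ofReal_sinh, Complex.norm_real,
    Real.norm_eq_abs]

lemma gamma_cos_bound (t : ℝ) (ht : t ≠ 0) :
    (‖Complex.Gamma (1 - t * Complex.I)‖ *
      ‖Complex.cos (Real.pi * (1 - t * Complex.I) / 2)‖) ^ 2 ≤ Real.pi * |t| := by
  have hc : Complex.cos (Real.pi * (1 - t * Complex.I) / 2) =
      Complex.sin ((Real.pi * t / 2 : ℝ) * Complex.I) := by
    rw [← Complex.cos_pi_div_two_sub]
    congr 1
    push_cast; ring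
  rw [hc, norm_sin_I]
  have htI : (t : ℂ) * Complex.I ≠ 0 := by simp [ht]
  have hconj : (starRingEnd ℂ) (1 - t * Complex.I) = t * Complex.I + 1 := by
    simp; ring
  have h1 : ‖Complex.Gamma (1 - t * Complex.I)‖ ^ 2 = |t| * (Real.pi / |Real.sinh (Real.pi * t)|) := by
    have a : ‖Complex.Gamma (1 - t * Complex.I)‖ = ‖Complex.Gamma (t * Complex.I + 1)‖ := by
      rw [← hconj, Complex.Gamma_conj, Complex.norm_conj]
    rw [sq]
    nth_rw 1 [a]
    rw [Complex.Gamma_add_one _ htI, norm_mul, mul_assoc, ← norm_mul, Complex.Gamma_mul_Gamma_one_sub,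
      norm_div]
    have : (Real.pi : ℂ) * (t * Complex.I) = (Real.pi * t : ℝ) * Complex.I := by push_cast; ring
    rw [this, norm_sin_I]
    simp [abs_of_pos Real.pi_pos]
  rw [mul_pow, h1]
  set y := Real.pi * t / 2 with hy
  have h2 : Real.pi * t = 2 * y := by rw [hy]; ring
  rw [h2, Real.sinh_two_mul, abs_mul, abs_mul, abs_two, abs_of_pos (Real.cosh_pos y)]
  have hy0 : y ≠ 0 := by
    rw [hy]; have := Real.pi_pos; positivity
  have hsh : 0 < |Real.sinh y| := by
    rw [abs_pos]; simpa using hy0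
  have hch := Real.cosh_pos y
  have hlt : |Real.sinh y| ≤ Real.cosh y := by
    rw [abs_le]
    constructor
    · have := Real.cosh_add_sinh y
      linarith [Real.exp_pos y]
    · exact (Real.sinh_lt_cosh y).le
  calc |t| * (Real.pi / (2 * |Real.sinh y| * Real.cosh y)) * |Real.sinh y| ^ 2
      = Real.pi * |t| * (|Real.sinh y| / (2 * Real.cosh y)) := by field_simp
    _ ≤ Real.pi * |t| * 1 := by
      gcongr
      rw [div_le_one (by positivity)]
      linarith
    _ = _ := by ring

lemma zeta_line_zero (ε : ℝ) (hε : 0 < ε) (hε2 : ε ≤ 1) : ∃ C : ℝ, 0 < C ∧ ∀ t : ℝ, 1 ≤ |t| →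
    ‖riemannZeta (t * Complex.I)‖ ≤ C * (1 + |t|) ^ (1 / 2 + ε) := by
  obtain ⟨C, hC, h⟩ := zeta1_line_one ε hε hε2
  refine ⟨8 * C, by positivity, fun t ht => ?_⟩
  have ht0 : t ≠ 0 := by rintro rfl; simp at ht; linarith
  set s : ℂ := 1 - t * Complex.I with hs
  have hre : s.re = 1 := by simp [hs]
  have him : s.im = -t := by simp [hs]
  have hs1 : s ≠ 1 := by
    intro h0; rw [h0] at him; simp at him; exact ht0 him
  have hfe := riemannZeta_one_sub (s := s) (fun n hn => by
    have := congrArg Complex.re hn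
    rw [hre] at this
    simp at this
    linarith [n.cast_nonneg (α := ℝ)]) hs1
  have e1 : 1 - s = t * Complex.I := by rw [hs]; ring
  rw [e1] at hfe
  rw [hfe]
  have hz := h s hre
  rw [zeta1_eq_mul s hs1, norm_mul, him, abs_neg] at hz
  have e2 : ‖s - 1‖ = |t| := by
    have : s - 1 = -(t * Complex.I) := by rw [hs]; ring
    rw [this]; simp
  rw [e2] at hz
  set A := 1 + |t| with hA
  have hA0 : 0 < A := by positivity
  have hzb : ‖riemannZeta s‖ ≤ 2 * C * A ^ ε := by
    rw [Real.rpow_add hA0, Real.rpow_one] at hz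
    have : A ≤ 2 * |t| := by linarith
    have h3 : |t| * ‖riemannZeta s‖ ≤ |t| * (2 * C * A ^ ε) := by
      refine hz.trans ?_
      calc C * (A * A ^ ε) ≤ C * ((2 * |t|) * A ^ ε) := by gcongr
        _ = _ := by ring
    exact le_of_mul_le_mul_left h3 (by linarith)
  have hg := gamma_cos_bound t ht0
  rw [← hs] at hg
  have hg2 : ‖Complex.Gamma s‖ * ‖Complex.cos (Real.pi * s / 2)‖ ≤ 2 * A ^ (1 / 2 : ℝ) := by
    refine abs_le_of_sq_le_sq' ?_ (by positivity) |>.2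
    refine hg.trans ?_
    rw [mul_pow, ← Real.rpow_natCast, ← Real.rpow_natCast, ← Real.rpow_mul hA0.le]
    norm_num
    have := Real.pi_le_four
    nlinarith [abs_nonneg t, Real.pi_pos]
  have hp : ‖(2 * (Real.pi : ℂ)) ^ (-s)‖ ≤ 1 := by
    have : (2 * (Real.pi : ℂ)) = ((2 * Real.pi : ℝ) : ℂ) := by push_cast; rfl
    rw [this, Complex.norm_cpow_eq_rpow_re_of_pos (by positivity)]
    simp only [Complex.neg_re, hre]
    exact Real.rpow_le_one_of_one_le_of_nonpos (by linarith [Real.pi_gt_three]) (by norm_num)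
  simp only [norm_mul]
  have e4 : ‖(2:ℂ)‖ = 2 := by simp
  rw [e4]
  rw [Real.rpow_add hA0]
  calc _ = 2 * ‖(2 * (Real.pi : ℂ)) ^ (-s)‖ * (‖Complex.Gamma s‖ * ‖Complex.cos (Real.pi * s / 2)‖) *
        ‖riemannZeta s‖ := by ring
    _ ≤ 2 * 1 * (2 * A ^ (1 / 2 : ℝ)) * (2 * C * A ^ ε) := by gcongr
    _ = _ := by ring

lemma zeta1_line_zero (ε : ℝ) (hε : 0 < ε) (hε2 : ε ≤ 1) : ∃ C : ℝ, 0 < C ∧ ∀ z : ℂ, z.re = 0 →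
    ‖riemannZeta₁ z‖ ≤ C * ‖z + 1‖ * (1 + |z.im|) ^ (1 / 2 + ε) := by
  obtain ⟨C, hC, h⟩ := zeta_line_zero ε hε hε2
  obtain ⟨C', hC', h'⟩ := zeta1_growth
  refine ⟨C + 8 * C', by positivity, fun z hz => ?_⟩
  have ez : z = z.im * Complex.I := by apply Complex.ext <;> simp [hz]
  have hn : ‖z‖ = |z.im| := by nth_rw 1 [ez]; simp
  have hz1 : 1 ≤ ‖z + 1‖ := by
    have := Complex.re_le_norm (z + 1)
    simpa [hz] using this
  have hA : 1 ≤ (1 + |z.im|) ^ (1 / 2 + ε) :=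
    Real.one_le_rpow (by linarith [abs_nonneg z.im]) (by linarith)
  rcases le_total 1 |z.im| with h1 | h1
  · have hne : z ≠ 1 := by rintro rfl; simp at hz
    rw [zeta1_eq_mul z hne, norm_mul]
    have e : ‖z - 1‖ = ‖z + 1‖ := by
      rw [← Complex.norm_conj, ← norm_neg]
      congr 1
      apply Complex.ext <;> simp [hz]
    have := h z.im h1
    rw [← ez] at this
    rw [e]
    calc _ ≤ ‖z + 1‖ * (C * (1 + |z.im|) ^ (1 / 2 + ε)) := by gcongr
      _ = C * ‖z + 1‖ * (1 + |z.im|) ^ (1 / 2 + ε) := by ring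
      _ ≤ _ := by gcongr; linarith
  · have := h' z hz.ge
    have h8 : (1 + ‖z‖) ^ 3 ≤ 8 := by
      have : (1 + ‖z‖) ^ 3 ≤ (2:ℝ) ^ 3 := by
        gcongr
        linarith
      linarith
    calc _ ≤ C' * 8 := this.trans (by gcongr)
      _ = (8 * C') * 1 * 1 := by ring
      _ ≤ _ := by gcongr; linarith



lemma zeta_bound_two : ∃ K : ℝ, 0 < K ∧ ∀ z : ℂ, 2 ≤ z.re → ‖riemannZeta z‖ ≤ K := by
  have hsm := summable_shift_rpow (a := -2) (by norm_num)
  have hK : 0 ≤ ∑' n : ℕ, ((n : ℝ) + 1) ^ (-2 : ℝ) := tsum_nonneg fun n => by positivity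
  refine ⟨∑' n : ℕ, ((n : ℝ) + 1) ^ (-2 : ℝ) + 1, by positivity, fun z hz => ?_⟩
  rw [zeta_eq_tsum_one_div_nat_add_one_cpow (by linarith)]
  have := tsum_of_norm_bounded (f := fun n : ℕ => 1 / ((n : ℂ) + 1) ^ z) hsm.hasSum (fun n => by
    have e : ((n : ℂ) + 1) = (((n : ℝ) + 1 : ℝ) : ℂ) := by push_cast; rfl
    rw [norm_div, norm_one, e, Complex.norm_cpow_eq_rpow_re_of_pos (by positivity), one_div,
      ← Real.rpow_neg (by positivity)]
    refine Real.rpow_le_rpow_of_exponent_le (by linarith [n.cast_nonneg (α := ℝ)]) (by linarith))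
  linarith

lemma exp_aux (v : ℝ) : (1 + |v|) * Real.exp (-v ^ 2) ≤ 2 := by
  have h1 : 1 + v ^ 2 ≤ Real.exp (v ^ 2) := by linarith [Real.add_one_le_exp (v ^ 2)]
  rw [Real.exp_neg, ← div_eq_mul_inv, div_le_iff₀ (Real.exp_pos _)]
  have : |v| ^ 2 = v ^ 2 := sq_abs v
  nlinarith [sq_nonneg (|v| - 1)]

lemma zeta1_strip (ε : ℝ) (hε : 0 < ε) (hε2 : ε ≤ 1 / 2) : ∃ C : ℝ, 0 < C ∧ ∀ z : ℂ, 0 ≤ z.re → z.re ≤ 2 →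
    ‖riemannZeta₁ z‖ ≤ C * ‖z + 1‖ * (1 + |z.im|) ^ ((1 / 2 + ε) * (1 - z.re / 2)) := by
  obtain ⟨C, hC, h0⟩ := zeta1_line_zero ε hε (by linarith)
  obtain ⟨K, hK, h2⟩ := zeta_bound_two
  obtain ⟨C', hC', hgr⟩ := zeta1_growth
  set μ : ℝ := 1 / 2 + ε with hμ
  set D : ℝ := 2 * C + K * Real.exp 4 with hD
  have hD0 : 0 < D := by positivity
  refine ⟨D, hD0, fun z0 hz0 hz2 => ?_⟩
  set T : ℝ := 1 + |z0.im| with hT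
  have hT1 : 1 ≤ T := by simp [hT]
  have hT0 : 0 < T := by linarith
  set F : ℂ → ℂ := fun z => riemannZeta₁ z / (z + 1) * Complex.exp ((z - z0.im * Complex.I) ^ 2) *
    (T : ℂ) ^ (-(μ : ℂ) * (1 - z / 2)) with hF
  have hexp : ∀ z : ℂ, ‖Complex.exp ((z - z0.im * Complex.I) ^ 2)‖ =
      Real.exp (z.re ^ 2 - (z.im - z0.im) ^ 2) := fun z => by
    rw [Complex.norm_exp]
    congr 1
    simp [sq]
  have hcp : ∀ z : ℂ, ‖(T : ℂ) ^ (-(μ : ℂ) * (1 - z / 2))‖ = T ^ (-(μ * (1 - z.re / 2))) := fun z => by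
    rw [Complex.norm_cpow_eq_rpow_re_of_pos hT0]
    congr 1
    have : (z / 2).re = z.re / 2 := by simp
    have : (-(μ : ℂ) * (1 - z / 2)) = (-μ : ℝ) * (1 - z / 2) := by push_cast; ring
    rw [this, Complex.re_ofReal_mul]
    simp
  have hFn : ∀ z : ℂ, ‖F z‖ = ‖riemannZeta₁ z‖ / ‖z + 1‖ * Real.exp (z.re ^ 2 - (z.im - z0.im) ^ 2) *
      T ^ (-(μ * (1 - z.re / 2))) := fun z => by
    simp only [hF, norm_mul, norm_div, hexp, hcp]
  have hz1 : ∀ z : ℂ, 0 ≤ z.re → 1 ≤ ‖z + 1‖ := fun z hz => by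
    have := Complex.re_le_norm (z + 1)
    simp at this
    linarith
  have hne : ∀ z : ℂ, 0 ≤ z.re → z + 1 ≠ 0 := fun z hz h => by
    have := hz1 z hz
    rw [h] at this; simp at this; linarith
  have hTc : (T : ℂ) ≠ 0 := by exact_mod_cast hT0.ne'
  have hdiff : ∀ z : ℂ, 0 ≤ z.re → DifferentiableAt ℂ F z := fun z hz => by
    have a1 : DifferentiableAt ℂ riemannZeta₁ z := differentiable_riemannZeta₁ z
    have a2 : DifferentiableAt ℂ (fun z : ℂ => (T : ℂ) ^ (-(μ : ℂ) * (1 - z / 2))) z :=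
      DifferentiableAt.const_cpow (by fun_prop) (Or.inl hTc)
    have a3 : DifferentiableAt ℂ (fun z : ℂ => riemannZeta₁ z / (z + 1)) z :=
      a1.div (by fun_prop) (hne z hz)
    have a4 : DifferentiableAt ℂ (fun z : ℂ => Complex.exp ((z - z0.im * Complex.I) ^ 2)) z := by
      fun_prop
    exact (a3.mul a4).mul a2
  have key : ‖F z0‖ ≤ D := by
    refine PhragmenLindelof.vertical_strip (a := 0) (b := 2) ?_ ?_ ?_ ?_ hz0 hz2
    · refine DifferentiableOn.diffContOnCl fun z hz => (hdiff z ?_).differentiableWithinAt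
      have hcl : closure (Complex.re ⁻¹' Set.Ioo 0 2) ⊆ Complex.re ⁻¹' Set.Ici 0 :=
        closure_minimal (fun z hz => (Set.mem_Ioo.1 hz).1.le) (isClosed_Ici.preimage Complex.continuous_re)
      exact hcl hz
    · refine ⟨1, by norm_num; linarith [Real.pi_gt_three], 3, ?_⟩
      refine Asymptotics.IsBigO.of_bound (C' * 27 * Real.exp 4) ?_
      rw [Filter.eventually_inf_principal]
      refine Eventually.of_forall fun z hz => ?_
      have hz : 0 < z.re ∧ z.re < 2 := hz
      rw [hFn]
      have b1 : ‖riemannZeta₁ z‖ / ‖z + 1‖ ≤ C' * 27 * Real.exp (3 * |z.im|) := by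
        rw [div_le_iff₀ (by linarith [hz1 z hz.1.le])]
        have c1 := hgr z hz.1.le
        have c2 : ‖z‖ ≤ 2 + |z.im| := by
          refine (Complex.norm_le_abs_re_add_abs_im z).trans ?_
          rw [abs_of_pos hz.1]; linarith
        have c3 : 1 + ‖z‖ ≤ 3 * Real.exp |z.im| := by
          have := Real.add_one_le_exp |z.im|
          linarith [abs_nonneg z.im]
        have c4 : Real.exp (3 * |z.im|) = Real.exp |z.im| ^ 3 := by
          rw [← Real.exp_nat_mul]; norm_num
        calc ‖riemannZeta₁ z‖ ≤ C' * (3 * Real.exp |z.im|) ^ 3 := c1.trans (by gcongr)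
          _ = C' * 27 * Real.exp (3 * |z.im|) * 1 := by rw [c4]; ring
          _ ≤ _ := by gcongr; exact hz1 z hz.1.le
      have b2 : Real.exp (z.re ^ 2 - (z.im - z0.im) ^ 2) ≤ Real.exp 4 := by
        rw [Real.exp_le_exp]
        nlinarith [sq_nonneg (z.im - z0.im), hz.1, hz.2]
      have b3 : T ^ (-(μ * (1 - z.re / 2))) ≤ 1 := by
        refine Real.rpow_le_one_of_one_le_of_nonpos hT1 ?_
        have : 0 ≤ μ * (1 - z.re / 2) := mul_nonneg (by rw [hμ]; linarith) (by linarith [hz.2])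
        linarith
      have b4 : Real.exp (3 * |z.im|) ≤ ‖Real.exp (3 * Real.exp (1 * |z.im|))‖ := by
        rw [Real.norm_eq_abs, abs_of_pos (Real.exp_pos _), Real.exp_le_exp, one_mul]
        linarith [Real.add_one_le_exp |z.im|]
      calc _ ≤ C' * 27 * Real.exp (3 * |z.im|) * Real.exp 4 * 1 := by gcongr
        _ = C' * 27 * Real.exp 4 * Real.exp (3 * |z.im|) := by ring
        _ ≤ _ := by gcongr
    · intro z hz
      rw [hFn, hz]
      have b1 : ‖riemannZeta₁ z‖ / ‖z + 1‖ ≤ C * (1 + |z.im|) ^ μ := by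
        rw [div_le_iff₀ (by linarith [hz1 z hz.ge])]
        refine (h0 z hz).trans (le_of_eq ?_)
        ring
      set v := z.im - z0.im with hv
      have b2 : (1 + |z.im|) ^ μ ≤ T ^ μ * (1 + |v|) := by
        have c1 : 1 + |z.im| ≤ T * (1 + |v|) := by
          have : |z.im| ≤ |v| + |z0.im| := by
            have := abs_add_le v z0.im
            rwa [hv, sub_add_cancel] at this
          rw [hT]
          nlinarith [abs_nonneg v, abs_nonneg z0.im]
        calc _ ≤ (T * (1 + |v|)) ^ μ := by gcongr
          _ = T ^ μ * (1 + |v|) ^ μ := Real.mul_rpow hT0.le (by positivity)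
          _ ≤ _ := by
            gcongr
            refine (Real.rpow_le_rpow_of_exponent_le (by linarith [abs_nonneg v])
              (by linarith : μ ≤ 1)).trans (by rw [Real.rpow_one])
      have e1 : Real.exp (0 ^ 2 - v ^ 2) = Real.exp (-v ^ 2) := by congr 1; ring
      have e2 : T ^ (-(μ * (1 - 0 / 2))) = (T ^ μ)⁻¹ := by
        rw [Real.rpow_neg hT0.le]; norm_num
      rw [e1, e2]
      have hTμ : 0 < T ^ μ := by positivity
      calc _ ≤ C * (T ^ μ * (1 + |v|)) * Real.exp (-v ^ 2) * (T ^ μ)⁻¹ := by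
            gcongr
            exact b1.trans (by gcongr)
        _ = C * ((1 + |v|) * Real.exp (-v ^ 2)) := by field_simp
        _ ≤ C * 2 := by gcongr; exact exp_aux v
        _ ≤ D := by rw [hD]; nlinarith [Real.exp_pos 4]
    · intro z hz
      rw [hFn, hz]
      have hzn : z ≠ 1 := by rintro rfl; norm_num at hz
      have b1 : ‖riemannZeta₁ z‖ / ‖z + 1‖ ≤ K := by
        rw [div_le_iff₀ (by linarith [hz1 z (by linarith)]), zeta1_eq_mul z hzn, norm_mul]
        have c1 : ‖z - 1‖ ≤ ‖z + 1‖ := by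
          rw [← sq_le_sq₀ (norm_nonneg _) (norm_nonneg _), ← Complex.normSq_eq_norm_sq,
            ← Complex.normSq_eq_norm_sq]
          simp [Complex.normSq_apply, hz]
          norm_num
        rw [mul_comm]
        gcongr
        exact h2 z hz.ge
      have b2 : Real.exp (2 ^ 2 - (z.im - z0.im) ^ 2) ≤ Real.exp 4 := by
        rw [Real.exp_le_exp]
        nlinarith [sq_nonneg (z.im - z0.im)]
      have e2 : T ^ (-(μ * (1 - 2 / 2))) = 1 := by norm_num
      rw [e2]
      calc _ ≤ K * Real.exp 4 * 1 := by gcongr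
        _ ≤ D := by rw [hD]; linarith
  rw [hFn] at key
  have e3 : 1 ≤ Real.exp (z0.re ^ 2 - (z0.im - z0.im) ^ 2) := by
    rw [Real.one_le_exp_iff]
    simp
    positivity
  have hp := hz1 z0 hz0
  have hq : 0 < T ^ (μ * (1 - z0.re / 2)) := by positivity
  rw [Real.rpow_neg hT0.le] at key
  have k2 : ‖riemannZeta₁ z0‖ / ‖z0 + 1‖ * 1 * (T ^ (μ * (1 - z0.re / 2)))⁻¹ ≤ D :=
    le_trans (by gcongr) key
  rw [mul_one, ← div_eq_mul_inv, div_le_iff₀ hq, div_le_iff₀ (by linarith)] at k2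
  refine k2.trans (le_of_eq ?_)
  ring

/-- uniform bound away from the pole -/
lemma zeta_bound_away (σ r ε : ℝ) (hσ : 0 < σ) (hσ1 : σ ≤ 1) (hr : 0 < r) (hε : 0 < ε) (hε2 : ε ≤ 1 / 2) :
    ∃ C : ℝ, 0 < C ∧ ∀ z : ℂ, σ ≤ z.re → r ≤ ‖z - 1‖ →
      ‖riemannZeta z‖ ≤ C * (1 + |z.im|) ^ ((1 / 2 + ε) * (1 - σ / 2)) := by
  obtain ⟨C, hC, h⟩ := zeta1_strip ε hε hε2
  obtain ⟨K, hK, h2⟩ := zeta_bound_two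
  refine ⟨C * (1 + 2 / r) + K, by positivity, fun z hz hzr => ?_⟩
  have hA : 1 ≤ 1 + |z.im| := by simp
  have hexp : 0 ≤ (1 / 2 + ε) * (1 - σ / 2) := mul_nonneg (by linarith) (by linarith)
  have hA2 : 1 ≤ (1 + |z.im|) ^ ((1 / 2 + ε) * (1 - σ / 2)) := Real.one_le_rpow hA hexp
  rcases le_total z.re 2 with hle | hle
  · have hne : z ≠ 1 := by rintro rfl; simp at hzr; linarith
    have h3 := h z (by linarith) hle
    rw [zeta1_eq_mul z hne, norm_mul] at h3
    have h4 : (1 + |z.im|) ^ ((1 / 2 + ε) * (1 - z.re / 2)) ≤ (1 + |z.im|) ^ ((1 / 2 + ε) * (1 - σ / 2)) := by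
      gcongr
    have h5 : ‖z + 1‖ ≤ (1 + 2 / r) * ‖z - 1‖ := by
      have : ‖z + 1‖ ≤ ‖z - 1‖ + 2 := by
        have := norm_add_le (z - 1) 2
        rw [show z - 1 + 2 = z + 1 by ring] at this
        simpa using this
      have h6 : 2 ≤ 2 / r * ‖z - 1‖ := by
        rw [div_mul_eq_mul_div, le_div_iff₀ hr]; linarith
      linarith
    have hpos : 0 < ‖z - 1‖ := by linarith
    have h7 : ‖z - 1‖ * ‖riemannZeta z‖ ≤
        ‖z - 1‖ * (C * (1 + 2 / r) * (1 + |z.im|) ^ ((1 / 2 + ε) * (1 - σ / 2))) := by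
      refine h3.trans ?_
      calc _ ≤ C * ((1 + 2 / r) * ‖z - 1‖) * (1 + |z.im|) ^ ((1 / 2 + ε) * (1 - σ / 2)) := by gcongr
        _ = _ := by ring
    refine (le_of_mul_le_mul_left h7 hpos).trans ?_
    gcongr
    linarith
  · calc _ ≤ K := h2 z hle
      _ ≤ (C * (1 + 2 / r) + K) * 1 := by
        have : 0 ≤ C * (1 + 2 / r) := by positivity
        linarith
      _ ≤ _ := by gcongr



lemma summable_int_shift {q : ℝ} (hq : q < -1) : Summable (fun k : ℤ => (1 + |(k : ℝ)|) ^ q) := by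
  have h := summable_shift_rpow hq
  have h' : Summable (fun n : ℕ => (1 + (n : ℝ)) ^ q) := by simpa [add_comm] using h
  refine Summable.of_nat_of_neg ?_ ?_ <;> simpa using h'

lemma exists_gap (τ : ℝ) (hτ : 0 < τ) (a : ℤ → ℂ) (s0 : ℂ)
    (hp : ∀ k : ℤ, a k ≠ 0 → s0 ≠ 2 + (τ * k : ℝ) * Complex.I) :
    ∃ δ : ℝ, 0 < δ ∧ ∀ k : ℤ, a k ≠ 0 → δ ≤ ‖s0 - 1 - (τ * k : ℝ) * Complex.I - 1‖ := by
  set S : Set ℤ := {k : ℤ | ‖s0 - 1 - (τ * k : ℝ) * Complex.I - 1‖ < 1} with hS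
  have hfin : S.Finite := by
    obtain ⟨N, hN⟩ := exists_nat_gt ((|s0.im| + 1) / τ)
    refine (Set.finite_Icc (-(N : ℤ)) N).subset fun k hk => ?_
    have hk : ‖s0 - 1 - (τ * k : ℝ) * Complex.I - 1‖ < 1 := hk
    have h1 := (Complex.abs_im_le_norm _).trans hk.le
    have e : (s0 - 1 - (τ * k : ℝ) * Complex.I - 1).im = s0.im - τ * k := by simp
    rw [e] at h1
    have h2 : τ * |(k : ℝ)| ≤ |s0.im| + 1 := by
      have : |τ * k| ≤ |s0.im| + |s0.im - τ * k| := by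
        have := abs_sub s0.im (s0.im - τ * k)
        rwa [sub_sub_cancel] at this
      rw [abs_mul, abs_of_pos hτ] at this
      linarith
    have h3 : |(k : ℝ)| ≤ N := by
      rw [div_lt_iff₀ hτ] at hN
      refine le_of_mul_le_mul_left ?_ hτ
      linarith
    have h4 := abs_le.1 h3
    constructor
    · exact_mod_cast h4.1
    · exact_mod_cast h4.2
  have h1 : ∀ᶠ δ : ℝ in 𝓝[>] 0, ∀ k ∈ S, a k ≠ 0 → δ ≤ ‖s0 - 1 - (τ * k : ℝ) * Complex.I - 1‖ := by
    rw [Filter.eventually_all_finite hfin]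
    intro k _
    by_cases hk : a k = 0
    · simp [hk]
    · have hpos : 0 < ‖s0 - 1 - (τ * k : ℝ) * Complex.I - 1‖ := by
        rw [norm_pos_iff]
        intro h0
        apply hp k hk
        linear_combination h0
      filter_upwards [Ioo_mem_nhdsGT hpos] with δ hδ _
      exact hδ.2.le
  obtain ⟨δ, h2, h3⟩ := (h1.and (Ioo_mem_nhdsGT (zero_lt_one' ℝ))).exists
  refine ⟨δ, h3.1, fun k hk => ?_⟩
  by_cases hkS : k ∈ S
  · exact h2 k hkS hk
  · have : ¬ ‖s0 - 1 - (τ * k : ℝ) * Complex.I - 1‖ < 1 := hkS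
    linarith [h3.2]

lemma regular_part (τ : ℝ) (hτ : 0 < τ) (a : ℤ → ℂ)
    (ha : ∀ ε : ℝ, 0 < ε → ε ≤ 1 / 2 → ∃ C : ℝ, 0 < C ∧ ∀ k, ‖a k‖ ≤ C * (1 + |(k : ℝ)|) ^ (-3 / 2 + ε))
    (s0 : ℂ) (hs0 : 1 < s0.re) (hp : ∀ k : ℤ, a k ≠ 0 → s0 ≠ 2 + (τ * k : ℝ) * Complex.I) :
    DifferentiableAt ℂ (fun s => ∑' k : ℤ, a k * riemannZeta (s - 1 - (τ * k : ℝ) * Complex.I)) s0 ∧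
    ∀ᶠ s in 𝓝 s0, Summable (fun k : ℤ => a k * riemannZeta (s - 1 - (τ * k : ℝ) * Complex.I)) := by
  obtain ⟨δ, hδ, hgap⟩ := exists_gap τ hτ a s0 hp
  set σ : ℝ := min ((s0.re - 1) / 2) 1 with hσd
  have hσ : 0 < σ := lt_min (by linarith) one_pos
  have hσ1 : σ ≤ 1 := min_le_right _ _
  have hσ2 : σ ≤ (s0.re - 1) / 2 := min_le_left _ _
  set r : ℝ := min (δ / 2) ((s0.re - 1) / 2) with hrd
  have hr : 0 < r := lt_min (by linarith) (by linarith)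
  have hr1 : r ≤ δ / 2 := min_le_left _ _
  have hr2 : r ≤ (s0.re - 1) / 2 := min_le_right _ _
  set ε : ℝ := σ / 16 with hε
  have hε0 : 0 < ε := by positivity
  have hε1 : ε ≤ 1 / 2 := by linarith
  obtain ⟨C1, hC1, h1⟩ := ha ε hε0 hε1
  obtain ⟨C2, hC2, h2⟩ := zeta_bound_away σ r ε hσ hσ1 hr hε0 hε1
  set e : ℝ := (1 / 2 + ε) * (1 - σ / 2) with he
  have he0 : 0 ≤ e := mul_nonneg (by linarith) (by linarith)
  set B : ℝ := 1 + |s0.im| + r + τ with hB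
  have hB0 : 0 < B := by positivity
  set u : ℤ → ℝ := fun k => C1 * C2 * B ^ e * (1 + |(k : ℝ)|) ^ (-3 / 2 + ε + e) with hu
  have hus : Summable u := by
    refine (summable_int_shift ?_).mul_left _
    rw [he]
    nlinarith [mul_pos hε0 hσ]
  have hbase : ∀ (k : ℤ), a k ≠ 0 → ∀ s ∈ Metric.ball s0 r, σ ≤ (s - 1 - (τ * k : ℝ) * Complex.I).re ∧
      r ≤ ‖s - 1 - (τ * k : ℝ) * Complex.I - 1‖ ∧
      1 + |(s - 1 - (τ * k : ℝ) * Complex.I).im| ≤ B * (1 + |(k : ℝ)|) := by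
    intro k hk s hs
    have hs : ‖s - s0‖ < r := by simpa [dist_eq_norm] using hs
    refine ⟨?_, ?_, ?_⟩
    · have := (Complex.abs_re_le_norm (s - s0)).trans hs.le
      have := (abs_le.1 this).1
      simp at this ⊢
      linarith
    · have h3 := hgap k hk
      have h4 : s0 - 1 - (τ * k : ℝ) * Complex.I - 1 = (s - 1 - (τ * k : ℝ) * Complex.I - 1) - (s - s0) := by
        ring
      rw [h4] at h3
      have := norm_sub_le (s - 1 - (τ * k : ℝ) * Complex.I - 1) (s - s0)
      linarith
    · have h5 := (Complex.abs_im_le_norm (s - s0)).trans hs.le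
      have e1 : (s - 1 - (τ * k : ℝ) * Complex.I).im = (s0.im + (s - s0).im) - τ * k := by simp
      rw [e1]
      have h6 := abs_sub (s0.im + (s - s0).im) (τ * k)
      have h7 := abs_add_le s0.im (s - s0).im
      rw [abs_mul, abs_of_pos hτ] at h6
      rw [hB]
      nlinarith [abs_nonneg (k : ℝ), abs_nonneg s0.im]
  have hbound : ∀ (k : ℤ), ∀ s ∈ Metric.ball s0 r,
      ‖a k * riemannZeta (s - 1 - (τ * k : ℝ) * Complex.I)‖ ≤ u k := by
    intro k s hs
    have hk0 : 0 < 1 + |(k : ℝ)| := by positivity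
    by_cases hk : a k = 0
    · rw [hk, zero_mul, norm_zero]; positivity
    · obtain ⟨q1, q2, q3⟩ := hbase k hk s hs
      have h3 := h2 _ q1 q2
      rw [norm_mul]
      calc _ ≤ (C1 * (1 + |(k : ℝ)|) ^ (-3 / 2 + ε)) * (C2 * (B * (1 + |(k : ℝ)|)) ^ e) := by
            gcongr
            · exact h1 k
            · exact h3.trans (by gcongr)
        _ = u k := by
          simp only [hu]
          rw [Real.mul_rpow hB0.le hk0.le, Real.rpow_add hk0 (-3 / 2 + ε) e]
          ring
  constructor
  · have := Complex.differentiableOn_tsum_of_summable_norm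
      (F := fun (k : ℤ) s => a k * riemannZeta (s - 1 - (τ * k : ℝ) * Complex.I))
      (U := Metric.ball s0 r) hus
      (fun k s hs => by
        by_cases hk : a k = 0
        · simp only [hk, zero_mul]; exact differentiableWithinAt_const _
        · obtain ⟨_, q2, _⟩ := hbase k hk s hs
          have hne : s - 1 - (τ * k : ℝ) * Complex.I ≠ 1 := by
            intro h0; rw [h0] at q2; simp at q2; linarith
          refine DifferentiableAt.differentiableWithinAt ?_
          refine DifferentiableAt.const_mul ?_ _
          have h3 := differentiableAt_riemannZeta hne
          exact h3.comp s (f := fun s => s - 1 - (τ * k : ℝ) * Complex.I) (by fun_prop))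
      Metric.isOpen_ball (fun k s hs => hbound k s hs)
    exact this.differentiableAt (Metric.ball_mem_nhds s0 hr)
  · filter_upwards [Metric.ball_mem_nhds s0 hr] with s hs
    exact Summable.of_norm_bounded hus (fun k => hbound k s hs)

lemma delange_bound (β : ℝ) (hβ : 1 < β) (ε : ℝ) (hε : 0 < ε) (hε2 : ε ≤ 1 / 2) :
    ∃ C : ℝ, 0 < C ∧ ∀ k, ‖delangeCoeff β k‖ ≤ C * (1 + |(k : ℝ)|) ^ (-3 / 2 + ε) := by
  obtain ⟨C, hC, h⟩ := zeta1_line_zero ε hε (by linarith)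
  have hL : 0 < Real.log β := Real.log_pos hβ
  set τ : ℝ := 2 * Real.pi / Real.log β with hτd
  have hτ : 0 < τ := by have := Real.pi_pos; positivity
  have hzeta : ∀ y : ℝ, ‖riemannZeta (y * Complex.I)‖ ≤ C * (1 + |y|) ^ (1 / 2 + ε) := fun y => by
    set z : ℂ := y * Complex.I with hz
    have hre : z.re = 0 := by simp [hz]
    have him : z.im = y := by simp [hz]
    have h1 := h z hre
    have hne : z ≠ 1 := by intro h0; rw [h0] at hre; simp at hre
    rw [zeta1_eq_mul z hne, norm_mul, him] at h1
    have e : ‖z - 1‖ = ‖z + 1‖ := by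
      rw [← Complex.norm_conj, ← norm_neg]
      congr 1
      apply Complex.ext <;> simp [hre]
    have hpos : 0 < ‖z + 1‖ := by
      rw [← e]; exact norm_pos_iff.2 (sub_ne_zero.2 hne)
    rw [e] at h1
    refine le_of_mul_le_mul_left ?_ hpos
    refine h1.trans (le_of_eq ?_)
    ring
  set D : ℝ := (β - 1) / τ * 4 * (C * (1 + τ) ^ (1 / 2 + ε)) with hD
  have hβ1 : 0 < β - 1 := by linarith
  have hD0 : 0 < D := by positivity
  refine ⟨‖delangeCoeff β 0‖ + D, by positivity, fun k => ?_⟩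
  by_cases hk : k = 0
  · subst hk
    simp
    linarith
  · have hk1 : (1 : ℝ) ≤ |(k : ℝ)| := by
      have : (1 : ℤ) ≤ |k| := Int.one_le_abs hk
      exact_mod_cast this
    set A : ℝ := 1 + |(k : ℝ)| with hA
    have hA0 : 0 < A := by positivity
    have e1 : (2 * Real.pi * Complex.I * k / Real.log β : ℂ) = ((τ * k : ℝ) : ℂ) * Complex.I := by
      rw [hτd]; push_cast; ring
    have b0 : ‖((β : ℂ) - 1) / (2 * Real.pi * Complex.I * k)‖ ≤ (β - 1) / |(k : ℝ)| := by
      have e2 : ‖(β : ℂ) - 1‖ = β - 1 := by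
        rw [← Complex.ofReal_one, ← Complex.ofReal_sub, Complex.norm_real, Real.norm_eq_abs, abs_of_pos hβ1]
      rw [norm_div, e2]
      have e3 : ‖(2 * Real.pi * Complex.I * k : ℂ)‖ = 2 * Real.pi * |(k : ℝ)| := by
        simp [abs_of_pos Real.pi_pos]
      rw [e3]
      gcongr
      nlinarith [Real.pi_gt_three]
    have b1 : ‖(1 + ((τ * k : ℝ) : ℂ) * Complex.I)⁻¹‖ ≤ 1 / (τ * |(k : ℝ)|) := by
      rw [norm_inv, ← one_div]
      have := Complex.abs_im_le_norm (1 + ((τ * k : ℝ) : ℂ) * Complex.I)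
      have e2 : (1 + ((τ * k : ℝ) : ℂ) * Complex.I).im = τ * k := by simp
      rw [e2, abs_mul, abs_of_pos hτ] at this
      gcongr
    have b2 := hzeta (τ * k)
    rw [abs_mul, abs_of_pos hτ] at b2
    have b3 : (1 + τ * |(k : ℝ)|) ^ (1 / 2 + ε) ≤ (1 + τ) ^ (1 / 2 + ε) * A ^ (1 / 2 + ε) := by
      rw [← Real.mul_rpow (by positivity) hA0.le]
      gcongr
      rw [hA]; nlinarith
    have b4 : 1 / |(k : ℝ)| ≤ 2 / A := by
      rw [div_le_div_iff₀ (by linarith) hA0]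
      linarith
    rw [delangeCoeff, if_neg hk, e1, norm_mul, norm_mul, norm_neg]
    have e5 : A ^ (-3 / 2 + ε) = A ^ (1 / 2 + ε) / A / A := by
      rw [show (-3 / 2 + ε) = (1 / 2 + ε) - 1 - 1 by ring, Real.rpow_sub_one hA0.ne',
        Real.rpow_sub_one hA0.ne']
    calc _ ≤ ((β - 1) / |(k : ℝ)|) * (1 / (τ * |(k : ℝ)|)) *
          (C * ((1 + τ) ^ (1 / 2 + ε) * A ^ (1 / 2 + ε))) := by
          gcongr
          exact b2.trans (by gcongr)
      _ = (β - 1) / τ * (1 / |(k : ℝ)|) * (1 / |(k : ℝ)|) *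
          (C * ((1 + τ) ^ (1 / 2 + ε) * A ^ (1 / 2 + ε))) := by
          field_simp
      _ ≤ (β - 1) / τ * (2 / A) * (2 / A) * (C * ((1 + τ) ^ (1 / 2 + ε) * A ^ (1 / 2 + ε))) := by
          gcongr
      _ = D * A ^ (-3 / 2 + ε) := by
          rw [e5, hD]; ring
      _ ≤ _ := by
          gcongr
          linarith [norm_nonneg (delangeCoeff β 0)]

lemma delange_summable (β : ℝ) (hβ : 1 < β) : Summable (fun k => ‖delangeCoeff β k‖) := by
  obtain ⟨C, hC, h⟩ := delange_bound β hβ (1 / 4) (by norm_num) (by norm_num)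
  exact Summable.of_nonneg_of_le (fun k => norm_nonneg _) h
    ((summable_int_shift (by norm_num)).mul_left C)

lemma hasSum_log_zeta (w : ℂ) (hw : 1 < w.re) :
    HasSum (fun n : ℕ => (Real.log ((n + 1 : ℕ) : ℝ) : ℂ) * ((n + 1 : ℕ) : ℂ) ^ (-w)) (-deriv riemannZeta w) := by
  have hab : LSeries.abscissaOfAbsConv 1 < w.re := by
    rw [LSeries.abscissaOfAbsConv_one]; exact_mod_cast hw
  have h1 := LSeries_hasDerivAt hab
  have h2 := (LSeriesSummable_logMul_of_lt_re hab)
  have h3 : deriv (LSeries 1) w = deriv riemannZeta w := by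
    refine Filter.EventuallyEq.deriv_eq ?_
    filter_upwards [(isOpen_lt continuous_const Complex.continuous_re).mem_nhds hw] with z hz
    exact LSeries_one_eq_riemannZeta hz
  have h4 : HasSum (LSeries.term (LSeries.logMul 1) w) (-deriv riemannZeta w) := by
    rw [← h3, h1.deriv, neg_neg]
    exact Summable.hasSum h2
  have h5 := (hasSum_nat_add_iff' 1).2 h4
  simp only [Finset.range_one, Finset.sum_singleton, LSeries.term_zero, sub_zero] at h5
  refine h5.congr_fun' fun n => ?_
  rw [LSeries.term_of_ne_zero (Nat.succ_ne_zero n), LSeries.logMul, Complex.cpow_neg, div_eq_mul_inv,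
    Complex.natCast_log]
  simp

lemma hasSum_zeta_shift (z : ℂ) (hs : 1 < z.re) :
    HasSum (fun n : ℕ => ((n + 1 : ℕ) : ℂ) ^ (-z)) (riemannZeta z) := by
  have h1 := zeta_eq_tsum_one_div_nat_add_one_cpow hs
  have h2 : Summable (fun n : ℕ => ((n + 1 : ℕ) : ℂ) ^ (-z)) := by
    have := (summable_nat_add_iff 1).2 (Complex.summable_one_div_nat_cpow.2 hs)
    simpa [Complex.cpow_neg] using this
  rw [h1]
  convert h2.hasSum using 3
  simp [Complex.cpow_neg]

lemma swap_sum (β : ℝ) (hβ : 1 < β) (w : ℂ) (hw : 1 < w.re) :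
    HasSum (fun n : ℕ => delangeH β (Real.log ((n + 1 : ℕ) : ℝ) / Real.log β) * ((n + 1 : ℕ) : ℂ) ^ (-w))
      (∑' k : ℤ, delangeCoeff β k *
        riemannZeta (w - ((2 * Real.pi / Real.log β) * k : ℝ) * Complex.I)) := by
  set τ : ℝ := 2 * Real.pi / Real.log β with hτd
  set c := delangeCoeff β
  let f : ℕ × ℤ → ℂ := fun p => c p.2 * ((p.1 + 1 : ℕ) : ℂ) ^ (-(w - (τ * p.2 : ℝ) * Complex.I))
  have hterm : ∀ (n : ℕ) (k : ℤ), c k * Complex.exp (2 * Real.pi * Complex.I * k *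
      ((Real.log ((n + 1 : ℕ) : ℝ) / Real.log β : ℝ) : ℂ)) * ((n + 1 : ℕ) : ℂ) ^ (-w) = f (n, k) := by
    intro n k
    have hn : ((n + 1 : ℕ) : ℂ) ≠ 0 := Nat.cast_ne_zero.2 (Nat.succ_ne_zero n)
    simp only [f]
    rw [mul_assoc, neg_sub, sub_eq_add_neg, Complex.cpow_add _ _ hn,
      Complex.cpow_def_of_ne_zero hn ((τ * k : ℝ) * Complex.I), ← Complex.natCast_log]
    congr 3
    rw [hτd]; push_cast; ring
  have hnorm : ∀ p : ℕ × ℤ, ‖f p‖ = ((p.1 : ℝ) + 1) ^ (-w.re) * ‖c p.2‖ := by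
    intro p
    simp only [f]
    have : ((p.1 + 1 : ℕ) : ℂ) = (((p.1 : ℝ) + 1 : ℝ) : ℂ) := by push_cast; rfl
    rw [norm_mul, this, Complex.norm_cpow_eq_rpow_re_of_pos (by positivity), mul_comm]
    simp
  have hsum : Summable f := by
    refine Summable.of_norm ?_
    refine ((summable_shift_rpow (a := -w.re) (by linarith)).mul_of_nonneg (delange_summable β hβ)
      (fun n => by positivity) (fun k => norm_nonneg _)).congr fun p => ?_
    exact (hnorm p).symm
  have h1 : ∀ n : ℕ, HasSum (fun k : ℤ => f (n, k))
      (delangeH β (Real.log ((n + 1 : ℕ) : ℝ) / Real.log β) * ((n + 1 : ℕ) : ℂ) ^ (-w)) := by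
    intro n
    have h2 : Summable (fun k : ℤ => f (n, k)) := hsum.prod_factor n
    have h3 := h2.hasSum
    have e : delangeH β (Real.log ((n + 1 : ℕ) : ℝ) / Real.log β) * ((n + 1 : ℕ) : ℂ) ^ (-w) =
        ∑' k : ℤ, f (n, k) := by
      rw [delangeH, ← tsum_mul_right]
      exact tsum_congr (hterm n)
    rw [e]
    exact h3
  have h4 := hsum.hasSum.prod_fiberwise h1
  have h5 : ∑' p, f p = ∑' k : ℤ, c k * riemannZeta (w - (τ * k : ℝ) * Complex.I) := by
    rw [hsum.tsum_prod, ← Summable.tsum_comm (f := fun (n : ℕ) (k : ℤ) => f (n, k)) hsum]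
    refine tsum_congr fun k => ?_
    simp only [f]
    rw [tsum_mul_left, (hasSum_zeta_shift _ _).tsum_eq]
    simpa using hw
  rw [← h5]
  exact h4


theorem Gbeta_meromorphic_continuation (β : ℝ) (hβ : 1 < β) :
    ∃ G : ℂ → ℂ,
      -- (i) analytic on Re(s) > 1 away from the points 2 + 2πik/log β
      (∀ s : ℂ, 1 < s.re →
        (∀ k : ℤ, s ≠ 2 + 2 * Real.pi * Complex.I * k / Real.log β) →
        DifferentiableAt ℂ G s) ∧
      -- (ii) agrees with the Dirichlet series for Re(s) > 2
      (∀ s : ℂ, 2 < s.re →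
        G s = ∑' n : ℕ, cumDigitSumInterp β (n + 1) * ((n + 1 : ℕ) : ℂ) ^ (-s)) ∧
      -- (iii) double pole at s = 2 with the stated Laurent expansion
      (Filter.Tendsto (fun s : ℂ => (s - 2) ^ 2 * G s) (𝓝[≠] (2 : ℂ))
        (𝓝 (((β : ℂ) - 1) / (2 * Real.log β))) ∧
       Filter.Tendsto
        (fun s : ℂ => ((s - 2) ^ 2 * G s - ((β : ℂ) - 1) / (2 * Real.log β)) / (s - 2))
        (𝓝[≠] (2 : ℂ))
        (𝓝 ((((β : ℂ) - 1) / (2 * Real.log β)) * (Real.log (2 * Real.pi) - 1)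
            - ((β : ℂ) + 1) / 4))) ∧
      -- (iv) simple poles at s = 2 + 2πik/log β, k ≠ 0, with residue c_β(k)
      (∀ k : ℤ, k ≠ 0 →
        Filter.Tendsto
          (fun s : ℂ => (s - (2 + 2 * Real.pi * Complex.I * k / Real.log β)) * G s)
          (𝓝[≠] (2 + 2 * Real.pi * Complex.I * k / Real.log β))
          (𝓝 (delangeCoeff β k))) := by
  have hL : 0 < Real.log β := Real.log_pos hβ
  have hLc : (Real.log β : ℂ) ≠ 0 := by exact_mod_cast hL.ne'
  set τ : ℝ := 2 * Real.pi / Real.log β with hτd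
  have hτ : 0 < τ := by have := Real.pi_pos; positivity
  set c := delangeCoeff β with hc
  set A : ℂ := ((β : ℂ) - 1) / (2 * Real.log β) with hAd
  have e1 : ∀ k : ℤ, (2 * Real.pi * Complex.I * k / Real.log β : ℂ) = ((τ * k : ℝ) : ℂ) * Complex.I := by
    intro k; rw [hτd]; push_cast; ring
  simp only [e1]
  have hcb := delange_bound β hβ
  -- splitting off the k-th term
  have hsplit : ∀ k : ℤ, ∃ H : ℂ → ℂ, ContinuousAt H (2 + (τ * k : ℝ) * Complex.I) ∧
      ∀ᶠ s in 𝓝 (2 + ((τ * k : ℝ) : ℂ) * Complex.I),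
        ∑' j : ℤ, c j * riemannZeta (s - 1 - (τ * j : ℝ) * Complex.I) =
          c k * riemannZeta (s - 1 - (τ * k : ℝ) * Complex.I) + H s := by
    intro k
    set a : ℤ → ℂ := Function.update c k 0 with ha
    obtain ⟨h1, h2⟩ := regular_part τ hτ a (fun ε h0 h1 => by
        obtain ⟨C, hC, h⟩ := hcb ε h0 h1
        refine ⟨C, hC, fun j => ?_⟩
        by_cases hj : j = k
        · subst hj; simp [ha]; positivity
        · simpa [ha, hj] using h j) (2 + (τ * k : ℝ) * Complex.I) (by simp)
      (fun j hj h0 => by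
        by_cases hjk : j = k
        · subst hjk; simp [ha] at hj
        · have := congrArg Complex.im h0
          simp [hτ.ne'] at this
          exact hjk this.symm)
    refine ⟨_, h1.continuousAt, ?_⟩
    filter_upwards [h2] with s hs
    have h3 : (fun j : ℤ => c j * riemannZeta (s - 1 - (τ * j : ℝ) * Complex.I)) =
        fun j => (Pi.single k (c k * riemannZeta (s - 1 - (τ * k : ℝ) * Complex.I)) : ℤ → ℂ) j +
          a j * riemannZeta (s - 1 - (τ * j : ℝ) * Complex.I) := by
      funext j
      by_cases hj : j = k
      · subst hj; simp [ha]
      · simp [ha, hj]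
    rw [h3]
    have h4 := hasSum_pi_single k (c k * riemannZeta (s - 1 - (τ * k : ℝ) * Complex.I))
    exact (h4.add hs.hasSum).tsum_eq
  refine ⟨fun s => -A * deriv riemannZeta (s - 1) +
    ∑' k : ℤ, c k * riemannZeta (s - 1 - (τ * k : ℝ) * Complex.I), ?_, ?_, ?_, ?_⟩
  · intro s hs hp
    have h1 := (regular_part τ hτ c hcb s hs (fun k _ => hp k)).1
    have hne : s - 1 ≠ 1 := by
      intro h0
      apply hp 0
      simp
      linear_combination h0
    have hd : DifferentiableAt ℂ (deriv riemannZeta) (s - 1) := by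
      have : AnalyticAt ℂ riemannZeta (s - 1) := by
        refine (differentiableOn_riemannZeta.analyticAt ?_)
        exact isOpen_compl_singleton.mem_nhds hne
      exact this.deriv.differentiableAt
    have h2 : DifferentiableAt ℂ (fun s => deriv riemannZeta (s - 1)) s :=
      hd.comp s (f := fun s => s - 1) (by fun_prop)
    exact (h2.const_mul (-A)).add h1
  · intro s hs
    have hw : 1 < (s - 1).re := by simp; linarith
    have h1 := (hasSum_log_zeta (s - 1) hw).mul_left A
    have h2 := swap_sum β hβ (s - 1) hw
    have h3 := (h1.add h2).tsum_eq
    rw [mul_neg, ← neg_mul] at h3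
    refine h3.symm.trans (tsum_congr fun n => ?_)
    have hn : ((n + 1 : ℕ) : ℂ) ≠ 0 := Nat.cast_ne_zero.2 (Nat.succ_ne_zero n)
    have h4 : ((n + 1 : ℕ) : ℂ) ^ (-(s - 1)) = ((n + 1 : ℕ) : ℂ) ^ (-s) * ((n + 1 : ℕ) : ℂ) := by
      rw [show -(s - 1) = -s + 1 by ring, Complex.cpow_add _ _ hn, Complex.cpow_one]
    rw [h4, cumDigitSumInterp]
    ring
  · obtain ⟨H, hH, hev⟩ := hsplit 0
    simp only [Int.cast_zero, mul_zero, Complex.ofReal_zero, zero_mul, add_zero, sub_zero] at hH hev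
    set R : ℂ → ℂ := fun s => -A * deriv riemannZeta₀ (s - 1) + c 0 * riemannZeta₀ (s - 1) + H s with hR
    have hRc : ContinuousAt R 2 := by
      have q1 : Continuous (deriv riemannZeta₀) :=
        (differentiable_riemannZeta₀.contDiff (n := 1)).continuous_deriv le_rfl
      have q2 : Continuous riemannZeta₀ := differentiable_riemannZeta₀.continuous
      have q3 : Continuous (fun s : ℂ => -A * deriv riemannZeta₀ (s - 1) + c 0 * riemannZeta₀ (s - 1)) := by
        fun_prop
      exact q3.continuousAt.add hH
    have hform : ∀ᶠ s in 𝓝[≠] (2 : ℂ), (s - 2) ^ 2 * (-A * deriv riemannZeta (s - 1) +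
        ∑' k : ℤ, c k * riemannZeta (s - 1 - (τ * k : ℝ) * Complex.I)) =
        A + (s - 2) * (c 0 + (s - 2) * R s) := by
      filter_upwards [hev.filter_mono nhdsWithin_le_nhds, self_mem_nhdsWithin] with s hs hne
      have hne' : s - 2 ≠ 0 := sub_ne_zero.2 hne
      have hs1 : s - 1 ≠ 1 := by intro h0; apply hne'; linear_combination h0
      rw [hs, deriv_riemannZeta_eq_neg_inv_sub_sq_add hs1, riemannZeta_eq_inv_sub_add hs1, hR]
      rw [show s - 1 - 1 = s - 2 by ring]
      field_simp
      ring
    have hc0 : c 0 = A * (Real.log (2 * Real.pi) - 1) - ((β : ℂ) + 1) / 4 := by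
      simp [hc, delangeCoeff, hAd]
    have hlim : Tendsto (fun s : ℂ => c 0 + (s - 2) * R s) (𝓝[≠] 2) (𝓝 (c 0)) := by
      have : ContinuousAt (fun s : ℂ => c 0 + (s - 2) * R s) 2 := by fun_prop
      have h2 := this.tendsto
      simp only [sub_self, zero_mul, add_zero] at h2
      exact h2.mono_left nhdsWithin_le_nhds
    constructor
    · refine Tendsto.congr' (hform.mono fun s hs => hs.symm) ?_
      have h1 : Tendsto (fun s : ℂ => s - 2) (𝓝[≠] 2) (𝓝 0) := by
        have : ContinuousAt (fun s : ℂ => s - 2) 2 := by fun_prop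
        have h2 := this.tendsto
        simp only [sub_self] at h2
        exact h2.mono_left nhdsWithin_le_nhds
      have h3 := (h1.mul hlim).const_add A
      simpa using h3
    · rw [← hc0]
      refine Tendsto.congr' ?_ hlim
      filter_upwards [hform, self_mem_nhdsWithin] with s hs hne
      have hne' : s - 2 ≠ 0 := sub_ne_zero.2 hne
      rw [hs]
      field_simp
      ring
  · intro k hk
    obtain ⟨H, hH, hev⟩ := hsplit k
    set p : ℂ := 2 + ((τ * k : ℝ) : ℂ) * Complex.I with hp
    have hp1 : p - 1 ≠ 1 := by
      intro h0
      have := congrArg Complex.im h0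
      simp [hp, hτ.ne', hk] at this
    set R : ℂ → ℂ := fun s => -A * deriv riemannZeta (s - 1) + H s with hR
    have hRc : ContinuousAt R p := by
      have hd : ContinuousAt (deriv riemannZeta) (p - 1) := by
        have : AnalyticAt ℂ riemannZeta (p - 1) := by
          refine (differentiableOn_riemannZeta.analyticAt ?_)
          exact isOpen_compl_singleton.mem_nhds hp1
        exact this.deriv.continuousAt
      have h2 : ContinuousAt (fun s => deriv riemannZeta (s - 1)) p :=
        ContinuousAt.comp (f := fun s => s - 1) hd (by fun_prop)
      exact (h2.const_mul (-A)).add hH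
    have hform : ∀ᶠ s in 𝓝[≠] p, c k * riemannZeta₁ (s - 1 - (τ * k : ℝ) * Complex.I) + (s - p) * R s =
        (s - p) * (-A * deriv riemannZeta (s - 1) +
        ∑' k : ℤ, c k * riemannZeta (s - 1 - (τ * k : ℝ) * Complex.I)) := by
      filter_upwards [hev.filter_mono nhdsWithin_le_nhds, self_mem_nhdsWithin] with s hs hne
      have hne' : s - p ≠ 0 := sub_ne_zero.2 hne
      have hs1 : s - 1 - (τ * k : ℝ) * Complex.I ≠ 1 := by
        intro h0; apply hne'; rw [hp]; linear_combination h0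
      rw [hs, zeta1_eq_mul _ hs1, hR]
      rw [show s - 1 - (τ * k : ℝ) * Complex.I - 1 = s - p by rw [hp]; ring]
      ring
    refine Tendsto.congr' hform ?_
    have q2 : Continuous riemannZeta₁ := differentiable_riemannZeta₁.continuous
    have : ContinuousAt (fun s : ℂ => c k * riemannZeta₁ (s - 1 - (τ * k : ℝ) * Complex.I) +
        (s - p) * R s) p := by fun_prop
    have h2 := this.tendsto
    have e3 : p - 1 - (τ * k : ℝ) * Complex.I = 1 := by rw [hp]; ring
    simp only [sub_self, zero_mul, add_zero, e3, riemannZeta₁_one, mul_one] at h2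
    exact h2.mono_left nhdsWithin_le_nhds
end
end

section
/- Let β > 1 be real. There exists a function F : ℂ → ℂ such that: (i) F is analytic (complex differentiable) at every point s with Re(s) > 0 other than the points 1 + 2πik/log β, k ∈ ℤ; (ii) F(s) = ∑_{n=1}^∞ d_β(n) n^{-s} for every s with Re(s) > 1; (iii) (s-1)² F(s) → (β-1)/(2 log β) as s → 1 (s ≠ 1), and ((s-1)² F(s) - (β-1)/(2 log β))/(s-1) → ((β-1)/(2 log β)) log(2π) - (β+1)/4 as s → 1; (iv) for every nonzero k ∈ ℤ, with p = 1 + 2πik/log β, (s - p) F(s) → (1 + 2πik/log β) · c_β(k) = -((β-1)/(2πik)) ζ(2πik/log β) as s → p (s ≠ p). -/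
open Filter Topology

noncomputable section

/-- The interpolated sum-of-digits function `d_β(n) = S_β(n+1) - S_β(n)`. -/
def digitSumInterp (β : ℝ) (n : ℕ) : ℂ :=
  cumDigitSumInterp β (n + 1) - cumDigitSumInterp β n

section PartA

open MeasureTheory Set in
/-- Truncated Mellin-type transform `∫_1^∞ f(x) x^{-s-1} dx`. -/
def tMel (f : ℝ → ℂ) (s : ℂ) : ℂ := ∫ x in Set.Ioi (1 : ℝ), f x * (x : ℂ) ^ (-(s + 1))

open MeasureTheory Set in
lemma tMel_eq_mellin (f : ℝ → ℂ) (s : ℂ) :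
    tMel f s = mellin ((Ioi (1:ℝ)).indicator f) (-s) := by
  unfold tMel mellin
  have : ∀ t : ℝ, (t:ℂ) ^ (-s - 1) • (Ioi (1:ℝ)).indicator f t
      = (Ioi (1:ℝ)).indicator (fun x => f x * (x : ℂ) ^ (-(s + 1))) t := by
    intro t
    by_cases ht : t ∈ Ioi (1:ℝ)
    · simp only [indicator_of_mem ht, smul_eq_mul]
      rw [mul_comm]; congr 2; ring
    · simp [indicator_of_notMem ht]
  simp_rw [this]
  rw [setIntegral_indicator measurableSet_Ioi]
  congr 2
  ext x; simp only [mem_inter_iff, mem_Ioi]; constructor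
  · intro h; exact ⟨by linarith, h⟩
  · intro h; exact h.2

open MeasureTheory Set in
lemma tMel_aux {f : ℝ → ℂ} (hf : Measurable f) {C r : ℝ} (hC : ∀ x : ℝ, 1 < x → ‖f x‖ ≤ C * x ^ r) :
    LocallyIntegrableOn ((Ioi (1:ℝ)).indicator f) (Ioi 0) ∧
    ((Ioi (1:ℝ)).indicator f) =O[atTop] (fun x : ℝ => x ^ (- (-r))) ∧
    ∀ b : ℝ, ((Ioi (1:ℝ)).indicator f) =O[𝓝[>] 0] (fun x : ℝ => x ^ (- b)) := by
  refine ⟨?_, ?_, ?_⟩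
  · have hg : LocallyIntegrableOn (fun x : ℝ => C * x ^ r) (Ioi 0) := by
      apply ContinuousOn.locallyIntegrableOn _ measurableSet_Ioi
      exact continuousOn_const.mul (fun x hx => (Real.continuousAt_rpow_const x r (Or.inl (ne_of_gt hx))).continuousWithinAt)
    intro x hx
    obtain ⟨t, ht, h⟩ := hg x hx
    refine ⟨t ∩ Ioi 0, inter_mem ht self_mem_nhdsWithin, ?_⟩
    have h' := h.mono_set (inter_subset_left (t := Ioi (0:ℝ)))
    refine h'.norm.mono' ((hf.indicator measurableSet_Ioi).aestronglyMeasurable) ?_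
    refine Eventually.of_forall fun y => ?_
    by_cases hy : y ∈ Ioi (1:ℝ)
    · rw [indicator_of_mem hy]
      exact (hC y hy).trans (le_abs_self _)
    · rw [indicator_of_notMem hy, norm_zero]; exact norm_nonneg _
  · rw [neg_neg]
    refine Asymptotics.IsBigO.of_bound C ?_
    filter_upwards [eventually_gt_atTop 1] with x hx
    rw [indicator_of_mem (show x ∈ Ioi 1 from hx), Real.norm_of_nonneg (by positivity)]
    exact hC x hx
  · intro b
    refine (Asymptotics.isBigO_zero _ _).congr' ?_ EventuallyEq.rfl
    filter_upwards [mem_nhdsWithin_of_mem_nhds (Iio_mem_nhds (show (0:ℝ) < 1 by norm_num))] with x hx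
    rw [indicator_of_notMem]
    simp only [mem_Ioi, mem_Iio] at *; linarith

open MeasureTheory Set in
lemma tMel_integrable {f : ℝ → ℂ} (hf : Measurable f) {C r : ℝ} (hC : ∀ x : ℝ, 1 < x → ‖f x‖ ≤ C * x ^ r)
    {s : ℂ} (hs : r < s.re) : IntegrableOn (fun x : ℝ => f x * (x : ℂ) ^ (-(s + 1))) (Ioi 1) := by
  obtain ⟨h1, h2, h3⟩ := tMel_aux hf hC
  have h := mellinConvergent_of_isBigO_rpow (s := -s) h1 h2 (by simp; linarith) (h3 ((-s).re - 1)) (by linarith)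
  unfold MellinConvergent at h
  refine (h.mono_set (Ioi_subset_Ioi zero_le_one)).congr_fun ?_ measurableSet_Ioi
  intro t ht
  simp only [indicator_of_mem ht, smul_eq_mul]
  rw [mul_comm]; congr 2; ring

lemma tMel_differentiableAt {f : ℝ → ℂ} (hf : Measurable f) {C r : ℝ}
    (hC : ∀ x : ℝ, 1 < x → ‖f x‖ ≤ C * x ^ r) {s : ℂ} (hs : r < s.re) :
    DifferentiableAt ℂ (tMel f) s := by
  obtain ⟨h1, h2, h3⟩ := tMel_aux hf hC
  have h := mellin_differentiableAt_of_isBigO_rpow (s := -s) h1 h2 (by simp; linarith) (h3 ((-s).re - 1)) (by linarith)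
  have e : tMel f = (mellin ((Set.Ioi (1:ℝ)).indicator f)) ∘ (fun s => -s) := by
    ext s; exact tMel_eq_mellin f s
  rw [e]
  exact DifferentiableAt.comp s h (differentiableAt_id.neg)

/-! ## The periodic Bernoulli-type function -/

/-- `ψ₁(x) = ({x}² - {x})/2`. -/
def psiOne (x : ℝ) : ℝ := (Int.fract x ^ 2 - Int.fract x) / 2

lemma psiOne_bound (x : ℝ) : |psiOne x| ≤ 1 / 8 := by
  unfold psiOne
  have h0 := Int.fract_nonneg x
  have h1 := (Int.fract_lt_one x).le
  rw [abs_le]; constructor <;> nlinarith [sq_nonneg (Int.fract x - 1/2)]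

lemma psiOne_add_int (x : ℝ) (n : ℤ) : psiOne (x + n) = psiOne x := by
  simp [psiOne]

lemma psiOne_of_mem {x : ℝ} (h0 : 0 ≤ x) (h1 : x ≤ 1) : psiOne x = (x ^ 2 - x) / 2 := by
  rcases h1.lt_or_eq with h | h
  · rw [psiOne, Int.fract_eq_self.2 ⟨h0, h⟩]
  · subst h; simp [psiOne]

lemma psiOne_lip_aux {x y : ℝ} (hxy : x ≤ y) : |psiOne x - psiOne y| ≤ |x - y| := by
  by_cases h : 1 ≤ y - x
  · have := abs_sub (psiOne x) (psiOne y)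
    have h1 := psiOne_bound x
    have h2 := psiOne_bound y
    have h3 : y - x ≤ |x - y| := by rw [abs_sub_comm]; exact le_abs_self _
    linarith
  push Not at h
  have hx : psiOne x = psiOne (Int.fract x) := by
    rw [← psiOne_add_int (Int.fract x) ⌊x⌋, Int.fract_add_floor]
  have hy : psiOne y = psiOne (y - ⌊x⌋) := by
    rw [← psiOne_add_int (y - ⌊x⌋) ⌊x⌋]; simp
  have hf0 := Int.fract_nonneg x
  have hf1 := (Int.fract_lt_one x).le
  have hfe : Int.fract x = x - ⌊x⌋ := rfl
  set u := Int.fract x with hu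
  set v := y - ⌊x⌋ with hv
  have e : x - y = u - v := by rw [hv, hfe]; ring
  have huv : u ≤ v := by linarith
  rw [hx, hy, e, psiOne_of_mem hf0 hf1, abs_of_nonpos (show u - v ≤ 0 by linarith)]
  by_cases hv1 : v ≤ 1
  · rw [psiOne_of_mem (by linarith) hv1, abs_le]
    constructor <;> nlinarith
  · push Not at hv1
    have : psiOne v = psiOne (v - 1) := by
      have := psiOne_add_int (v - 1) 1
      simpa using this
    rw [this, psiOne_of_mem (by linarith) (by linarith), abs_le]
    constructor <;> nlinarith

lemma psiOne_lip (x y : ℝ) : |psiOne x - psiOne y| ≤ |x - y| := by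
  rcases le_total x y with h | h
  · exact psiOne_lip_aux h
  · rw [abs_sub_comm, abs_sub_comm x y]; exact psiOne_lip_aux h

lemma psiOne_continuous : Continuous psiOne := by
  have : LipschitzWith 1 psiOne := LipschitzWith.of_dist_le_mul (fun x y => by
    simpa [Real.dist_eq] using psiOne_lip x y)
  exact this.continuous

lemma psiOne_hasDeriv (x : ℝ) :
    HasDerivWithinAt psiOne (Int.fract x - 1 / 2) (Set.Ioi x) x := by
  have h1 : HasDerivAt (fun y : ℝ => ((y - ⌊x⌋) ^ 2 - (y - ⌊x⌋)) / 2) (Int.fract x - 1/2) x := by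
    have : HasDerivAt (fun y : ℝ => y - ⌊x⌋) 1 x := (hasDerivAt_id x).sub_const _
    refine (((this.pow 2).sub this).div_const 2).congr_deriv ?_
    simp only [← Int.self_sub_floor]; push_cast; ring
  refine h1.hasDerivWithinAt.congr_of_eventuallyEq ?_ ?_
  · have : Set.Ioo x (⌊x⌋ + 1) ∈ 𝓝[>] x := Ioo_mem_nhdsGT (Int.lt_floor_add_one x)
    filter_upwards [this] with y hy
    have : ⌊y⌋ = ⌊x⌋ := by
      rw [Int.floor_eq_iff]
      exact ⟨(Int.floor_le x).trans hy.1.le, hy.2⟩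
    simp only [psiOne, ← Int.self_sub_floor, this]
  · simp only [psiOne, ← Int.self_sub_floor]

end PartA

section PartB

open MeasureTheory Set in
lemma tMel_fract (s : ℂ) (hs : 0 < s.re) :
    tMel (fun x => ((Int.fract x - 1 / 2 : ℝ) : ℂ)) s = (s + 1) * tMel (fun x => (psiOne x : ℂ)) (s + 1) := by
  set g : ℝ → ℂ := fun x => ((Int.fract x - 1 / 2 : ℝ) : ℂ) * (x:ℂ) ^ (-(s+1)) with hg
  set k : ℝ → ℂ := fun x => (psiOne x : ℂ) * (x:ℂ) ^ (-(s+1+1)) with hk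
  have hgi : IntegrableOn g (Ioi 1) := by
    refine tMel_integrable (f := fun x => ((Int.fract x - 1 / 2 : ℝ) : ℂ)) (C := 1) (r := 0) ?_ ?_ hs
    · exact Complex.measurable_ofReal.comp (measurable_fract.sub_const _)
    · intro x hx
      rw [Complex.norm_real, Real.rpow_zero, Real.norm_eq_abs, abs_le]
      have h0 := Int.fract_nonneg x
      have h1 := (Int.fract_lt_one x).le
      constructor <;> linarith
  have hki : IntegrableOn k (Ioi 1) := by
    refine tMel_integrable (f := fun x => (psiOne x : ℂ)) (C := 1) (r := 0) ?_ ?_ (by simp; linarith)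
    · exact (Complex.continuous_ofReal.comp psiOne_continuous).measurable
    · intro x hx
      rw [Complex.norm_real, Real.rpow_zero, Real.norm_eq_abs]
      linarith [psiOne_bound x]
  have hint : IntegrableOn (fun x => g x - (s+1) * k x) (Ioi 1) := hgi.sub (hki.const_mul _)
  have key : ∫ x in Ioi (1:ℝ), (g x - (s+1) * k x) = 0 := by
    have h1 := intervalIntegral_tendsto_integral_Ioi (1:ℝ) hint tendsto_id
    have h2 : Tendsto (fun N : ℝ => (psiOne N : ℂ) * (N:ℂ) ^ (-(s+1))) atTop (𝓝 0) := by
      rw [tendsto_zero_iff_norm_tendsto_zero]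
      have h3 : Tendsto (fun N : ℝ => N ^ (-(s.re+1))) atTop (𝓝 0) := tendsto_rpow_neg_atTop (by linarith)
      refine squeeze_zero' (Eventually.of_forall fun _ => norm_nonneg _) ?_ h3
      filter_upwards [eventually_gt_atTop 0] with N hN
      rw [norm_mul, Complex.norm_cpow_eq_rpow_re_of_pos hN, Complex.norm_real, Real.norm_eq_abs]
      have : (-(s+1)).re = -(s.re+1) := by simp
      rw [this]
      have h4 := psiOne_bound N
      have h5 : 0 ≤ N ^ (-(s.re+1)) := by positivity
      nlinarith
    refine tendsto_nhds_unique h1 (h2.congr' ?_)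
    filter_upwards [eventually_ge_atTop 1] with N hN
    have := intervalIntegral.integral_eq_sub_of_hasDeriv_right (a := 1) (b := N)
      (f := fun N : ℝ => (psiOne N : ℂ) * (N:ℂ) ^ (-(s+1))) (f' := fun x => g x - (s+1) * k x) ?_ ?_ ?_
    · simp only [id]; rw [this]
      simp [psiOne]
    · rw [uIcc_of_le hN]
      refine (Complex.continuous_ofReal.comp psiOne_continuous).continuousOn.mul ?_
      intro x hx
      exact (Complex.continuousAt_ofReal_cpow_const _ _ (Or.inr (by linarith [hx.1]))).continuousWithinAt
    · intro x hx
      rw [min_eq_left hN, max_eq_right hN] at hx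
      have hx0 : x ≠ 0 := by linarith [hx.1]
      have d1 := (psiOne_hasDeriv x).ofReal_comp
      have hsne : -(s+1) ≠ 0 := by
        intro h
        have := congrArg Complex.re h
        simp at this; linarith
      have d3 := (hasDerivAt_ofReal_cpow_const hx0 (r := -(s+1)) hsne).hasDerivWithinAt (s := Ioi x)
      refine (d1.mul d3).congr_deriv ?_
      simp only [hg, hk]
      rw [show -(s+1+1) = -(s+1)-1 by ring]
      push_cast; ring
    · rw [intervalIntegrable_iff_integrableOn_Ioc_of_le hN]
      exact hint.mono_set Ioc_subset_Ioi_self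
  rw [integral_sub hgi (hki.const_mul _), integral_const_mul] at key
  unfold tMel
  linear_combination key

open MeasureTheory Set in
lemma zeta_eq_of_one_lt (s : ℂ) (hs : 1 < s.re) :
    riemannZeta s = s / (s - 1) - 1 / 2 - s * (s + 1) * tMel (fun x => (psiOne x : ℂ)) (s + 1) := by
  have hs1 : s - 1 ≠ 0 := by
    intro h; have := congrArg Complex.re h; simp at this; linarith
  have hs0 : s ≠ 0 := by
    intro h; have := congrArg Complex.re h; simp at this; linarith
  have h1 := LSeries_eq_mul_integral' 1 (r := 1) zero_le_one hs (by
    simpa using Asymptotics.isBigO_refl _ _)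
  rw [LSeries_one_eq_riemannZeta hs] at h1
  rw [h1, mul_assoc s, ← tMel_fract s (by linarith)]
  have i1 : IntegrableOn (fun x : ℝ => (x:ℂ) * (x:ℂ) ^ (-(s + 1))) (Ioi 1) := by
    refine tMel_integrable (f := fun x => (x:ℂ)) (C := 1) (r := 1) Complex.measurable_ofReal ?_ hs
    intro x hx; simp [abs_of_pos (zero_lt_one.trans hx)]
  have i2 : IntegrableOn (fun x : ℝ => (1/2:ℂ) * (x:ℂ) ^ (-(s + 1))) (Ioi 1) := by
    refine tMel_integrable (f := fun x => (1/2:ℂ)) (C := 1) (r := 0) measurable_const ?_ (by linarith)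
    intro x hx; simp; norm_num
  have i3 : IntegrableOn (fun x : ℝ => ((Int.fract x - 1 / 2 : ℝ) : ℂ) * (x:ℂ) ^ (-(s+1))) (Ioi 1) := by
    refine tMel_integrable (f := fun x => ((Int.fract x - 1 / 2 : ℝ) : ℂ)) (C := 1) (r := 0) ?_ ?_ (by linarith)
    · exact Complex.measurable_ofReal.comp (measurable_fract.sub_const _)
    · intro x hx
      rw [Complex.norm_real, Real.rpow_zero, Real.norm_eq_abs, abs_le]
      have h0 := Int.fract_nonneg x
      have h1 := (Int.fract_lt_one x).le
      constructor <;> linarith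
  have e : ∫ t in Ioi (1:ℝ), (∑ k ∈ Finset.Icc 1 ⌊t⌋₊, (1 : ℕ → ℂ) k) * (t:ℂ) ^ (-(s + 1))
      = ∫ t in Ioi (1:ℝ), ((t:ℂ) * (t:ℂ) ^ (-(s + 1)) - (1/2:ℂ) * (t:ℂ) ^ (-(s + 1))
        - ((Int.fract t - 1 / 2 : ℝ) : ℂ) * (t:ℂ) ^ (-(s+1))) := by
    refine setIntegral_congr_fun measurableSet_Ioi fun t ht => ?_
    have ht0 : (0:ℝ) ≤ t := zero_le_one.trans (le_of_lt ht)
    have : ((⌊t⌋₊ : ℝ)) = t - Int.fract t := by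
      rw [Int.self_sub_fract]; exact natCast_floor_eq_intCast_floor ht0
    have h2 : ((⌊t⌋₊ : ℂ)) = (t:ℂ) - (Int.fract t : ℝ) := by
      rw [← Complex.ofReal_sub, ← this]; simp
    simp only [Pi.one_apply, Finset.sum_const, Nat.card_Icc, Nat.add_sub_cancel, nsmul_eq_mul, mul_one]
    rw [h2]; push_cast; ring
  have i12 : IntegrableOn (fun x : ℝ => (x:ℂ) * (x:ℂ) ^ (-(s + 1)) - (1/2:ℂ) * (x:ℂ) ^ (-(s + 1))) (Ioi 1) := i1.sub i2
  rw [e, integral_sub i12 i3, integral_sub i1 i2]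
  have e1 : ∫ t in Ioi (1:ℝ), (t:ℂ) * (t:ℂ) ^ (-(s + 1)) = 1 / (s - 1) := by
    have : ∫ t in Ioi (1:ℝ), (t:ℂ) * (t:ℂ) ^ (-(s + 1)) = ∫ t in Ioi (1:ℝ), (t:ℂ) ^ (-s) := by
      refine setIntegral_congr_fun measurableSet_Ioi fun t ht => ?_
      have ht0 : (t:ℂ) ≠ 0 := by
        exact_mod_cast (zero_lt_one.trans ht).ne'
      rw [show -s = 1 + -(s+1) by ring, Complex.cpow_add _ _ ht0, Complex.cpow_one]
    rw [this, integral_Ioi_cpow_of_lt (by simpa using hs) zero_lt_one]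
    have : -s + 1 ≠ 0 := by intro h; apply hs1; linear_combination -h
    simp; field_simp; ring
  have e2 : ∫ t in Ioi (1:ℝ), (1/2:ℂ) * (t:ℂ) ^ (-(s + 1)) = 1 / (2 * s) := by
    rw [integral_const_mul, integral_Ioi_cpow_of_lt (by simp; linarith) zero_lt_one]
    simp; field_simp
  rw [e1, e2]
  unfold tMel
  field_simp
  ring

open MeasureTheory Set in
/-- The formula for `ζ` on `Re s > -1`, off the real axis. -/
lemma zeta_eq (s : ℂ) (hs : -1 < s.re) (him : s.im ≠ 0) :
    riemannZeta s = s / (s - 1) - 1 / 2 - s * (s + 1) * tMel (fun x => (psiOne x : ℂ)) (s + 1) := by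
  set c : ℝ := s.im with hc
  set U : Set ℂ := {z | -1 < z.re ∧ 0 < c * z.im} with hU
  have hUo : IsOpen U := by
    apply IsOpen.inter
    · exact isOpen_lt continuous_const Complex.continuous_re
    · exact isOpen_lt continuous_const (continuous_const.mul Complex.continuous_im)
  have hUc : Convex ℝ U := by
    have h1 : Convex ℝ {z : ℂ | -1 < z.re} := convex_halfSpace_re_gt _
    have h2 : Convex ℝ {z : ℂ | 0 < c * z.im} := by
      have := convex_halfSpace_gt (𝕜 := ℝ) (f := fun z : ℂ => c * z.im)
        ⟨fun x y => by simp; ring, fun a x => by simp; ring⟩ 0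
      exact this
    exact h1.inter h2
  have hc0 : 0 < c * s.im := by
    rw [hc]; exact mul_self_pos.2 him
  have hsU : s ∈ U := ⟨hs, hc0⟩
  have hne : ∀ z ∈ U, z ≠ 1 := by
    rintro z ⟨-, hz⟩ rfl; simp at hz
  have hd1 : DifferentiableOn ℂ riemannZeta U := fun z hz =>
    (differentiableAt_riemannZeta (hne z hz)).differentiableWithinAt
  have hd2 : DifferentiableOn ℂ (fun s => s / (s - 1) - 1 / 2 - s * (s + 1) * tMel (fun x => (psiOne x : ℂ)) (s + 1)) U := by
    intro z hz
    refine DifferentiableAt.differentiableWithinAt ?_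
    have hT : DifferentiableAt ℂ (fun s => tMel (fun x => (psiOne x : ℂ)) (s + 1)) z := by
      have : DifferentiableAt ℂ (tMel (fun x => (psiOne x : ℂ))) (z + 1) := by
        refine tMel_differentiableAt (C := 1) (r := 0) ?_ ?_ (by simp; linarith [hz.1])
        · exact (Complex.continuous_ofReal.comp psiOne_continuous).measurable
        · intro x hx
          rw [Complex.norm_real, Real.rpow_zero, Real.norm_eq_abs]
          linarith [psiOne_bound x]
      exact DifferentiableAt.comp (g := tMel (fun x => (psiOne x : ℂ))) (f := fun s => s + 1) z this (differentiableAt_id.add_const _)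
    have : z - 1 ≠ 0 := sub_ne_zero.2 (hne z hz)
    fun_prop (disch := assumption)
  set z0 : ℂ := ⟨2, s.im⟩ with hz0
  have hz0U : z0 ∈ U := ⟨by norm_num [hz0], hc0⟩
  refine (hd1.analyticOnNhd hUo).eqOn_of_preconnected_of_eventuallyEq (hd2.analyticOnNhd hUo)
    hUc.isPreconnected hz0U ?_ hsU
  have : {z : ℂ | 1 < z.re} ∈ 𝓝 z0 :=
    (isOpen_lt continuous_const Complex.continuous_re).mem_nhds (by norm_num [hz0])
  filter_upwards [this] with z hz
  exact zeta_eq_of_one_lt z hz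

end PartB

section PartC

/-- Takagi-type function `T(x) = ∑ β^{-r} ψ₁(β^r x)`. -/
def takT (β x : ℝ) : ℝ := ∑' r : ℕ, (β⁻¹) ^ r * psiOne (β ^ r * x)

lemma takT_summable {β : ℝ} (hβ : 1 < β) (x : ℝ) :
    Summable (fun r : ℕ => (β⁻¹) ^ r * psiOne (β ^ r * x)) := by
  have h0 : 0 ≤ β⁻¹ := by positivity
  have h1 : β⁻¹ < 1 := inv_lt_one_of_one_lt₀ hβ
  refine Summable.of_norm_bounded (summable_geometric_of_lt_one h0 h1) fun r => ?_
  rw [norm_mul, Real.norm_eq_abs, Real.norm_eq_abs, abs_of_nonneg (by positivity)]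
  have := psiOne_bound (β ^ r * x)
  have h2 : 0 ≤ (β⁻¹) ^ r := by positivity
  nlinarith

lemma takT_bound {β : ℝ} (hβ : 1 < β) : ∃ B : ℝ, 0 ≤ B ∧ ∀ x, |takT β x| ≤ B := by
  have h0 : 0 ≤ β⁻¹ := by positivity
  have h1 : β⁻¹ < 1 := inv_lt_one_of_one_lt₀ hβ
  refine ⟨∑' r : ℕ, (β⁻¹) ^ r, tsum_nonneg fun r => by positivity, fun x => ?_⟩
  rw [← Real.norm_eq_abs]
  refine tsum_of_norm_bounded (summable_geometric_of_lt_one h0 h1).hasSum fun r => ?_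
  rw [norm_mul, Real.norm_eq_abs, Real.norm_eq_abs, abs_of_nonneg (by positivity)]
  have := psiOne_bound (β ^ r * x)
  have h2 : 0 ≤ (β⁻¹) ^ r := by positivity
  nlinarith

lemma takT_scale {β : ℝ} (hβ : 1 < β) (x : ℝ) : takT β (β * x) = β * (takT β x - psiOne x) := by
  have hb : β ≠ 0 := by positivity
  have h := (takT_summable hβ x).tsum_eq_zero_add
  have h2 : takT β (β * x) = β * ∑' r : ℕ, (β⁻¹) ^ (r+1) * psiOne (β ^ (r+1) * x) := by
    rw [takT, ← tsum_mul_left]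
    congr 1; ext r
    rw [show β ^ (r+1) * x = β ^ r * (β * x) by ring, pow_succ]
    field_simp
  rw [h2, takT, h]
  simp

lemma takT_holder {β : ℝ} (hβ : 1 < β) {α : ℝ} (h0 : 0 < α) (h1 : α < 1) :
    ∃ C : ℝ, 0 ≤ C ∧ ∀ x y, |takT β x - takT β y| ≤ C * |x - y| ^ α := by
  have hb0 : 0 < β⁻¹ := by positivity
  have hb1 : β⁻¹ < 1 := inv_lt_one_of_one_lt₀ hβ
  set q : ℝ := (β⁻¹) ^ (1 - α) with hq
  have hq0 : 0 ≤ q := by positivity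
  have hq1 : q < 1 := Real.rpow_lt_one hb0.le hb1 (by linarith)
  refine ⟨∑' r : ℕ, q ^ r, tsum_nonneg fun r => by positivity, fun x y => ?_⟩
  rw [takT, takT, ← (takT_summable hβ x).tsum_sub (takT_summable hβ y), ← Real.norm_eq_abs]
  refine tsum_of_norm_bounded ((summable_geometric_of_lt_one hq0 hq1).hasSum.mul_right _) fun r => ?_
  set t : ℝ := (β⁻¹) ^ r * psiOne (β ^ r * x) - (β⁻¹) ^ r * psiOne (β ^ r * y) with ht
  have hr0 : 0 < (β⁻¹) ^ r := by positivity
  have e : t = (β⁻¹) ^ r * (psiOne (β ^ r * x) - psiOne (β ^ r * y)) := by rw [ht]; ring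
  have b1 : |t| ≤ (β⁻¹) ^ r := by
    rw [e, abs_mul, abs_of_pos hr0]
    have := abs_sub (psiOne (β ^ r * x)) (psiOne (β ^ r * y))
    have h1 := psiOne_bound (β ^ r * x)
    have h2 := psiOne_bound (β ^ r * y)
    nlinarith
  have b2 : |t| ≤ |x - y| := by
    rw [e, abs_mul, abs_of_pos hr0]
    have := psiOne_lip (β ^ r * x) (β ^ r * y)
    rw [← mul_sub, abs_mul, abs_of_pos (show 0 < β ^ r by positivity)] at this
    calc _ ≤ (β⁻¹) ^ r * (β ^ r * |x - y|) := by gcongr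
      _ = |x - y| := by rw [inv_pow]; field_simp
  rw [Real.norm_eq_abs]
  have : |t| = |t| ^ (1 - α) * |t| ^ α := by
    rcases eq_or_ne |t| 0 with h | h
    · rw [h, Real.zero_rpow h0.ne']; simp
    · rw [← Real.rpow_add (lt_of_le_of_ne (abs_nonneg _) (Ne.symm h))]; simp
  rw [this]
  have e2 : q ^ r = ((β⁻¹) ^ r) ^ (1 - α) := by
    rw [hq, ← Real.rpow_natCast, ← Real.rpow_natCast, ← Real.rpow_mul hb0.le, ← Real.rpow_mul hb0.le, mul_comm]
  rw [e2]
  have h3 : 0 ≤ 1 - α := by linarith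
  gcongr

lemma takT_continuous {β : ℝ} (hβ : 1 < β) : Continuous (takT β) := by
  obtain ⟨C, hC0, hC⟩ := takT_holder hβ (α := 1/2) (by norm_num) (by norm_num)
  rw [continuous_iff_continuousAt]
  intro x
  rw [ContinuousAt, tendsto_iff_dist_tendsto_zero]
  have h1 : Tendsto (fun y => C * |y - x| ^ (1/2:ℝ)) (𝓝 x) (𝓝 0) := by
    have : ContinuousAt (fun y : ℝ => C * |y - x| ^ (1/2:ℝ)) x := by
      apply ContinuousAt.mul continuousAt_const
      exact ContinuousAt.rpow_const (by fun_prop) (Or.inr (by norm_num))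
    have h := this.tendsto
    simpa using h
  exact squeeze_zero (fun _ => dist_nonneg) (fun y => by rw [Real.dist_eq]; exact hC y x) h1

/-- The profile of the periodic function on `[0,1]`. -/
def prof (β u : ℝ) : ℝ :=
  (β - 1) * (takT β (β ^ u) / β ^ u + β ^ u / (2 * (β - 1)) - u / 2)

lemma prof_zero_one {β : ℝ} (hβ : 1 < β) : prof β 0 = prof β 1 := by
  unfold prof
  have h := takT_scale hβ 1
  have h1 : psiOne 1 = 0 := by simp [psiOne]
  rw [h1, mul_one] at h
  have hb : β ≠ 0 := by positivity
  have hb1 : β - 1 ≠ 0 := by linarith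
  rw [Real.rpow_zero, Real.rpow_one, h]
  field_simp
  ring

lemma rpow_lip {β : ℝ} (hβ : 1 < β) {u v : ℝ} (hu : u ∈ Set.Icc (0:ℝ) 1) (hv : v ∈ Set.Icc (0:ℝ) 1) :
    |β ^ u - β ^ v| ≤ (β * Real.log β) * |u - v| := by
  have hL := Real.log_pos hβ
  have := Convex.norm_image_sub_le_of_norm_hasDerivWithin_le (f := fun u : ℝ => β ^ u)
    (f' := fun u => Real.log β * β ^ u) (s := Set.Icc 0 1) (C := β * Real.log β) (x := v) (y := u)
    (fun x _ => by
      have := (Real.hasStrictDerivAt_const_rpow (show 0 < β by positivity) x).hasDerivAt.hasDerivWithinAt (s := Set.Icc 0 1)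
      rwa [mul_comm] at this) 
    (fun x hx => by
      rw [norm_mul, Real.norm_of_nonneg hL.le, Real.norm_of_nonneg (by positivity), mul_comm]
      have : β ^ x ≤ β ^ (1:ℝ) := Real.rpow_le_rpow_of_exponent_le hβ.le hx.2
      rw [Real.rpow_one] at this
      gcongr) (convex_Icc 0 1) hv hu
  simpa [Real.norm_eq_abs] using this

lemma prof_holder {β : ℝ} (hβ : 1 < β) {α : ℝ} (h0 : 0 < α) (h1 : α < 1) :
    ∃ C : ℝ, 0 ≤ C ∧ ∀ u ∈ Set.Icc (0:ℝ) 1, ∀ v ∈ Set.Icc (0:ℝ) 1,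
      |prof β u - prof β v| ≤ C * |u - v| ^ α := by
  obtain ⟨A, hA0, hA⟩ := takT_holder hβ h0 h1
  obtain ⟨B, hB0, hB⟩ := takT_bound hβ
  have hL := Real.log_pos hβ
  have hb1 : 0 < β - 1 := by linarith
  set K := β * Real.log β with hK
  have hK0 : 0 ≤ K := by positivity
  refine ⟨(β - 1) * ((B * K + A * K ^ α) + K / (2 * (β - 1)) + 1 / 2), by positivity, ?_⟩
  intro u hu v hv
  have hlip := rpow_lip hβ hu hv
  have hx1 : 1 ≤ β ^ u := Real.one_le_rpow hβ.le hu.1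
  have hy1 : 1 ≤ β ^ v := Real.one_le_rpow hβ.le hv.1
  unfold prof
  set x := β ^ u
  set y := β ^ v
  set d := |u - v| with hd
  have hd0 : 0 ≤ d := abs_nonneg _
  have hd1 : d ≤ 1 := by
    rw [hd, abs_le]; constructor <;> linarith [hu.1, hu.2, hv.1, hv.2]
  have hdα : d ≤ d ^ α := by
    rcases hd0.eq_or_lt with h | h
    · rw [← h]; positivity
    · simpa using Real.rpow_le_rpow_of_exponent_ge h hd1 h1.le
  have p1 : |takT β x / x - takT β y / y| ≤ (B * K + A * K ^ α) * d ^ α := by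
    have e : takT β x / x - takT β y / y = takT β x * (y - x) / (x * y) + (takT β x - takT β y) / y := by
      field_simp; ring
    rw [e]
    have q1 : |takT β x * (y - x) / (x * y)| ≤ B * K * d ^ α := by
      rw [abs_div, abs_mul, abs_of_pos (show 0 < x * y by positivity), abs_sub_comm y x]
      have : 1 ≤ x * y := by nlinarith
      calc _ ≤ |takT β x| * |x - y| := div_le_self (by positivity) this
        _ ≤ B * (K * d ^ α) := by
          gcongr
          · exact hB x
          · exact hlip.trans (by gcongr)
        _ = _ := by ring
    have q2 : |(takT β x - takT β y) / y| ≤ A * K ^ α * d ^ α := by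
      rw [abs_div, abs_of_pos (show 0 < y by positivity)]
      calc _ ≤ |takT β x - takT β y| := div_le_self (by positivity) hy1
        _ ≤ A * |x - y| ^ α := hA x y
        _ ≤ A * (K * d) ^ α := by gcongr
        _ = _ := by rw [Real.mul_rpow hK0 hd0]; ring
    refine (abs_add_le _ _).trans ?_
    linarith
  have p2 : |x / (2 * (β - 1)) - y / (2 * (β - 1))| ≤ K / (2 * (β - 1)) * d ^ α := by
    rw [← sub_div, abs_div, abs_of_pos (show 0 < 2 * (β - 1) by positivity), div_mul_eq_mul_div]
    gcongr
    exact hlip.trans (by gcongr)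
  have p3 : |u / 2 - v / 2| ≤ 1 / 2 * d ^ α := by
    rw [← sub_div, abs_div, abs_of_pos (show (0:ℝ) < 2 by positivity)]
    linarith
  rw [← mul_sub, abs_mul, abs_of_pos hb1, mul_assoc]
  gcongr
  have : takT β x / x + x / (2 * (β - 1)) - u / 2 - (takT β y / y + y / (2 * (β - 1)) - v / 2)
    = (takT β x / x - takT β y / y) + (x / (2 * (β - 1)) - y / (2 * (β - 1))) - (u / 2 - v / 2) := by ring
  rw [this]
  calc _ ≤ _ := abs_sub _ _
    _ ≤ |takT β x / x - takT β y / y| + |x / (2 * (β - 1)) - y / (2 * (β - 1))| + |u / 2 - v / 2| := by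
      gcongr; exact abs_add_le _ _
    _ ≤ _ := by linarith

lemma prof_continuous {β : ℝ} (hβ : 1 < β) : Continuous (prof β) := by
  unfold prof
  have hb : 0 < β := by positivity
  have h1 : Continuous (fun u : ℝ => β ^ u) := Real.continuous_const_rpow hb.ne'
  have h2 := (takT_continuous hβ).comp h1
  refine continuous_const.mul (((h2.div h1 fun u => ?_).add (h1.div_const _)).sub (continuous_id.div_const _))
  positivity

lemma periodic_holder {g : ℝ → ℂ} (hg : Function.Periodic g 1) {C α : ℝ} (h0 : 0 < α) (hC0 : 0 ≤ C)
    (hC : ∀ u ∈ Set.Icc (0:ℝ) 1, ∀ v ∈ Set.Icc (0:ℝ) 1, ‖g u - g v‖ ≤ C * |u - v| ^ α) :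
    ∀ u v, ‖g u - g v‖ ≤ 2 * C * |u - v| ^ α := by
  have main : ∀ u v, u ≤ v → ‖g u - g v‖ ≤ 2 * C * |u - v| ^ α := by
    intro u v huv
    have hgu : g u = g (Int.fract u) := by
      rw [← Int.self_sub_floor]; simpa using (hg.sub_int_mul_eq ⌊u⌋ (x := u)).symm
    have fu0 := Int.fract_nonneg u
    have fu1 := (Int.fract_lt_one u).le
    by_cases h : 1 ≤ v - u
    · have hgv : g v = g (Int.fract v) := by
        rw [← Int.self_sub_floor]; simpa using (hg.sub_int_mul_eq ⌊v⌋ (x := v)).symm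
      have fv0 := Int.fract_nonneg v
      have fv1 := (Int.fract_lt_one v).le
      rw [hgu, hgv]
      refine (hC _ ⟨fu0, fu1⟩ _ ⟨fv0, fv1⟩).trans ?_
      have : |Int.fract u - Int.fract v| ≤ |u - v| := by
        rw [abs_sub_comm u v, abs_of_nonneg (show 0 ≤ v - u by linarith), abs_le]
        constructor <;> linarith
      calc _ ≤ C * |u - v| ^ α := by gcongr
        _ ≤ _ := by
          have : 0 ≤ C * |u - v| ^ α := by positivity
          linarith
    · push Not at h
      have hgv : g v = g (v - ⌊u⌋) := by
        simpa using (hg.sub_int_mul_eq ⌊u⌋ (x := v)).symm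
      have e : u - v = Int.fract u - (v - ⌊u⌋) := by rw [← Int.self_sub_floor]; ring
      rw [hgu, hgv, e]
      have hle : Int.fract u ≤ v - ⌊u⌋ := by linarith
      have hlt : v - ⌊u⌋ < Int.fract u + 1 := by linarith
      set a := Int.fract u
      set b := v - (⌊u⌋ : ℝ)
      by_cases hb : b ≤ 1
      · refine (hC _ ⟨fu0, fu1⟩ _ ⟨by linarith, hb⟩).trans ?_
        have : 0 ≤ C * |a - b| ^ α := by positivity
        linarith
      · push Not at hb
        have e1 : g b = g (b - 1) := (hg.sub_eq b).symm
        have e0 : g 1 = g 0 := by simpa using hg 0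
        have k1 := hC a ⟨fu0, fu1⟩ 1 ⟨by norm_num, le_refl _⟩
        have k2 := hC 0 ⟨le_refl _, by norm_num⟩ (b - 1) ⟨by linarith, by linarith⟩
        have l1 : |a - 1| ^ α ≤ |a - b| ^ α := by
          apply Real.rpow_le_rpow (abs_nonneg _) _ h0.le
          rw [abs_of_nonpos (by linarith), abs_of_nonpos (by linarith)]; linarith
        have l2 : |0 - (b - 1)| ^ α ≤ |a - b| ^ α := by
          apply Real.rpow_le_rpow (abs_nonneg _) _ h0.le
          rw [abs_of_nonpos (by linarith), abs_of_nonpos (by linarith)]; linarith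
        rw [e1]
        calc ‖g a - g (b - 1)‖ = ‖(g a - g 1) + (g 0 - g (b - 1))‖ := by rw [e0]; congr 1; ring
          _ ≤ _ := norm_add_le _ _
          _ ≤ C * |a - b| ^ α + C * |a - b| ^ α := by
            gcongr
            · exact k1.trans (by gcongr)
            · exact k2.trans (by gcongr)
          _ = _ := by ring
  intro u v
  rcases le_total u v with h | h
  · exact main u v h
  · rw [norm_sub_rev, abs_sub_comm]; exact main v u h

end PartC

section PartD

open MeasureTheory AddCircle in
lemma fourierCoeff_shift (f : C(UnitAddCircle, ℂ)) (δ : UnitAddCircle) (k : ℤ) :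
    fourierCoeff (fun t => f (t + δ) - f t) k = (fourier k δ - 1) * fourierCoeff f k := by
  have hc : ∀ g : UnitAddCircle → ℂ, Continuous g → Integrable g haarAddCircle := fun g hg =>
    hg.integrable_of_hasCompactSupport (HasCompactSupport.of_compactSpace g)
  have h1 : ∫ t : UnitAddCircle, fourier (-k) t • f (t + δ) ∂haarAddCircle
      = fourier k δ * ∫ t : UnitAddCircle, fourier (-k) t • f t ∂haarAddCircle := by
    have := integral_add_right_eq_self (μ := haarAddCircle)
      (fun t : UnitAddCircle => fourier (-k) (t - δ) • f t) δ
    simp only [add_sub_cancel_right] at this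
    rw [this, ← integral_const_mul]
    congr 1; ext t
    have e : (fourier (-k) (t - δ) : ℂ) = fourier k δ * fourier (-k) t := by
      simp only [fourier_apply]
      rw [← Circle.coe_mul, ← AddCircle.toCircle_add]
      congr 2
      rw [smul_sub, neg_smul, neg_smul]; abel
    rw [e, smul_eq_mul, smul_eq_mul, mul_assoc]
  unfold fourierCoeff
  simp_rw [smul_sub]
  rw [integral_sub, h1]
  · ring
  · exact hc _ (by fun_prop)
  · exact hc _ (by fun_prop)

open MeasureTheory AddCircle in
lemma parseval_shift (f : C(UnitAddCircle, ℂ)) (δ : UnitAddCircle) {B : ℝ} (hB : ∀ t, ‖f (t + δ) - f t‖ ≤ B) :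
    Summable (fun k : ℤ => ‖fourier k δ - 1‖ ^ 2 * ‖fourierCoeff f k‖ ^ 2) ∧
    ∑' k : ℤ, ‖fourier k δ - 1‖ ^ 2 * ‖fourierCoeff f k‖ ^ 2 ≤ B ^ 2 := by
  set g : C(UnitAddCircle, ℂ) := ⟨fun t => f (t + δ) - f t, by fun_prop⟩ with hg
  have h := hasSum_sq_fourierCoeff (ContinuousMap.toLp (E := ℂ) 2 haarAddCircle ℂ g)
  simp_rw [fourierCoeff_toLp] at h
  have e : ∀ k : ℤ, ‖fourierCoeff g k‖ ^ 2 = ‖fourier k δ - 1‖ ^ 2 * ‖fourierCoeff f k‖ ^ 2 := by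
    intro k
    rw [← mul_pow, ← norm_mul, ← fourierCoeff_shift]; rfl
  simp_rw [e] at h
  refine ⟨h.summable, ?_⟩
  rw [h.tsum_eq]
  have h2 : ∫ t : UnitAddCircle, ‖(ContinuousMap.toLp (E := ℂ) 2 haarAddCircle ℂ g) t‖ ^ 2 ∂haarAddCircle
      = ∫ t : UnitAddCircle, ‖g t‖ ^ 2 ∂haarAddCircle := by
    refine integral_congr_ae ?_
    filter_upwards [ContinuousMap.coeFn_toLp (p := 2) haarAddCircle (𝕜 := ℂ) g] with t ht
    rw [ht]
  rw [h2]
  have hi : Integrable (fun t : UnitAddCircle => ‖g t‖ ^ 2) haarAddCircle :=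
    Continuous.integrable_of_hasCompactSupport (by fun_prop) (HasCompactSupport.of_compactSpace _)
  calc _ ≤ ∫ t : UnitAddCircle, B ^ 2 ∂haarAddCircle := by
        refine integral_mono hi (integrable_const _) fun t => ?_
        have := hB t
        have h3 : ‖g t‖ ≤ B := this
        simp only
        gcongr
    _ = B ^ 2 := by simp

lemma natAbs_cast_real (k : ℤ) : ((k.natAbs : ℕ) : ℝ) = |(k:ℝ)| := by
  rw [Nat.cast_natAbs, Int.cast_abs]

lemma dyadic_lower {k : ℤ} (hk : k ≠ 0) :
    1 ≤ ‖(fourier k (((1/4) * (1/2) ^ (Nat.log 2 k.natAbs) : ℝ) : UnitAddCircle) : ℂ) - 1‖ := by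
  set j := Nat.log 2 k.natAbs with hj
  have hk' : k.natAbs ≠ 0 := Int.natAbs_ne_zero.2 hk
  have l1 : 2 ^ j ≤ k.natAbs := Nat.pow_log_le_self 2 hk'
  have l2 : k.natAbs < 2 ^ (j + 1) := Nat.lt_pow_succ_log_self (by norm_num) _
  have l1' : (2:ℝ) ^ j ≤ |(k:ℝ)| := by
    rw [← natAbs_cast_real]; exact_mod_cast l1
  have l2' : |(k:ℝ)| < 2 ^ (j+1) := by
    rw [← natAbs_cast_real]; exact_mod_cast l2
  rw [fourier_coe_apply]
  set θ : ℝ := 2 * Real.pi * k * ((1/4) * (1/2) ^ j) with hθ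
  have e : 2 * (Real.pi:ℂ) * Complex.I * k * (((1/4) * (1/2) ^ j : ℝ):ℂ) / (1:ℝ) = θ * Complex.I := by
    rw [hθ]; push_cast; ring
  rw [e]
  have hre : (Complex.exp (θ * Complex.I) - 1).re = Real.cos θ - 1 := by
    simp [Complex.exp_ofReal_mul_I_re]
  have hcos : Real.cos θ ≤ 0 := by
    rw [← Real.cos_abs]
    have habs : |θ| = (Real.pi / 2) * (|(k:ℝ)| * (1/2)^j) := by
      rw [hθ, abs_mul, abs_mul, abs_of_pos (show 0 < 2 * Real.pi by positivity),
        abs_of_pos (show (0:ℝ) < 1/4 * (1/2)^j by positivity)]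
      ring
    have hpow : (2:ℝ) ^ j * (1/2) ^ j = 1 := by rw [← mul_pow]; norm_num
    have hp : (0:ℝ) < (1/2)^j := by positivity
    have a1 : 1 ≤ |(k:ℝ)| * (1/2)^j := by
      calc (1:ℝ) = 2 ^ j * (1/2) ^ j := hpow.symm
        _ ≤ _ := by gcongr
    have a2 : |(k:ℝ)| * (1/2)^j ≤ 2 := by
      have : |(k:ℝ)| * (1/2)^j ≤ 2 ^ (j+1) * (1/2)^j := by gcongr
      rw [pow_succ] at this
      nlinarith
    have := Real.pi_pos
    apply Real.cos_nonpos_of_pi_div_two_le_of_le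
    · rw [habs]; nlinarith
    · rw [habs]; nlinarith
  calc (1:ℝ) ≤ |(Complex.exp (θ * Complex.I) - 1).re| := by
        rw [hre, abs_of_nonpos (by linarith)]; linarith
    _ ≤ _ := Complex.abs_re_le_norm _

lemma summable_diag (w : ℕ → ℤ → ℝ) (hw : ∀ j k, 0 ≤ w j k) (hs : ∀ j, Summable (w j)) {D r : ℝ}
    (hr0 : 0 ≤ r) (hr : r < 1) (hb : ∀ j, ∑' k, w j k ≤ D * r ^ j) :
    Summable (fun k : ℤ => w (Nat.log 2 k.natAbs) k) := by
  have hGs : Summable (fun x : ℕ × ℤ => w x.1 x.2) := by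
    rw [summable_prod_of_nonneg (fun x => hw _ _)]
    refine ⟨fun j => hs j, ?_⟩
    exact Summable.of_nonneg_of_le (fun j => tsum_nonneg fun k => hw _ _) hb
      ((summable_geometric_of_lt_one hr0 hr).mul_left _)
  exact hGs.comp_injective (i := fun k : ℤ => (Nat.log 2 k.natAbs, k)) (fun a b h => (Prod.mk.inj h).2)

lemma summable_of_holder (f : C(UnitAddCircle, ℂ)) {C : ℝ} 
    (hf : ∀ u v : ℝ, ‖f (u : UnitAddCircle) - f (v : UnitAddCircle)‖ ≤ C * |u - v| ^ (3/4 : ℝ)) :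
    Summable (fourierCoeff f) := by
  set q : ℝ := 2 ^ (5/4:ℝ) with hq
  have hq0 : 0 < q := by positivity
  set p : ℝ := (1/2) ^ (3/4:ℝ) with hp
  have hp0 : 0 < p := by positivity
  set δ : ℕ → ℝ := fun j => (1/4) * (1/2) ^ j with hδ
  set G : ℕ → ℤ → ℝ := fun j k => q ^ j * (‖(fourier k (δ j : UnitAddCircle) : ℂ) - 1‖ ^ 2 * ‖fourierCoeff f k‖ ^ 2) with hG
  have hpar := fun j : ℕ => parseval_shift f (δ j : UnitAddCircle) (B := C * (δ j) ^ (3/4:ℝ)) (by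
    intro t
    induction t using QuotientAddGroup.induction_on with
    | H t =>
      have := hf (t + δ j) t
      rw [add_sub_cancel_left, abs_of_pos (by positivity)] at this
      exact this)
  have hratio : q * p ^ 2 < 1 := by
    have e1 : p ^ 2 = 2 ^ (-(3/2):ℝ) := by
      rw [hp, ← Real.rpow_natCast, ← Real.rpow_mul (by norm_num), one_div, Real.inv_rpow (by norm_num), ← Real.rpow_neg (by norm_num)]
      norm_num
    rw [e1, hq, ← Real.rpow_add (by norm_num)]
    exact Real.rpow_lt_one_of_one_lt_of_neg (by norm_num) (by norm_num)
  have hG2 : Summable (fun k : ℤ => G (Nat.log 2 k.natAbs) k) := by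
    refine summable_diag G (fun j k => by positivity) (fun j => (hpar j).1.mul_left _)
      (D := (C * (1/4) ^ (3/4:ℝ)) ^ 2) (r := q * p ^ 2) (by positivity) hratio fun j => ?_
    simp only [hG]
    rw [tsum_mul_left]
    have := (hpar j).2
    have e : (δ j) ^ (3/4:ℝ) = (1/4) ^ (3/4:ℝ) * p ^ j := by
      simp only [hδ]
      rw [Real.mul_rpow (by norm_num) (by positivity), hp]
      congr 1
      rw [← Real.rpow_natCast, ← Real.rpow_natCast, ← Real.rpow_mul (by norm_num), ← Real.rpow_mul (by norm_num), mul_comm]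
    rw [e] at this
    calc _ ≤ q ^ j * (C * ((1/4) ^ (3/4:ℝ) * p ^ j)) ^ 2 := by gcongr
      _ = _ := by rw [mul_pow q]; ring
  have hS : Summable (fun k : ℤ => q * |(k:ℝ)| ^ (-(5/4):ℝ)) :=
    (Real.summable_abs_int_rpow (b := 5/4) (by norm_num)).mul_left _
  refine Summable.of_norm_bounded_eventually (hG2.add hS) ?_
  have hne : ∀ᶠ k : ℤ in cofinite, k ≠ 0 := by
    rw [Filter.eventually_cofinite]; simp
  filter_upwards [hne] with k hk
  have hlow := dyadic_lower hk
  set j := Nat.log 2 k.natAbs with hj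
  set x := ‖fourierCoeff f k‖ with hx
  have hx0 : 0 ≤ x := norm_nonneg _
  have l2 : k.natAbs < 2 ^ (j + 1) := Nat.lt_pow_succ_log_self (by norm_num) _
  have l2' : |(k:ℝ)| < 2 ^ (j+1) := by
    rw [← natAbs_cast_real]; exact_mod_cast l2
  have hk0 : 0 < |(k:ℝ)| := by simpa using hk
  have h1 : q ^ j * x ^ 2 ≤ G j k := by
    simp only [hG]
    have : 1 ≤ ‖(fourier k (δ j : UnitAddCircle) : ℂ) - 1‖ ^ 2 := one_le_pow₀ hlow
    have h3 : 0 ≤ x ^ 2 := by positivity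
    gcongr
    nlinarith
  have h2 : (q ^ j)⁻¹ ≤ q * |(k:ℝ)| ^ (-(5/4):ℝ) := by
    have h3 : |(k:ℝ)| ^ (5/4:ℝ) ≤ q ^ (j+1) := by
      calc |(k:ℝ)| ^ (5/4:ℝ) ≤ ((2:ℝ) ^ (j+1)) ^ (5/4:ℝ) := by gcongr
        _ = q ^ (j+1) := by
          rw [hq, ← Real.rpow_natCast, ← Real.rpow_natCast, ← Real.rpow_mul (by norm_num), ← Real.rpow_mul (by norm_num), mul_comm]
    rw [Real.rpow_neg hk0.le, ← div_eq_mul_inv, le_div_iff₀ (by positivity), inv_mul_le_iff₀ (by positivity)]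
    rw [pow_succ] at h3
    exact h3
  have h3 : x ≤ q ^ j * x ^ 2 + (q ^ j)⁻¹ := by
    have hw : 0 < q ^ j := by positivity
    set w := q ^ j
    have : 0 ≤ (w * x - 1) ^ 2 / w := by positivity
    have e : (w * x - 1) ^ 2 / w = w * x ^ 2 - 2 * x + w⁻¹ := by field_simp; ring
    linarith
  linarith

end PartD

section PartE

/-- the imaginary frequencies -/
def wk (β : ℝ) (k : ℤ) : ℂ := 2 * Real.pi * Complex.I * k / Real.log β

lemma wk_ne {β : ℝ} (hβ : 1 < β) {k : ℤ} (hk : k ≠ 0) : wk β k ≠ 0 := by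
  have hL : (Real.log β : ℂ) ≠ 0 := by exact_mod_cast (Real.log_pos hβ).ne'
  have hp : (Real.pi : ℂ) ≠ 0 := by exact_mod_cast Real.pi_ne_zero
  have hk' : (k : ℂ) ≠ 0 := by exact_mod_cast hk
  unfold wk
  have := Complex.I_ne_zero
  exact div_ne_zero (mul_ne_zero (mul_ne_zero (mul_ne_zero two_ne_zero hp) this) hk') hL

lemma wk_eq (β : ℝ) (k : ℤ) : wk β k = ((2 * Real.pi * k / Real.log β : ℝ) : ℂ) * Complex.I := by
  unfold wk; push_cast; ring

lemma wk_re (β : ℝ) (k : ℤ) : (wk β k).re = 0 := by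
  rw [wk_eq, Complex.re_ofReal_mul]; simp

lemma wk_im (β : ℝ) (k : ℤ) : (wk β k).im = 2 * Real.pi * k / Real.log β := by
  rw [wk_eq, Complex.im_ofReal_mul]; simp

lemma cpow_wk {β : ℝ} (hβ : 1 < β) (k : ℤ) : (β : ℂ) ^ (wk β k) = 1 := by
  have hL : (Real.log β : ℂ) ≠ 0 := by exact_mod_cast (Real.log_pos hβ).ne'
  have hb : (β : ℂ) ≠ 0 := by exact_mod_cast (by linarith : β ≠ 0)
  rw [Complex.cpow_def_of_ne_zero hb, ← Complex.ofReal_log (by linarith)]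
  unfold wk
  rw [Complex.exp_eq_one_iff]
  refine ⟨k, ?_⟩
  field_simp

lemma fourier_subst {β : ℝ} (hβ : 1 < β) {G : ℝ → ℂ} (hG : Continuous G) (k : ℤ) :
    ∫ u in (0:ℝ)..1, (fourier (-k) (u : UnitAddCircle) : ℂ) • G u =
      (1 / (Real.log β : ℂ)) * ∫ x in (1:ℝ)..β, G (Real.log x / Real.log β) * (x : ℂ) ^ (-(1 + wk β k)) := by
  have hL : Real.log β ≠ 0 := (Real.log_pos hβ).ne'
  have hLC : (Real.log β : ℂ) ≠ 0 := by exact_mod_cast hL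
  have hu : Set.uIcc 1 β = Set.Icc 1 β := Set.uIcc_of_le hβ.le
  have h := intervalIntegral.integral_deriv_smul_comp' (a := 1) (b := β) (f := fun x => Real.log x / Real.log β)
    (f' := fun x => x⁻¹ / Real.log β)
    (g := fun u : ℝ => (fourier (-k) (u : UnitAddCircle) : ℂ) • G u)
    (fun x hx => by
      rw [hu] at hx
      exact (Real.hasDerivAt_log (by linarith [hx.1])).div_const _)
    (by
      rw [hu]
      refine ContinuousOn.div_const (continuousOn_inv₀.mono fun x hx => ?_) _
      simp; linarith [hx.1]) 
    (by
      refine Continuous.continuousOn ?_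
      have : Continuous (fun u : ℝ => (u : UnitAddCircle)) := AddCircle.continuous_mk' 1
      fun_prop)
  simp only [Real.log_one, zero_div, div_self hL] at h
  rw [← h, ← intervalIntegral.integral_const_mul]
  refine intervalIntegral.integral_congr fun x hx => ?_
  rw [hu] at hx
  have hx0 : 0 < x := by linarith [hx.1]
  have hxC : (x : ℂ) ≠ 0 := by exact_mod_cast hx0.ne'
  simp only [Function.comp]
  rw [fourier_coe_apply, neg_add, Complex.cpow_add _ _ hxC, Complex.cpow_neg_one,
    Complex.cpow_def_of_ne_zero hxC, ← Complex.ofReal_log hx0.le]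
  have e : 2 * (Real.pi:ℂ) * Complex.I * ((-k : ℤ) : ℂ) * ((Real.log x / Real.log β : ℝ) : ℂ) / (1:ℝ)
     = Real.log x * -wk β k := by
    unfold wk; push_cast; field_simp
  rw [e]
  simp only [Complex.real_smul, smul_eq_mul]
  push_cast
  ring

open MeasureTheory in
lemma tak_integral {β : ℝ} (hβ : 1 < β) (k : ℤ) :
    ∫ x in (1:ℝ)..β, (takT β x : ℂ) * (x : ℂ) ^ (-(wk β k + 1 + 1))
      = tMel (fun x => (psiOne x : ℂ)) (wk β k + 1) := by
  have hb0 : 0 < β := by linarith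
  have hbC : (β : ℂ) ≠ 0 := by exact_mod_cast hb0.ne'
  obtain ⟨B, hB0, hB⟩ := takT_bound hβ
  have hm : Measurable (fun x => (takT β x : ℂ)) := by
    have := (takT_continuous hβ).measurable
    fun_prop
  have hre : (0:ℝ) < (wk β k + 1).re := by rw [Complex.add_re, wk_re]; norm_num
  have hi := tMel_integrable hm (C := B) (r := 0) (s := wk β k + 1)
    (fun x hx => by simpa using hB x) hre
  have hi2 : IntegrableOn (fun x : ℝ => (takT β (β * x) : ℂ) * (x : ℂ) ^ (-(wk β k + 1 + 1))) (Set.Ioi 1) :=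
    tMel_integrable (f := fun x => (takT β (β * x) : ℂ)) (by
      have := (takT_continuous hβ).measurable
      fun_prop) (C := B) (r := 0)
    (fun x hx => by simpa using hB (β * x)) hre
  have hsub := integral_comp_mul_left_Ioi' (fun x : ℝ => (takT β x : ℂ) * (x : ℂ) ^ (-(wk β k + 1 + 1))) 1 hb0
  rw [mul_one] at hsub
  rw [← intervalIntegral.integral_Ioi_sub_Ioi hi hβ.le, ← hsub, Complex.real_smul, ← integral_const_mul]
  have e : Set.EqOn (fun x : ℝ => (β:ℂ) * (((takT β (β * x) : ℝ):ℂ) * ((β * x : ℝ) : ℂ) ^ (-(wk β k + 1 + 1))))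
     (fun x : ℝ => (β:ℂ)⁻¹ * ((takT β (β * x) : ℂ) * (x : ℂ) ^ (-(wk β k + 1 + 1)))) (Set.Ioi 1) := by
    intro x hx
    have hx0 : 0 < x := lt_trans one_pos hx
    simp only
    rw [Complex.ofReal_mul, Complex.mul_cpow_ofReal_nonneg hb0.le hx0.le, Complex.cpow_neg (β:ℂ),
      Complex.cpow_add _ _ hbC, Complex.cpow_add _ _ hbC, cpow_wk hβ, Complex.cpow_one]
    field_simp
  rw [setIntegral_congr_fun measurableSet_Ioi e, ← integral_sub hi (hi2.const_mul _)]
  unfold tMel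
  refine setIntegral_congr_fun measurableSet_Ioi fun x hx => ?_
  simp only
  rw [takT_scale hβ]
  push_cast
  field_simp
  ring

lemma cpow_int_one {β : ℝ} (hβ : 1 < β) {k : ℤ} (hk : k ≠ 0) :
    ∫ x in (1:ℝ)..β, (x : ℂ) ^ (-(1 + wk β k)) = 0 := by
  have hw := wk_ne hβ hk
  have h0 : (0:ℝ) ∉ Set.uIcc 1 β := by rw [Set.uIcc_of_le hβ.le]; simp
  rw [integral_cpow (Or.inr ⟨by intro h; apply hw; linear_combination -h, h0⟩)]
  rw [show -(1 + wk β k) + 1 = -wk β k by ring, Complex.cpow_neg, cpow_wk hβ]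
  simp

lemma cpow_int_x {β : ℝ} (hβ : 1 < β) {k : ℤ} (hk : k ≠ 0) :
    ∫ x in (1:ℝ)..β, (x : ℂ) * (x : ℂ) ^ (-(1 + wk β k)) = (β - 1) / (1 - wk β k) := by
  have hw := wk_ne hβ hk
  have hbC : (β : ℂ) ≠ 0 := by exact_mod_cast (by linarith : β ≠ 0)
  have h0 : (0:ℝ) ∉ Set.uIcc 1 β := by rw [Set.uIcc_of_le hβ.le]; simp
  have e : ∫ x in (1:ℝ)..β, (x : ℂ) * (x : ℂ) ^ (-(1 + wk β k)) = ∫ x in (1:ℝ)..β, (x : ℂ) ^ (-wk β k) := by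
    refine intervalIntegral.integral_congr fun x hx => ?_
    rw [Set.uIcc_of_le hβ.le] at hx
    have hxC : (x : ℂ) ≠ 0 := by exact_mod_cast (by linarith [hx.1] : x ≠ 0)
    rw [neg_add, Complex.cpow_add _ _ hxC, Complex.cpow_neg_one, mul_inv_cancel_left₀ hxC]
  rw [e, integral_cpow (Or.inl (by rw [Complex.neg_re, wk_re]; norm_num)), Complex.cpow_add _ _ hbC,
    Complex.cpow_neg, cpow_wk hβ]
  simp
  ring

lemma cpow_int_log {β : ℝ} (hβ : 1 < β) {k : ℤ} (hk : k ≠ 0) :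
    ∫ x in (1:ℝ)..β, (Real.log x : ℂ) * (x : ℂ) ^ (-(1 + wk β k)) = - Real.log β / wk β k := by
  have hw := wk_ne hβ hk
  set w := wk β k with hwdef
  have hd : ∀ x ∈ Set.uIcc 1 β, HasDerivAt
      (fun x : ℝ => -((Real.log x : ℂ) * (x : ℂ) ^ (-w)) / w - (x : ℂ) ^ (-w) / w ^ 2)
      ((Real.log x : ℂ) * (x : ℂ) ^ (-(1 + w))) x := by
    intro x hx
    rw [Set.uIcc_of_le hβ.le] at hx
    have hx0 : x ≠ 0 := by linarith [hx.1]
    have hxC : (x : ℂ) ≠ 0 := by exact_mod_cast hx0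
    have h1 := (Real.hasDerivAt_log hx0).ofReal_comp
    have h2 := hasDerivAt_ofReal_cpow_const hx0 (r := -w) (neg_ne_zero.2 hw)
    refine ((((h1.mul h2).neg).div_const w).sub (h2.div_const (w^2))).congr_deriv ?_
    rw [show -w - 1 = -w + -1 by ring, show -(1 + w) = -w + -1 by ring, Complex.cpow_add _ _ hxC, Complex.cpow_neg_one]
    push_cast
    field_simp
    ring
  rw [intervalIntegral.integral_eq_sub_of_hasDerivAt hd]
  · rw [Complex.cpow_neg, hwdef, cpow_wk hβ]
    simp
  · refine ContinuousOn.intervalIntegrable ?_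
    rw [Set.uIcc_of_le hβ.le]
    intro x hx
    have hx0 : 0 < x := by linarith [hx.1]
    refine ContinuousAt.continuousWithinAt ?_
    refine ContinuousAt.mul ?_ ?_
    · exact Complex.continuous_ofReal.continuousAt.comp (Real.continuousAt_log hx0.ne')
    · exact Complex.continuousAt_ofReal_cpow_const _ _ (Or.inr hx0.ne')

end PartE

section PartF

lemma prof_log {β x : ℝ} (hβ : 1 < β) (hx : 0 < x) :
    prof β (Real.log x / Real.log β) =
      (β - 1) * (takT β x / x + x / (2 * (β - 1)) - Real.log x / (2 * Real.log β)) := by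
  have hL : Real.log β ≠ 0 := (Real.log_pos hβ).ne'
  have e : β ^ (Real.log x / Real.log β) = x := by
    rw [Real.rpow_def_of_pos (by linarith), mul_div_cancel₀ _ hL, Real.exp_log hx]
  unfold prof
  rw [e]
  congr 2
  field_simp

lemma prof_integral {β : ℝ} (hβ : 1 < β) {k : ℤ} (hk : k ≠ 0) (c : ℂ) :
    ∫ x in (1:ℝ)..β, ((prof β (Real.log x / Real.log β) : ℂ) + c) * (x : ℂ) ^ (-(1 + wk β k)) =
      (β - 1) * (tMel (fun x => (psiOne x : ℂ)) (wk β k + 1) + 1 / (2 * (1 - wk β k)) + 1 / (2 * wk β k)) := by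
  have hw := wk_ne hβ hk
  have hw1 : 1 - wk β k ≠ 0 := by
    intro h
    have := congrArg Complex.re h
    rw [Complex.sub_re, wk_re] at this
    norm_num at this
  have hL : (Real.log β : ℂ) ≠ 0 := by exact_mod_cast (Real.log_pos hβ).ne'
  have hb1 : (β : ℂ) - 1 ≠ 0 := by exact_mod_cast (by linarith : β - 1 ≠ 0)
  have hu : Set.uIcc 1 β = Set.Icc 1 β := Set.uIcc_of_le hβ.le
  have hcp : ∀ r : ℂ, ContinuousOn (fun x : ℝ => (x : ℂ) ^ r) (Set.uIcc 1 β) := by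
    intro r x hx
    rw [hu] at hx
    exact (Complex.continuousAt_ofReal_cpow_const _ _ (Or.inr (by linarith [hx.1]))).continuousWithinAt
  have hlog : ContinuousOn (fun x : ℝ => (Real.log x : ℂ)) (Set.uIcc 1 β) := by
    intro x hx
    rw [hu] at hx
    exact (Complex.continuous_ofReal.continuousAt.comp
      (Real.continuousAt_log (by linarith [hx.1]))).continuousWithinAt
  have htak : ContinuousOn (fun x : ℝ => (takT β x : ℂ)) (Set.uIcc 1 β) :=
    (Complex.continuous_ofReal.comp (takT_continuous hβ)).continuousOn
  have hid : ContinuousOn (fun x : ℝ => (x : ℂ)) (Set.uIcc 1 β) := Complex.continuous_ofReal.continuousOn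
  have i1 := ((htak.mul (hcp (-(wk β k + 1 + 1)))).intervalIntegrable (μ := MeasureTheory.volume)).const_mul ((β:ℂ) - 1)
  have i2 := ((hid.mul (hcp (-(1 + wk β k)))).intervalIntegrable (μ := MeasureTheory.volume)).const_mul (1/2:ℂ)
  have i3 := ((hlog.mul (hcp (-(1 + wk β k)))).intervalIntegrable (μ := MeasureTheory.volume)).const_mul (-((β:ℂ) - 1) / (2 * Real.log β))
  have i4 := ((hcp (-(1 + wk β k))).intervalIntegrable (μ := MeasureTheory.volume)).const_mul c
  simp only [Pi.mul_apply] at i1 i2 i3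
  have e : ∫ x in (1:ℝ)..β, ((prof β (Real.log x / Real.log β) : ℂ) + c) * (x : ℂ) ^ (-(1 + wk β k))
    = ∫ x in (1:ℝ)..β, (((((β:ℂ) - 1) * ((takT β x : ℂ) * (x : ℂ) ^ (-(wk β k + 1 + 1)))
      + (1/2:ℂ) * ((x : ℂ) * (x : ℂ) ^ (-(1 + wk β k))))
      + (-((β:ℂ) - 1) / (2 * Real.log β)) * ((Real.log x : ℂ) * (x : ℂ) ^ (-(1 + wk β k))))
      + c * (x : ℂ) ^ (-(1 + wk β k))) := by
    refine intervalIntegral.integral_congr fun x hx => ?_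
    rw [hu] at hx
    have hx0 : 0 < x := by linarith [hx.1]
    have hxC : (x : ℂ) ≠ 0 := by exact_mod_cast hx0.ne'
    rw [prof_log hβ hx0, show -(wk β k + 1 + 1) = -(1 + wk β k) + -1 by ring,
      Complex.cpow_add _ _ hxC, Complex.cpow_neg_one]
    push_cast
    field_simp
    ring
  rw [e, intervalIntegral.integral_add ((i1.add i2).add i3) i4, intervalIntegral.integral_add (i1.add i2) i3,
    intervalIntegral.integral_add i1 i2, intervalIntegral.integral_const_mul, intervalIntegral.integral_const_mul,
    intervalIntegral.integral_const_mul, intervalIntegral.integral_const_mul, tak_integral hβ, cpow_int_x hβ hk, 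
    cpow_int_log hβ hk, cpow_int_one hβ hk]
  field_simp
  ring

lemma coeff_alg {β : ℝ} (hβ : 1 < β) {k : ℤ} (hk : k ≠ 0) :
    (1 / (Real.log β : ℂ)) * ((β - 1) * (tMel (fun x => (psiOne x : ℂ)) (wk β k + 1) + 1 / (2 * (1 - wk β k)) + 1 / (2 * wk β k)))
      = delangeCoeff β k := by
  have hw := wk_ne hβ hk
  have hw1 : 1 - wk β k ≠ 0 := by
    intro h
    have := congrArg Complex.re h
    rw [Complex.sub_re, wk_re] at this
    norm_num at this
  have hw2 : 1 + wk β k ≠ 0 := by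
    intro h
    have := congrArg Complex.re h
    rw [Complex.add_re, wk_re] at this
    norm_num at this
  have hw3 : wk β k - 1 ≠ 0 := fun h => hw1 (by linear_combination -h)
  have hL : (Real.log β : ℂ) ≠ 0 := by exact_mod_cast (Real.log_pos hβ).ne'
  have him : (wk β k).im ≠ 0 := by
    intro h
    exact hw (Complex.ext (wk_re β k) h)
  unfold delangeCoeff
  rw [if_neg hk]
  have e : 2 * (Real.pi:ℂ) * Complex.I * k = wk β k * Real.log β := by
    unfold wk; field_simp
  have e2 : 2 * (Real.pi:ℂ) * Complex.I * k / Real.log β = wk β k := rfl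
  rw [e2, e, zeta_eq _ (by rw [wk_re]; norm_num) him]
  set Z := tMel (fun x => (psiOne x : ℂ)) (wk β k + 1)
  set w := wk β k
  field_simp
  ring

/-- the profile as a function on the circle -/
theorem exists_circle {β : ℝ} (hβ : 1 < β) : ∃ f : C(UnitAddCircle, ℂ),
    (∀ k, fourierCoeff f k = delangeCoeff β k) ∧
    (∀ α : ℝ, 0 < α → α < 1 → ∃ C : ℝ, 0 ≤ C ∧ ∀ u v : ℝ,
      ‖f (u : UnitAddCircle) - f (v : UnitAddCircle)‖ ≤ C * |u - v| ^ α) := by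
  set c : ℂ := delangeCoeff β 0 - ∫ u in (0:ℝ)..1, (prof β u : ℂ) with hc
  have hcont : Continuous (fun u => (prof β u : ℂ) + c) := by
    have := prof_continuous hβ
    fun_prop
  set f : C(UnitAddCircle, ℂ) := ⟨AddCircle.liftIco 1 0 (fun u => (prof β u : ℂ) + c),
    AddCircle.liftIco_zero_continuous (by rw [prof_zero_one hβ]) hcont.continuousOn⟩ with hf
  have hval : ∀ u ∈ Set.Icc (0:ℝ) 1, f (u : UnitAddCircle) = (prof β u : ℂ) + c := by
    intro u hu
    rcases hu.2.lt_or_eq with h | h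
    · exact AddCircle.liftIco_zero_coe_apply (f := fun u => (prof β u : ℂ) + c) ⟨hu.1, h⟩
    · have e : ((1:ℝ) : UnitAddCircle) = ((0:ℝ) : UnitAddCircle) := by
        rw [AddCircle.coe_period]; rfl
      rw [h, e, ← prof_zero_one hβ]
      exact AddCircle.liftIco_zero_coe_apply (f := fun u => (prof β u : ℂ) + c) ⟨le_rfl, one_pos⟩
  refine ⟨f, fun k => ?_, fun α h0 h1 => ?_⟩
  · rw [fourierCoeff_eq_intervalIntegral _ _ 0, zero_add]
    have e : ∫ u in (0:ℝ)..1, (fourier (-k) (u : UnitAddCircle) : ℂ) • f (u : UnitAddCircle)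
      = ∫ u in (0:ℝ)..1, (fourier (-k) (u : UnitAddCircle) : ℂ) • ((prof β u : ℂ) + c) := by
      refine intervalIntegral.integral_congr fun u hu => ?_
      rw [Set.uIcc_of_le zero_le_one] at hu
      rw [hval u hu]
    rw [e, one_div, inv_one, one_smul]
    by_cases hk : k = 0
    · subst hk
      have hi : IntervalIntegrable (fun u => (prof β u : ℂ)) MeasureTheory.volume 0 1 :=
        (Complex.continuous_ofReal.comp (prof_continuous hβ)).intervalIntegrable _ _
      simp only [neg_zero, fourier_zero, one_smul]
      rw [intervalIntegral.integral_add hi (by simp), intervalIntegral.integral_const, hc]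
      simp
    · rw [fourier_subst hβ hcont, prof_integral hβ hk, coeff_alg hβ hk]
  · obtain ⟨C, hC0, hC⟩ := prof_holder hβ h0 h1
    refine ⟨2 * C, by positivity, periodic_holder (g := fun u : ℝ => f (u : UnitAddCircle)) ?_ h0 hC0 ?_⟩
    · intro u
      simp only
      rw [AddCircle.coe_add_period]
    · intro u hu v hv
      rw [hval u hu, hval v hv, add_sub_add_right_eq_sub, ← Complex.ofReal_sub, Complex.norm_real]
      exact hC u hu v hv

/-- summary of the properties of `delangeH` -/
theorem delangeH_props {β : ℝ} (hβ : 1 < β) :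
    Continuous (delangeH β) ∧ Function.Periodic (delangeH β) 1 ∧
    (∀ k : ℤ, (1 / (Real.log β : ℂ)) * ∫ x in (1:ℝ)..β, delangeH β (Real.log x / Real.log β) * (x : ℂ) ^ (-(1 + wk β k))
      = delangeCoeff β k) ∧
    (∀ α : ℝ, 0 < α → α < 1 → ∃ C : ℝ, 0 ≤ C ∧ ∀ u v : ℝ, ‖delangeH β u - delangeH β v‖ ≤ C * |u - v| ^ α) := by
  obtain ⟨f, hf, hH⟩ := exists_circle hβ
  obtain ⟨C, hC0, hC⟩ := hH (3/4) (by norm_num) (by norm_num)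
  have hs := summable_of_holder f hC
  have e : delangeH β = fun u : ℝ => f (u : UnitAddCircle) := by
    ext u
    rw [← (has_pointwise_sum_fourier_series_of_summable hs (u : UnitAddCircle)).tsum_eq]
    unfold delangeH
    congr 1; ext k
    rw [hf, fourier_coe_apply, smul_eq_mul]
    simp
  have hc : Continuous (delangeH β) := by
    rw [e]
    exact f.continuous.comp (AddCircle.continuous_mk' 1)
  refine ⟨hc, ?_, fun k => ?_, ?_⟩
  · rw [e]; intro u
    simp only
    rw [AddCircle.coe_add_period]
  · rw [← fourier_subst hβ hc, ← hf, fourierCoeff_eq_intervalIntegral _ _ 0, e]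
    simp
  · rw [e]; exact hH

end PartF

section PartG

/-- real-variable version of the interpolated cumulative sum -/
def Sx (a : ℂ) (L : ℝ) (h : ℝ → ℂ) (x : ℝ) : ℂ := a * x * Real.log x + h (Real.log x / L) * x

lemma h_bounded {h : ℝ → ℂ} (hc : Continuous h) (hp : Function.Periodic h 1) :
    ∃ M : ℝ, 0 ≤ M ∧ ∀ u, ‖h u‖ ≤ M := by
  obtain ⟨M, hM⟩ := isCompact_Icc.exists_bound_of_continuousOn (s := Set.Icc (0:ℝ) 1) hc.continuousOn
  refine ⟨M, (norm_nonneg _).trans (hM 0 ⟨le_rfl, zero_le_one⟩), fun u => ?_⟩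
  have e : h u = h (Int.fract u) := by
    have := hp.sub_int_mul_eq ⌊u⌋ (x := u)
    rw [mul_one] at this
    exact this.symm
  rw [e]
  exact hM _ ⟨Int.fract_nonneg u, (Int.fract_lt_one u).le⟩

lemma Sx_diff {a : ℂ} {L : ℝ} (hL : 0 < L) {h : ℝ → ℂ} (hc : Continuous h) (hp : Function.Periodic h 1)
    (hH : ∀ α : ℝ, 0 < α → α < 1 → ∃ C : ℝ, 0 ≤ C ∧ ∀ u v : ℝ, ‖h u - h v‖ ≤ C * |u - v| ^ α)
    {ε : ℝ} (h0 : 0 < ε) (h1 : ε < 1) :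
    ∃ C : ℝ, 0 ≤ C ∧ ∀ x y : ℝ, 1 ≤ x → x ≤ y → y ≤ x + 1 → ‖Sx a L h y - Sx a L h x‖ ≤ C * x ^ ε := by
  obtain ⟨M, hM0, hM⟩ := h_bounded hc hp
  obtain ⟨C, hC0, hC⟩ := hH (1 - ε) (by linarith) (by linarith)
  refine ⟨‖a‖ * (2 / ε + 1) + C * (1 / L) ^ (1 - ε) + M, by positivity, fun x y hx hxy hy => ?_⟩
  have hx0 : 0 < x := by linarith
  have hy0 : 0 < y := by linarith
  have hxe : 1 ≤ x ^ ε := Real.one_le_rpow hx h0.le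
  have hlog : Real.log y - Real.log x ≤ 1 / x := by
    rw [← Real.log_div hy0.ne' hx0.ne']
    refine (Real.log_le_sub_one_of_pos (by positivity)).trans ?_
    rw [div_sub_one hx0.ne']
    gcongr; linarith
  have hlog0 : 0 ≤ Real.log y - Real.log x := by
    have := Real.log_le_log hx0 hxy
    linarith
  have hly : Real.log y ≤ 2 / ε * x ^ ε := by
    refine (Real.log_le_rpow_div hy0.le h0).trans ?_
    have h2 : y ^ ε ≤ 2 * x ^ ε := by
      calc y ^ ε ≤ (2 * x) ^ ε := by gcongr; linarith
        _ = 2 ^ ε * x ^ ε := Real.mul_rpow (by norm_num) hx0.le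
        _ ≤ 2 ^ (1:ℝ) * x ^ ε := by gcongr; norm_num
        _ = _ := by rw [Real.rpow_one]
    calc y ^ ε / ε ≤ (2 * x ^ ε) / ε := by gcongr
      _ = _ := by ring
  have hly0 : 0 ≤ Real.log y := Real.log_nonneg (by linarith)
  have e : Sx a L h y - Sx a L h x = a * (((y - x) * Real.log y + x * (Real.log y - Real.log x) : ℝ) : ℂ)
      + (h (Real.log y / L) - h (Real.log x / L)) * x + h (Real.log y / L) * ((y - x : ℝ) : ℂ) := by
    unfold Sx; push_cast; ring
  rw [e]
  have b1 : ‖a * (((y - x) * Real.log y + x * (Real.log y - Real.log x) : ℝ) : ℂ)‖ ≤ ‖a‖ * ((2 / ε + 1) * x ^ ε) := by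
    rw [norm_mul, Complex.norm_real, Real.norm_of_nonneg
      (add_nonneg (mul_nonneg (by linarith) hly0) (mul_nonneg hx0.le hlog0))]
    have c1 : (y - x) * Real.log y ≤ 1 * (2 / ε * x ^ ε) := by gcongr; linarith
    have c2 : x * (Real.log y - Real.log x) ≤ 1 := by
      calc _ ≤ x * (1 / x) := by gcongr
        _ = 1 := by field_simp
    gcongr
    linarith
  have b2 : ‖(h (Real.log y / L) - h (Real.log x / L)) * x‖ ≤ C * (1 / L) ^ (1 - ε) * x ^ ε := by
    rw [norm_mul, Complex.norm_real, Real.norm_of_nonneg hx0.le]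
    have c1 : |Real.log y / L - Real.log x / L| ≤ (1 / L) * x⁻¹ := by
      rw [← sub_div, abs_of_nonneg (by positivity)]
      calc _ ≤ (1 / x) / L := by gcongr
        _ = _ := by ring
    have c2 : x⁻¹ ^ (1 - ε) * x = x ^ ε := by
      rw [Real.inv_rpow hx0.le, ← Real.rpow_neg hx0.le]
      nth_rewrite 2 [← Real.rpow_one x]
      rw [← Real.rpow_add hx0]; congr 1; ring
    calc _ ≤ (C * ((1 / L) * x⁻¹) ^ (1 - ε)) * x := by
          gcongr
          refine (hC _ _).trans ?_
          have : 0 ≤ 1 - ε := by linarith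
          gcongr
      _ = C * (1 / L) ^ (1 - ε) * (x⁻¹ ^ (1 - ε) * x) := by
          rw [Real.mul_rpow (by positivity) (by positivity)]; ring
      _ = _ := by rw [c2]
  have b3 : ‖h (Real.log y / L) * ((y - x : ℝ) : ℂ)‖ ≤ M * x ^ ε := by
    rw [norm_mul, Complex.norm_real, Real.norm_of_nonneg (by linarith)]
    have := hM (Real.log y / L)
    gcongr
    linarith
  refine (norm_add₃_le).trans ?_
  linarith

lemma Sx_growth {a : ℂ} {L : ℝ} {h : ℝ → ℂ} (hc : Continuous h) (hp : Function.Periodic h 1) {r : ℝ} (hr : 1 < r) :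
    ∃ C : ℝ, 0 ≤ C ∧ ∀ x : ℝ, 1 ≤ x → ‖Sx a L h x‖ ≤ C * x ^ r := by
  obtain ⟨M, hM0, hM⟩ := h_bounded hc hp
  have hr' : 0 < r - 1 := by linarith
  refine ⟨‖a‖ / (r - 1) + M, by positivity, fun x hx => ?_⟩
  have hx0 : 0 < x := by linarith
  have h1 : Real.log x ≤ x ^ (r - 1) / (r - 1) := Real.log_le_rpow_div hx0.le hr'
  have e : x * x ^ (r - 1) = x ^ r := by
    rw [Real.rpow_sub_one hx0.ne']; field_simp
  have e2 : x ≤ x ^ r := by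
    calc x = x ^ (1:ℝ) := (Real.rpow_one x).symm
      _ ≤ _ := Real.rpow_le_rpow_of_exponent_le hx hr.le
  unfold Sx
  refine (norm_add_le _ _).trans ?_
  rw [norm_mul, norm_mul, norm_mul, Complex.norm_real, Complex.norm_real, Real.norm_of_nonneg hx0.le,
    Real.norm_of_nonneg (Real.log_nonneg hx)]
  have := hM (Real.log x / L)
  calc _ ≤ ‖a‖ * x * (x ^ (r - 1) / (r - 1)) + M * x ^ r := by gcongr
    _ = ‖a‖ / (r - 1) * (x * x ^ (r - 1)) + M * x ^ r := by ring
    _ = _ := by rw [e]; ring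

/-- the remainder function -/
def Ex (a : ℂ) (L : ℝ) (h : ℝ → ℂ) (x : ℝ) : ℂ := Sx a L h ((⌊x⌋₊ + 1 : ℕ) : ℝ) - Sx a L h 1 - Sx a L h x

lemma Sx_measurable {a : ℂ} {L : ℝ} {h : ℝ → ℂ} (hc : Continuous h) : Measurable (Sx a L h) := by
  unfold Sx
  have := hc.measurable
  have := Real.measurable_log
  fun_prop

lemma Ex_measurable {a : ℂ} {L : ℝ} {h : ℝ → ℂ} (hc : Continuous h) : Measurable (Ex a L h) := by
  unfold Ex
  have h1 : Measurable (fun n : ℕ => Sx a L h ((n + 1 : ℕ) : ℝ)) := measurable_from_nat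
  exact ((h1.comp Nat.measurable_floor).sub measurable_const).sub (Sx_measurable hc)

lemma Ex_bound {a : ℂ} {L : ℝ} (hL : 0 < L) {h : ℝ → ℂ} (hc : Continuous h) (hp : Function.Periodic h 1)
    (hH : ∀ α : ℝ, 0 < α → α < 1 → ∃ C : ℝ, 0 ≤ C ∧ ∀ u v : ℝ, ‖h u - h v‖ ≤ C * |u - v| ^ α)
    {ε : ℝ} (h0 : 0 < ε) (h1 : ε < 1) : ∃ C : ℝ, ∀ x : ℝ, 1 < x → ‖Ex a L h x‖ ≤ C * x ^ ε := by
  obtain ⟨C, hC0, hC⟩ := Sx_diff (a := a) hL hc hp hH h0 h1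
  refine ⟨C + ‖Sx a L h 1‖, fun x hx => ?_⟩
  have hxe : 1 ≤ x ^ ε := Real.one_le_rpow hx.le h0.le
  have f1 := Nat.lt_floor_add_one x
  have f2 := Nat.floor_le (a := x) (by linarith)
  have := hC x ((⌊x⌋₊ + 1 : ℕ) : ℝ) hx.le (by push_cast; exact f1.le) (by push_cast; linarith)
  have e : Ex a L h x = (Sx a L h ((⌊x⌋₊ + 1 : ℕ) : ℝ) - Sx a L h x) - Sx a L h 1 := by unfold Ex; ring
  rw [e]
  refine (norm_sub_le _ _).trans ?_
  have n := norm_nonneg (Sx a L h 1)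
  nlinarith

end PartG

section PartH

open MeasureTheory in
lemma tMel_xlog {s : ℂ} (hs : 1 < s.re) :
    tMel (fun x => (x : ℂ) * Real.log x) s = 1 / (s - 1) ^ 2 := by
  have hs1 : 1 - s ≠ 0 := by
    intro h
    have := congrArg Complex.re h
    simp at this; linarith
  have hs2 : s - 1 ≠ 0 := fun h => hs1 (by linear_combination -h)
  set r := (1 + s.re) / 2 with hr
  have hr1 : 1 < r := by linarith
  have hr2 : r < s.re := by linarith
  have hm : Measurable (fun x : ℝ => (x : ℂ) * Real.log x) := by
    have := Real.measurable_log
    fun_prop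
  have hi := tMel_integrable hm (C := 1 / (r - 1)) (r := r) (s := s) (fun x hx => by
    have hx0 : 0 < x := by linarith
    have h1 : Real.log x ≤ x ^ (r - 1) / (r - 1) := Real.log_le_rpow_div hx0.le (by linarith)
    rw [norm_mul, Complex.norm_real, Complex.norm_real, Real.norm_of_nonneg hx0.le,
      Real.norm_of_nonneg (Real.log_nonneg hx.le)]
    calc _ ≤ x * (x ^ (r - 1) / (r - 1)) := by gcongr
      _ = _ := by rw [Real.rpow_sub_one hx0.ne']; field_simp) hr2
  have hd : ∀ x ∈ Set.Ici (1:ℝ), HasDerivAt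
      (fun x : ℝ => (Real.log x : ℂ) * (x : ℂ) ^ (1 - s) / (1 - s) - (x : ℂ) ^ (1 - s) / (1 - s) ^ 2)
      ((x : ℂ) * Real.log x * (x : ℂ) ^ (-(s + 1))) x := by
    intro x hx
    have hx0 : x ≠ 0 := by have : 1 ≤ x := hx; linarith
    have hxC : (x : ℂ) ≠ 0 := by exact_mod_cast hx0
    have h1 := (Real.hasDerivAt_log hx0).ofReal_comp
    have h2 := hasDerivAt_ofReal_cpow_const hx0 (r := 1 - s) hs1
    refine (((h1.mul h2).div_const (1 - s)).sub (h2.div_const ((1 - s)^2))).congr_deriv ?_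
    rw [show 1 - s - 1 = 1 - s + -1 by ring, show -(s + 1) = 1 - s + -1 + -1 by ring,
      Complex.cpow_add (1 - s + -1) (-1) hxC, Complex.cpow_add (1 - s) (-1) hxC, Complex.cpow_neg_one]
    push_cast
    field_simp
    ring
  have hnorm : ∀ᶠ x : ℝ in atTop, ‖(x : ℂ) ^ (1 - s)‖ = x ^ (1 - s.re) := by
    filter_upwards [eventually_gt_atTop 0] with x hx
    rw [Complex.norm_cpow_eq_rpow_re_of_pos hx]; simp
  have t1 : Tendsto (fun x : ℝ => (x : ℂ) ^ (1 - s)) atTop (𝓝 0) := by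
    rw [tendsto_zero_iff_norm_tendsto_zero]
    refine Tendsto.congr' (EventuallyEq.symm hnorm) ?_
    have := tendsto_rpow_neg_atTop (y := s.re - 1) (by linarith)
    simpa using this
  have t2 : Tendsto (fun x : ℝ => (Real.log x : ℂ) * (x : ℂ) ^ (1 - s)) atTop (𝓝 0) := by
    rw [tendsto_zero_iff_norm_tendsto_zero]
    have h3 := (isLittleO_log_rpow_atTop (r := s.re - 1) (by linarith)).tendsto_div_nhds_zero
    refine Tendsto.congr' ?_ (h3.norm.trans (by simp))
    filter_upwards [hnorm, eventually_gt_atTop 0] with x hx hx0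
    rw [norm_mul, hx, Complex.norm_real, norm_div, div_eq_mul_inv, Real.norm_of_nonneg (r := x ^ (s.re - 1)) (by positivity),
      ← Real.rpow_neg hx0.le]
    simp
  have t3 := (t2.div_const (1 - s)).sub (t1.div_const ((1 - s)^2))
  have := integral_Ioi_of_hasDerivAt_of_tendsto' hd hi t3
  unfold tMel
  rw [this]
  simp
  field_simp
  ring

/-- The truncated profile integrand. -/
def trunc (β : ℝ) (h : ℝ → ℂ) (x : ℝ) : ℂ :=
  (Set.Iic β).indicator (fun x : ℝ => h (Real.log x / Real.log β) * x) x

lemma trunc_measurable {β : ℝ} {h : ℝ → ℂ} (hc : Continuous h) : Measurable (trunc β h) := by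
  unfold trunc
  refine Measurable.indicator ?_ measurableSet_Iic
  have := hc.measurable
  have := Real.measurable_log
  fun_prop

lemma trunc_bound {β : ℝ} (hβ : 1 < β) {h : ℝ → ℂ} (hc : Continuous h) (hp : Function.Periodic h 1) :
    ∃ C : ℝ, ∀ x : ℝ, 1 < x → ‖trunc β h x‖ ≤ C * x ^ (0:ℝ) := by
  obtain ⟨M, hM0, hM⟩ := h_bounded hc hp
  refine ⟨M * β, fun x hx => ?_⟩
  rw [Real.rpow_zero, mul_one]
  unfold trunc
  by_cases hxb : x ≤ β
  · rw [Set.indicator_of_mem (Set.mem_Iic.2 hxb), norm_mul, Complex.norm_real, Real.norm_of_nonneg (by linarith)]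
    have := hM (Real.log x / Real.log β)
    gcongr
  · rw [Set.indicator_of_notMem (fun hh => hxb (Set.mem_Iic.1 hh)), norm_zero]; positivity

open MeasureTheory in
lemma tMel_trunc {β : ℝ} (hβ : 1 < β) {h : ℝ → ℂ} (s : ℂ) :
    tMel (trunc β h) s = ∫ x in (1:ℝ)..β, h (Real.log x / Real.log β) * (x : ℂ) ^ (-s) := by
  unfold tMel
  rw [intervalIntegral.integral_of_le hβ.le]
  have e : (fun x : ℝ => trunc β h x * (x : ℂ) ^ (-(s + 1))) =
    (Set.Iic β).indicator (fun x : ℝ => h (Real.log x / Real.log β) * x * (x : ℂ) ^ (-(s + 1))) := by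
    ext x
    unfold trunc
    by_cases hxb : x ≤ β
    · rw [Set.indicator_of_mem (Set.mem_Iic.2 hxb), Set.indicator_of_mem (Set.mem_Iic.2 hxb)]
    · rw [Set.indicator_of_notMem (fun hh => hxb (Set.mem_Iic.1 hh)), Set.indicator_of_notMem (fun hh => hxb (Set.mem_Iic.1 hh)), zero_mul]
  rw [e, setIntegral_indicator measurableSet_Iic, Set.Ioi_inter_Iic]
  refine setIntegral_congr_fun measurableSet_Ioc fun x hx => ?_
  have hxC : (x : ℂ) ≠ 0 := by exact_mod_cast (by linarith [hx.1] : x ≠ 0)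
  rw [neg_add, Complex.cpow_add _ _ hxC, Complex.cpow_neg_one]
  field_simp

open MeasureTheory in
lemma tMel_hx {β : ℝ} (hβ : 1 < β) {h : ℝ → ℂ} (hc : Continuous h) (hp : Function.Periodic h 1) {s : ℂ} (hs : 1 < s.re) :
    IntegrableOn (fun x : ℝ => (h (Real.log x / Real.log β) * x) * (x : ℂ) ^ (-(s + 1))) (Set.Ioi 1) ∧
    tMel (fun x => h (Real.log x / Real.log β) * x) s = tMel (trunc β h) s / (1 - (β : ℂ) ^ (1 - s)) := by
  obtain ⟨M, hM0, hM⟩ := h_bounded hc hp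
  have hb0 : 0 < β := by linarith
  have hbC : (β : ℂ) ≠ 0 := by exact_mod_cast hb0.ne'
  have hL : Real.log β ≠ 0 := (Real.log_pos hβ).ne'
  have hm : Measurable (fun x : ℝ => h (Real.log x / Real.log β) * (x : ℂ)) := by
    have := hc.measurable
    have := Real.measurable_log
    fun_prop
  have hi := tMel_integrable hm (C := M) (r := 1) (s := s) (fun x hx => by
    rw [norm_mul, Complex.norm_real, Real.norm_of_nonneg (by linarith), Real.rpow_one]
    have := hM (Real.log x / Real.log β)
    gcongr) hs
  refine ⟨hi, ?_⟩
  have hne : 1 - (β : ℂ) ^ (1 - s) ≠ 0 := by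
    intro h0
    have h1 : ‖(β : ℂ) ^ (1 - s)‖ = 1 := by
      rw [show (β : ℂ) ^ (1 - s) = 1 by linear_combination -h0]; simp
    rw [Complex.norm_cpow_eq_rpow_re_of_pos hb0] at h1
    have := Real.rpow_lt_one_of_one_lt_of_neg hβ (z := (1 - s).re) (by simp; linarith)
    linarith
  rw [eq_div_iff hne]
  have hsub := integral_comp_mul_left_Ioi' (fun x : ℝ => (h (Real.log x / Real.log β) * (x : ℂ)) * (x : ℂ) ^ (-(s + 1))) 1 hb0
  rw [mul_one] at hsub
  have e1 := intervalIntegral.integral_Ioi_sub_Ioi hi hβ.le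
  have e2 : ∫ x in (1:ℝ)..β, h (Real.log x / Real.log β) * (x : ℂ) * (x : ℂ) ^ (-(s + 1)) = tMel (trunc β h) s := by
    rw [tMel_trunc hβ]
    refine intervalIntegral.integral_congr fun x hx => ?_
    rw [Set.uIcc_of_le hβ.le] at hx
    have hxC : (x : ℂ) ≠ 0 := by exact_mod_cast (by linarith [hx.1] : x ≠ 0)
    simp only [neg_add]
    rw [Complex.cpow_add _ _ hxC, Complex.cpow_neg_one]
    field_simp
  rw [e2, ← hsub, Complex.real_smul] at e1
  have e3 : ∫ x in Set.Ioi (1:ℝ), h (Real.log (β * x) / Real.log β) * ((β * x : ℝ) : ℂ) * ((β * x : ℝ) : ℂ) ^ (-(s + 1))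
     = (β : ℂ) ^ (-s) * tMel (fun x => h (Real.log x / Real.log β) * x) s := by
    unfold tMel
    rw [← integral_const_mul]
    refine setIntegral_congr_fun measurableSet_Ioi fun x hx => ?_
    have hx0 : 0 < x := lt_trans one_pos hx
    simp only
    rw [Real.log_mul hb0.ne' hx0.ne', add_div, div_self hL, add_comm 1, hp, Complex.ofReal_mul,
      Complex.mul_cpow_ofReal_nonneg hb0.le hx0.le]
    have : (β : ℂ) ^ (-(s + 1)) = (β : ℂ) ^ (-s) * (β : ℂ)⁻¹ := by
      rw [neg_add, Complex.cpow_add _ _ hbC, Complex.cpow_neg_one]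
    rw [this]
    field_simp
  rw [e3] at e1
  have e4 : (β : ℂ) ^ (1 - s) = β * (β : ℂ) ^ (-s) := by
    rw [sub_eq_add_neg, Complex.cpow_add _ _ hbC, Complex.cpow_one]
  rw [e4, ← e1]
  unfold tMel
  ring

end PartH

lemma sum_tele (S : ℕ → ℂ) (n : ℕ) : ∑ k ∈ Finset.Icc 1 n, (S (k + 1) - S k) = S (n + 1) - S 1 := by
  induction n with
  | zero => simp
  | succ n ih => rw [Finset.sum_Icc_succ_top (by omega), ih]; ring

open MeasureTheory in
lemma dirichlet_eq {β : ℝ} (hβ : 1 < β) {a : ℂ} {h : ℝ → ℂ} (hc : Continuous h) (hp : Function.Periodic h 1)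
    (hH : ∀ α : ℝ, 0 < α → α < 1 → ∃ C : ℝ, 0 ≤ C ∧ ∀ u v : ℝ, ‖h u - h v‖ ≤ C * |u - v| ^ α)
    {s : ℂ} (hs : 1 < s.re) :
    s * (a / (s - 1) ^ 2 + tMel (trunc β h) s / (1 - (β : ℂ) ^ (1 - s)) + tMel (Ex a (Real.log β) h) s)
      = ∑' n : ℕ, (Sx a (Real.log β) h ((n + 1 + 1 : ℕ) : ℝ) - Sx a (Real.log β) h ((n + 1 : ℕ) : ℝ))
        * ((n + 1 : ℕ) : ℂ) ^ (-s) := by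
  have hL := Real.log_pos hβ
  set L := Real.log β with hLdef
  obtain ⟨ε, h0, h1, hε⟩ : ∃ ε : ℝ, 0 < ε ∧ ε < 1 ∧ 1 + ε < s.re := by
    refine ⟨min (s.re - 1) 1 / 2, ?_, ?_, ?_⟩
    · have : 0 < min (s.re - 1) 1 := lt_min (by linarith) one_pos
      linarith
    · have := min_le_right (s.re - 1) 1
      linarith
    · have := min_le_left (s.re - 1) 1
      linarith
  set f : ℕ → ℂ := fun n => Sx a L h ((n + 1 : ℕ) : ℝ) - Sx a L h (n : ℝ) with hf
  obtain ⟨C, hC0, hC⟩ := Sx_diff (a := a) hL hc hp hH h0 h1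
  obtain ⟨D, hD0, hD⟩ := Sx_growth (a := a) (L := L) hc hp (r := 1 + ε) (by linarith)
  have hsum : LSeriesSummable f s := by
    refine LSeriesSummable_of_le_const_mul_rpow hε ⟨C, fun n hn => ?_⟩
    have hn1 : (1:ℝ) ≤ n := by exact_mod_cast Nat.one_le_iff_ne_zero.2 hn
    rw [add_sub_cancel_left]
    exact hC n ((n + 1 : ℕ) : ℝ) hn1 (by push_cast; linarith) (by push_cast; linarith)
  have hpart : ∀ n, ∑ k ∈ Finset.Icc 1 n, f k = Sx a L h ((n + 1 : ℕ) : ℝ) - Sx a L h 1 := by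
    intro n
    have := sum_tele (fun n : ℕ => Sx a L h (n : ℝ)) n
    simp only [Nat.cast_one] at this
    exact this
  have hO : (fun n => ∑ k ∈ Finset.Icc 1 n, f k) =O[atTop] fun n => (n : ℝ) ^ (1 + ε) := by
    refine Asymptotics.IsBigO.of_bound (D * 2 ^ (1 + ε) + ‖Sx a L h 1‖) ?_
    filter_upwards [eventually_ge_atTop 1] with n hn
    have hn1 : (1:ℝ) ≤ n := by exact_mod_cast hn
    have hnr : 1 ≤ (n:ℝ) ^ (1 + ε) := Real.one_le_rpow hn1 (by linarith)
    rw [hpart, Real.norm_of_nonneg (by positivity)]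
    refine (norm_sub_le _ _).trans ?_
    have b1 : ‖Sx a L h ((n + 1 : ℕ) : ℝ)‖ ≤ D * 2 ^ (1 + ε) * (n:ℝ) ^ (1 + ε) := by
      refine (hD _ (by push_cast; linarith)).trans ?_
      rw [mul_assoc, ← Real.mul_rpow (by norm_num) (by linarith)]
      have : 0 ≤ 1 + ε := by linarith
      gcongr
      push_cast; linarith
    have n0 := norm_nonneg (Sx a L h 1)
    nlinarith
  have hLS := LSeries_eq_mul_integral f (r := 1 + ε) (by linarith) hε hsum hO
  have hts : LSeries f s = ∑' n : ℕ, (Sx a L h ((n + 1 + 1 : ℕ) : ℝ) - Sx a L h ((n + 1 : ℕ) : ℝ))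
        * ((n + 1 : ℕ) : ℂ) ^ (-s) := by
    unfold LSeries
    rw [Summable.tsum_eq_zero_add hsum, LSeries.term_zero, zero_add]
    congr 1; ext n
    rw [LSeries.term_of_ne_zero (Nat.succ_ne_zero n), Complex.cpow_neg, div_eq_mul_inv]
  rw [← hts, hLS]
  congr 1
  simp_rw [hpart]
  obtain ⟨i1, e1⟩ := tMel_hx hβ hc hp hs
  obtain ⟨C2, hC2⟩ := Ex_bound (a := a) hL hc hp hH h0 h1
  have i2 := tMel_integrable (Ex_measurable hc) hC2 (s := s) (by linarith)
  obtain ⟨D', hD0', hD'⟩ := Sx_growth (a := a) (L := L) (h := fun _ => 0) continuous_const (fun _ => rfl) (r := 1 + ε) (by linarith)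
  have i3 := tMel_integrable (Sx_measurable (a := a) (L := L) (h := fun _ => 0) continuous_const) (fun x hx => hD' x hx.le) hε
  have e3 : tMel (Sx a L (fun _ => 0)) s = a / (s - 1) ^ 2 := by
    rw [div_eq_mul_one_div, ← tMel_xlog hs]
    unfold tMel
    rw [← integral_const_mul]
    congr 1; ext x
    unfold Sx; ring
  rw [← e3, ← e1]
  unfold tMel
  have i4 : IntegrableOn (fun x : ℝ => Sx a L (fun _ => 0) x * (x : ℂ) ^ (-(s + 1))
      + h (Real.log x / Real.log β) * x * (x : ℂ) ^ (-(s + 1))) (Set.Ioi 1) := i3.add i1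
  rw [← integral_add i3 i1, ← integral_add i4 i2]
  congr 1; ext x
  unfold Ex
  have : Sx a L h x = Sx a L (fun _ => 0) x + h (Real.log x / Real.log β) * x := by
    unfold Sx; ring
  rw [this]
  ring

lemma den_hasDeriv {β : ℝ} (hβ : 1 < β) (k : ℤ) :
    HasDerivAt (fun s : ℂ => 1 - (β : ℂ) ^ (1 - s)) (Real.log β : ℂ) (1 + wk β k) := by
  have hbC : (β : ℂ) ≠ 0 := by exact_mod_cast (by linarith : β ≠ 0)
  have h1 : HasDerivAt (fun s : ℂ => 1 - s) (-1) (1 + wk β k) := by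
    simpa using (hasDerivAt_id (1 + wk β k)).const_sub 1
  have h2 := (h1.const_cpow (c := (β : ℂ)) (Or.inl hbC)).const_sub 1
  refine h2.congr_deriv ?_
  rw [show 1 - (1 + wk β k) = -wk β k by ring, Complex.cpow_neg, cpow_wk hβ, Complex.ofReal_log (by linarith)]
  simp

lemma den_zero {β : ℝ} (hβ : 1 < β) (k : ℤ) : 1 - (β : ℂ) ^ (1 - (1 + wk β k)) = 0 := by
  rw [show 1 - (1 + wk β k) = -wk β k by ring, Complex.cpow_neg, cpow_wk hβ]
  simp

lemma den_limit {β : ℝ} (hβ : 1 < β) (k : ℤ) :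
    Tendsto (fun s : ℂ => (s - (1 + wk β k)) / (1 - (β : ℂ) ^ (1 - s))) (𝓝[≠] (1 + wk β k))
      (𝓝 (1 / (Real.log β : ℂ))) := by
  have hL : (Real.log β : ℂ) ≠ 0 := by exact_mod_cast (Real.log_pos hβ).ne'
  have h := (hasDerivAt_iff_tendsto_slope.1 (den_hasDeriv hβ k)).inv₀ hL
  rw [one_div]
  refine h.congr fun s => ?_
  rw [slope_def_field, den_zero hβ, sub_zero, inv_div]

lemma den_ne {β : ℝ} (hβ : 1 < β) {s : ℂ} (hs : ∀ k : ℤ, s ≠ 1 + wk β k) : 1 - (β : ℂ) ^ (1 - s) ≠ 0 := by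
  intro h0
  have hbC : (β : ℂ) ≠ 0 := by exact_mod_cast (by linarith : β ≠ 0)
  have hL : (Real.log β : ℂ) ≠ 0 := by exact_mod_cast (Real.log_pos hβ).ne'
  have h1 : (β : ℂ) ^ (1 - s) = 1 := by linear_combination -h0
  rw [Complex.cpow_def_of_ne_zero hbC, ← Complex.ofReal_log (by linarith), Complex.exp_eq_one_iff] at h1
  obtain ⟨n, hn⟩ := h1
  apply hs (-n)
  unfold wk
  push_cast
  field_simp
  linear_combination -hn

theorem Fbeta_meromorphic_continuation (β : ℝ) (hβ : 1 < β) :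
    ∃ F : ℂ → ℂ,
      -- (i) analytic on Re(s) > 0 away from the points 1 + 2πik/log β
      (∀ s : ℂ, 0 < s.re →
        (∀ k : ℤ, s ≠ 1 + 2 * Real.pi * Complex.I * k / Real.log β) →
        DifferentiableAt ℂ F s) ∧
      -- (ii) agrees with the Dirichlet series for Re(s) > 1
      (∀ s : ℂ, 1 < s.re →
        F s = ∑' n : ℕ, digitSumInterp β (n + 1) * ((n + 1 : ℕ) : ℂ) ^ (-s)) ∧
      -- (iii) double pole at s = 1 with the stated Laurent expansion
      (Filter.Tendsto (fun s : ℂ => (s - 1) ^ 2 * F s) (𝓝[≠] (1 : ℂ))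
        (𝓝 (((β : ℂ) - 1) / (2 * Real.log β))) ∧
       Filter.Tendsto
        (fun s : ℂ => ((s - 1) ^ 2 * F s - ((β : ℂ) - 1) / (2 * Real.log β)) / (s - 1))
        (𝓝[≠] (1 : ℂ))
        (𝓝 ((((β : ℂ) - 1) / (2 * Real.log β)) * Real.log (2 * Real.pi)
            - ((β : ℂ) + 1) / 4))) ∧
      -- (iv) simple poles at s = 1 + 2πik/log β, k ≠ 0
      (∀ k : ℤ, k ≠ 0 →
        Filter.Tendsto
          (fun s : ℂ => (s - (1 + 2 * Real.pi * Complex.I * k / Real.log β)) * F s)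
          (𝓝[≠] (1 + 2 * Real.pi * Complex.I * k / Real.log β))
          (𝓝 ((1 + 2 * Real.pi * Complex.I * k / Real.log β) * delangeCoeff β k))) := by
  obtain ⟨hc, hp, hcoef, hH⟩ := delangeH_props hβ
  have hL := Real.log_pos hβ
  have hbC : (β : ℂ) ≠ 0 := by exact_mod_cast (by linarith : β ≠ 0)
  set h := delangeH β with hh
  set a : ℂ := ((β : ℂ) - 1) / (2 * Real.log β) with ha
  set J := tMel (trunc β h) with hJ
  set R := tMel (Ex a (Real.log β) h) with hR
  have hJd : ∀ s : ℂ, 0 < s.re → DifferentiableAt ℂ J s := by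
    intro s hs
    obtain ⟨C, hC⟩ := trunc_bound hβ hc hp
    exact tMel_differentiableAt (trunc_measurable hc) hC hs
  have hRd : ∀ s : ℂ, 0 < s.re → DifferentiableAt ℂ R s := by
    intro s hs
    obtain ⟨ε, h0, h1, hε⟩ : ∃ ε : ℝ, 0 < ε ∧ ε < 1 ∧ ε < s.re := by
      refine ⟨min s.re 1 / 2, ?_, ?_, ?_⟩
      · have : 0 < min s.re 1 := lt_min hs one_pos
        linarith
      · have := min_le_right s.re 1
        linarith
      · have := min_le_left s.re 1
        linarith
    obtain ⟨C, hC⟩ := Ex_bound (a := a) hL hc hp hH h0 h1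
    exact tMel_differentiableAt (Ex_measurable hc) hC hε
  have hre : ∀ k : ℤ, (0:ℝ) < (1 + wk β k).re := by
    intro k; rw [Complex.add_re, wk_re]; norm_num
  have hQ : ∀ k : ℤ, Tendsto (fun s : ℂ => (s - (1 + wk β k)) * (J s / (1 - (β : ℂ) ^ (1 - s)) + R s))
      (𝓝[≠] (1 + wk β k)) (𝓝 (delangeCoeff β k)) := by
    intro k
    have t1 := ((hJd _ (hre k)).continuousAt.tendsto.mono_left (nhdsWithin_le_nhds (s := {1 + wk β k}ᶜ)))
    have t2 := ((hRd _ (hre k)).continuousAt.tendsto.mono_left (nhdsWithin_le_nhds (s := {1 + wk β k}ᶜ)))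
    have t3 : Tendsto (fun s : ℂ => s - (1 + wk β k)) (𝓝[≠] (1 + wk β k)) (𝓝 0) := by
      have : ContinuousAt (fun s : ℂ => s - (1 + wk β k)) (1 + wk β k) := by fun_prop
      simpa using this.tendsto.mono_left nhdsWithin_le_nhds
    have t4 := ((den_limit hβ k).mul t1).add (t3.mul t2)
    have e : 1 / (Real.log β : ℂ) * J (1 + wk β k) + 0 * R (1 + wk β k) = delangeCoeff β k := by
      rw [← hcoef k, hJ, tMel_trunc hβ]; ring
    rw [e] at t4
    refine t4.congr fun s => ?_
    ring
  have hw0 : wk β 0 = 0 := by simp [wk]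
  have hQ0 := hQ 0
  rw [hw0, add_zero] at hQ0
  refine ⟨fun s => s * (a / (s - 1) ^ 2 + J s / (1 - (β : ℂ) ^ (1 - s)) + R s), ?_, ?_, ⟨?_, ?_⟩, ?_⟩
  · intro s hs hk
    have hk' : ∀ k : ℤ, s ≠ 1 + wk β k := hk
    have hs1 : s - 1 ≠ 0 := by
      have := hk' 0
      rw [hw0, add_zero] at this
      exact sub_ne_zero.2 this
    have d1 := hJd s hs
    have d2 := hRd s hs
    have d3 : DifferentiableAt ℂ (fun s : ℂ => 1 - (β : ℂ) ^ (1 - s)) s := by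
      refine DifferentiableAt.const_sub ?_ 1
      exact DifferentiableAt.const_cpow (by fun_prop) (Or.inl hbC)
    have d4 : DifferentiableAt ℂ (fun s : ℂ => a / (s - 1) ^ 2) s :=
      DifferentiableAt.div (by fun_prop) (by fun_prop) (pow_ne_zero 2 hs1)
    exact differentiableAt_id.mul ((d4.add (d1.div d3 (den_ne hβ hk'))).add d2)
  · intro s hs
    simp only [hJ, hR]
    rw [dirichlet_eq hβ hc hp hH hs]
    refine tsum_congr fun n => ?_
    unfold digitSumInterp cumDigitSumInterp Sx
    simp only [Complex.ofReal_natCast, ← hh, ← ha]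
  · have t5 : Tendsto (fun s : ℂ => s) (𝓝[≠] (1:ℂ)) (𝓝 1) := nhdsWithin_le_nhds
    have t6 := t5.mul (tendsto_const_nhds (x := a) |>.add ((t5.sub_const 1).mul hQ0))
    have e : 1 * (a + (1 - 1) * delangeCoeff β 0) = a := by ring
    rw [e] at t6
    refine t6.congr' ?_
    filter_upwards [self_mem_nhdsWithin] with s hs
    have hs1 : s - 1 ≠ 0 := sub_ne_zero.2 hs
    generalize J s / (1 - (β : ℂ) ^ (1 - s)) = X
    field_simp
    ring
  · have t5 : Tendsto (fun s : ℂ => s) (𝓝[≠] (1:ℂ)) (𝓝 1) := nhdsWithin_le_nhds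
    have t6 := (tendsto_const_nhds (x := a)).add (t5.mul hQ0)
    have e : a + 1 * delangeCoeff β 0 = a * Real.log (2 * Real.pi) - ((β : ℂ) + 1) / 4 := by
      unfold delangeCoeff
      rw [if_pos rfl, ← ha]; ring
    rw [e] at t6
    refine t6.congr' ?_
    filter_upwards [self_mem_nhdsWithin] with s hs
    have hs1 : s - 1 ≠ 0 := sub_ne_zero.2 hs
    generalize J s / (1 - (β : ℂ) ^ (1 - s)) = X
    field_simp
    ring
  · intro k hk
    change Tendsto (fun s : ℂ => (s - (1 + wk β k)) * _) (𝓝[≠] (1 + wk β k)) (𝓝 ((1 + wk β k) * delangeCoeff β k))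
    have t5 : Tendsto (fun s : ℂ => s) (𝓝[≠] (1 + wk β k)) (𝓝 (1 + wk β k)) := nhdsWithin_le_nhds
    have hne : (1 + wk β k - 1) ^ 2 ≠ 0 := by
      rw [add_sub_cancel_left]; exact pow_ne_zero 2 (wk_ne hβ hk)
    have t7 : Tendsto (fun s : ℂ => (s - (1 + wk β k)) * (a / (s - 1) ^ 2)) (𝓝[≠] (1 + wk β k)) (𝓝 0) := by
      have := (t5.sub_const (1 + wk β k)).mul ((tendsto_const_nhds (x := a)).div ((t5.sub_const 1).pow 2) hne)
      rw [sub_self, zero_mul] at this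
      exact this
    have t6 := t5.mul (t7.add (hQ k))
    rw [zero_add] at t6
    refine t6.congr fun s => ?_
    ring
end
end

section
/- For every complex number x with 0 < |x| < 2π, the series ∑_{k=2}^∞ (B_k/(k·(k-2)!)) x^k converges absolutely and x² e^x / (e^x - 1)² = 1 - ∑_{k=2}^∞ (B_k/(k·(k-2)!)) x^k. -/
noncomputable section

lemma aux_bound (n : ℕ) (hn : 2 ≤ n) :
    ‖((bernoulli n : ℂ) / (Nat.factorial n : ℂ))‖ * (2 * Real.pi) ^ n ≤ 4 := by
  rcases Nat.even_or_odd n with h | h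
  · obtain ⟨m, rfl⟩ := h.exists_two_nsmul
    rw [smul_eq_mul] at *
    have hm : m ≠ 0 := by omega
    have h1 := hasSum_zeta_nat hm
    have h2 := hasSum_zeta_two
    have h0 := h1.nonneg (fun i => by positivity)
    have h3 : _ ≤ Real.pi ^ 2 / 6 := hasSum_le (fun i => by
      rcases Nat.eq_zero_or_pos i with hi | hi
      · subst hi; simp [hm]
      · have : (1:ℝ) ≤ i := by exact_mod_cast hi
        exact one_div_le_one_div_of_le (by positivity)
          (pow_le_pow_right₀ this (by omega))) h1 h2
    have h4 : Real.pi ^ 2 / 6 ≤ 2 := by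
      nlinarith [Real.pi_lt_d2, Real.pi_pos]
    have h5 : ‖((bernoulli (2 * m) : ℂ) / (Nat.factorial (2 * m) : ℂ))‖
        = |(bernoulli (2 * m) : ℝ)| / (Nat.factorial (2 * m) : ℝ) := by
      rw [norm_div, Complex.norm_natCast]
      congr 1
      rw [← Complex.ofReal_ratCast, Complex.norm_real, Real.norm_eq_abs]
    rw [h5]
    have h6 := abs_of_nonneg h0
    rw [abs_div, abs_mul, abs_mul, abs_mul, abs_pow, abs_neg, abs_one, one_pow, one_mul,
      Nat.abs_cast, abs_of_nonneg (by positivity : (0:ℝ) ≤ 2 ^ (2 * m - 1)),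
      abs_of_nonneg (by positivity : (0:ℝ) ≤ Real.pi ^ (2 * m))] at h6
    have h7 : (2:ℝ) ^ (2 * m) = 2 * 2 ^ (2 * m - 1) := by
      rw [← pow_succ']; congr 1; omega
    rw [mul_pow, h7]
    calc _ = 2 * (2 ^ (2 * m - 1) * Real.pi ^ (2 * m) * |(bernoulli (2 * m) : ℝ)|
            / (Nat.factorial (2 * m) : ℝ)) := by ring
      _ ≤ 4 := by rw [h6]; linarith
  · rw [bernoulli_eq_zero_of_odd h (by omega)]; simp

lemma aux_mul (p q : PowerSeries ℂ) (x : ℂ)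
    (hp : Summable fun n => ‖p.coeff n * x ^ n‖) (hq : Summable fun n => ‖q.coeff n * x ^ n‖) :
    (Summable fun n => ‖(p * q).coeff n * x ^ n‖) ∧
    ∑' n, (p * q).coeff n * x ^ n =
      (∑' n, p.coeff n * x ^ n) * ∑' n, q.coeff n * x ^ n := by
  have key : ∀ n, (p * q).coeff n * x ^ n =
      ∑ kl ∈ Finset.HasAntidiagonal.antidiagonal n, (p.coeff kl.1 * x ^ kl.1) * (q.coeff kl.2 * x ^ kl.2) := by
    intro n
    rw [PowerSeries.coeff_mul, Finset.sum_mul]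
    refine Finset.sum_congr rfl fun kl h => ?_
    rw [← Finset.HasAntidiagonal.mem_antidiagonal.1 h, pow_add]; ring
  simp only [key]
  generalize hf : (fun n => p.coeff n * x ^ n) = f
  generalize hg : (fun n => q.coeff n * x ^ n) = g
  have hf' : ∀ n, p.coeff n * x ^ n = f n := fun n => congrFun hf n
  have hg' : ∀ n, q.coeff n * x ^ n = g n := fun n => congrFun hg n
  simp only [hf', hg'] at hp hq ⊢
  exact ⟨summable_norm_sum_mul_antidiagonal_of_summable_norm hp hq,
    (tsum_mul_tsum_eq_tsum_sum_antidiagonal_of_summable_norm hp hq).symm⟩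

lemma aux_exp (x : ℂ) : (Summable fun n => ‖(PowerSeries.exp ℂ).coeff n * x ^ n‖) ∧
    HasSum (fun n => (PowerSeries.exp ℂ).coeff n * x ^ n) (Complex.exp x) := by
  have key : ∀ n, (PowerSeries.exp ℂ).coeff n * x ^ n = x ^ n / (n.factorial : ℂ) := by
    intro n
    rw [PowerSeries.coeff_exp]; simp; ring
  simp only [key]
  refine ⟨NormedSpace.norm_expSeries_div_summable x, ?_⟩
  rw [Complex.exp_eq_exp_ℂ]
  exact NormedSpace.expSeries_div_hasSum_exp x

lemma aux_X (m : ℕ) (x : ℂ) :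
    (Summable fun n => ‖((PowerSeries.X ^ m : PowerSeries ℂ)).coeff n * x ^ n‖) ∧
    HasSum (fun n => ((PowerSeries.X ^ m : PowerSeries ℂ)).coeff n * x ^ n) (x ^ m) := by
  have h0 : ∀ n, n ≠ m → ((PowerSeries.X ^ m : PowerSeries ℂ)).coeff n * x ^ n = 0 := by
    intro n hn
    rw [PowerSeries.coeff_X_pow, if_neg hn, zero_mul]
  constructor
  · refine summable_of_ne_finset_zero (s := {m}) fun n hn => ?_
    rw [h0 n (by simpa using hn), norm_zero]
  · have := hasSum_single (f := fun n => ((PowerSeries.X ^ m : PowerSeries ℂ)).coeff n * x ^ n)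
      m h0
    simpa [PowerSeries.coeff_X_pow] using this

lemma aux_formal : (bernoulliPowerSeries ℂ - PowerSeries.X *
      PowerSeries.derivative ℂ (bernoulliPowerSeries ℂ)) *
      ((PowerSeries.exp ℂ - 1) * (PowerSeries.exp ℂ - 1)) =
    PowerSeries.X ^ 2 * PowerSeries.exp ℂ := by
  have h := bernoulliPowerSeries_mul_exp_sub_one ℂ
  have h2 := congrArg (PowerSeries.derivative ℂ) h
  rw [Derivation.leibniz, map_sub, PowerSeries.derivative_X, PowerSeries.derivative_exp] at h2
  simp only [smul_eq_mul, Derivation.map_one_eq_zero, sub_zero] at h2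
  linear_combination (PowerSeries.exp ℂ - 1 + PowerSeries.X * PowerSeries.exp ℂ) * h
    - PowerSeries.X * (PowerSeries.exp ℂ - 1) * h2

theorem bernoulli_series_identity (x : ℂ) (hx0 : 0 < ‖x‖) (hx : ‖x‖ < 2 * Real.pi) :
    Summable (fun k : ℕ =>
      ‖((bernoulli (k + 2) : ℂ) / (((k : ℂ) + 2) * (Nat.factorial k : ℂ))) * x ^ (k + 2)‖) ∧
    x ^ 2 * Complex.exp x / (Complex.exp x - 1) ^ 2 =
      1 - ∑' k : ℕ,
        ((bernoulli (k + 2) : ℂ) / (((k : ℂ) + 2) * (Nat.factorial k : ℂ))) * x ^ (k + 2) := by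
  set G : PowerSeries ℂ := bernoulliPowerSeries ℂ - PowerSeries.X *
      PowerSeries.derivative ℂ (bernoulliPowerSeries ℂ) with hG
  have hc : ∀ k, ((bernoulli (k + 2) : ℂ) / (((k : ℂ) + 2) * (Nat.factorial k : ℂ)))
      = (k + 1) * ((bernoulli (k + 2) : ℂ) / (Nat.factorial (k + 2) : ℂ)) := by
    intro k
    have h1 : ((k : ℂ) + 1) ≠ 0 := by exact_mod_cast Nat.succ_ne_zero k
    have h2 : ((k : ℂ) + 2) ≠ 0 := by exact_mod_cast Nat.succ_ne_zero (k + 1)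
    have h3 : (k.factorial : ℂ) ≠ 0 := by exact_mod_cast k.factorial_ne_zero
    rw [Nat.factorial_succ, Nat.factorial_succ]
    push_cast
    rw [show (k : ℂ) + 1 + 1 = k + 2 by ring]
    field_simp
  have hB : ∀ n, (bernoulliPowerSeries ℂ).coeff n = (bernoulli n : ℂ) / (n.factorial : ℂ) := by
    intro n
    simp [bernoulliPowerSeries]
  have hG0 : G.coeff 0 = 1 := by
    simp [hG, bernoulliPowerSeries]
  have hGs : ∀ n, G.coeff (n + 1) = - (n * ((bernoulli (n + 1) : ℂ) / ((n + 1).factorial : ℂ))) := by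
    intro n
    rw [hG, map_sub, PowerSeries.coeff_succ_X_mul, PowerSeries.coeff_derivative, hB]
    ring
  have hG1 : G.coeff 1 = 0 := by simpa using hGs 0
  have hG2 : ∀ k, G.coeff (k + 2) =
      -((bernoulli (k + 2) : ℂ) / (((k : ℂ) + 2) * (Nat.factorial k : ℂ))) := by
    intro k
    rw [hGs (k + 1), hc]; push_cast; ring
  have hpi : 0 < 2 * Real.pi := by positivity
  have hsum : Summable (fun k : ℕ =>
      ‖((bernoulli (k + 2) : ℂ) / (((k : ℂ) + 2) * (Nat.factorial k : ℂ))) * x ^ (k + 2)‖) := by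
    set r := ‖x‖ / (2 * Real.pi) with hr
    have hr0 : 0 ≤ r := by positivity
    have hr1 : r < 1 := (div_lt_one hpi).2 hx
    have hs0 : Summable (fun k : ℕ => (k : ℝ) ^ 1 * r ^ k) :=
      summable_pow_mul_geometric_of_norm_lt_one 1 (by rwa [Real.norm_of_nonneg hr0])
    have hs1 : Summable (fun k : ℕ => ((k + 2 : ℕ) : ℝ) ^ 1 * r ^ (k + 2)) :=
      (summable_nat_add_iff (f := fun k : ℕ => (k : ℝ) ^ 1 * r ^ k) 2).2 hs0
    have hs : Summable (fun k : ℕ => 4 * (((k + 2 : ℕ) : ℝ) ^ 1 * r ^ (k + 2))) :=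
      hs1.mul_left 4
    refine Summable.of_nonneg_of_le (fun _ => norm_nonneg _) (fun k => ?_) hs
    have hb := aux_bound (k + 2) (by omega)
    have hxr : ‖x‖ = 2 * Real.pi * r := by rw [hr]; field_simp
    rw [hc, norm_mul, norm_mul, norm_pow, hxr, mul_pow]
    have hk : ‖(k : ℂ) + 1‖ ≤ ((k + 2 : ℕ) : ℝ) := by
      have : ‖(k : ℂ) + 1‖ = k + 1 := by
        exact_mod_cast Complex.norm_natCast (k + 1)
      rw [this]; push_cast; linarith
    calc _ = ‖(k : ℂ) + 1‖ * (‖((bernoulli (k + 2) : ℂ) / (Nat.factorial (k + 2) : ℂ))‖ *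
            (2 * Real.pi) ^ (k + 2)) * r ^ (k + 2) := by ring
      _ ≤ ((k + 2 : ℕ) : ℝ) * 4 * r ^ (k + 2) := by gcongr
      _ = _ := by ring
  refine ⟨hsum, ?_⟩
  have hGsum : Summable fun n => ‖G.coeff n * x ^ n‖ := by
    rw [← summable_nat_add_iff 2]
    refine hsum.congr fun k => ?_
    rw [hG2, neg_mul, norm_neg]
  have hGt : ∑' n, G.coeff n * x ^ n = 1 - ∑' k : ℕ,
        ((bernoulli (k + 2) : ℂ) / (((k : ℂ) + 2) * (Nat.factorial k : ℂ))) * x ^ (k + 2) := by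
    rw [← hGsum.of_norm.sum_add_tsum_nat_add 2]
    simp only [hG2, neg_mul, tsum_neg]
    simp only [Finset.sum_range_succ, Finset.sum_range_zero, hG0, hG1]
    ring
  obtain ⟨he1, he2⟩ := aux_exp x
  obtain ⟨ho1, ho2⟩ := aux_X 0 x
  rw [pow_zero] at ho1 ho2
  have hE2 : HasSum (fun n => (PowerSeries.exp ℂ - 1).coeff n * x ^ n) (Complex.exp x - 1) := by
    simpa only [map_sub, sub_mul, pow_zero] using he2.sub ho2
  have hE1 : Summable fun n => ‖(PowerSeries.exp ℂ - 1).coeff n * x ^ n‖ := hE2.summable.norm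
  obtain ⟨hX1, hX2⟩ := aux_X 2 x
  obtain ⟨hEE1, hEE2⟩ := aux_mul _ _ x hE1 hE1
  have hL := (aux_mul _ _ x hGsum hEE1).2
  have hR := (aux_mul _ _ x hX1 he1).2
  rw [aux_formal, hR, hEE2, hE2.tsum_eq, hX2.tsum_eq, he2.tsum_eq, hGt] at hL
  have hne : Complex.exp x - 1 ≠ 0 := by
    intro h
    obtain ⟨n, hn⟩ := Complex.exp_eq_one_iff.1 (sub_eq_zero.1 h)
    have hn' : ‖x‖ = |(n : ℝ)| * (2 * Real.pi) := by
      rw [hn]; simp [abs_of_pos Real.pi_pos]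
    rcases eq_or_ne n 0 with h0 | h0
    · simp [h0] at hn'; simp [hn'] at hx0
    · have : (1 : ℝ) ≤ |(n : ℝ)| := by exact_mod_cast Int.one_le_abs h0
      nlinarith
  rw [div_eq_iff (pow_ne_zero 2 hne), hL]
  ring
end
end
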